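/- arXiv:2510.01811 — 6 statements merged into one kernel-verified Lean document; each statement's English description precedes it below -/
import Mathlib

section
/- Let K be a field, let m ≥ 1, and for 1 ≤ j ≤ m let S_j ⊆ K be a finite set with |S_j| = s_j. Fix a monomial order on K[X_1,…,X_m] and let f ∈ K[X_1,…,X_m] be a nonzero polynomial whose leading monomial is X_1^{i_1}⋯X_m^{i_m} with i_j < s_j for every j. Then the number of points of S_1 × ⋯ × S_m at which f vanishes is at most s_1⋯s_m − (s_1 − i_1)⋯(s_m − i_m). -/
open scoped MonomialOrder Classical

/-!
Let `D` be the set of grid points where `f` does not vanish. If `g` is a nonzero polynomial all of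
whose exponents `e` satisfy `e j < s j - i j`, then `f * g` has leading exponent below `s`. By a
version of the combinatorial Nullstellensatz for an arbitrary monomial order, `f * g` does not
vanish on the whole grid, so `g` does not vanish on all of `D`. Hence evaluation on `D` is injective
on the span of these `∏ j, (s j - i j)` monomials, and so `D` has at least that many points.
-/

section Footprint

open MvPolynomial
open scoped Finset

variable {σ R : Type*}

theorem degree_eq_of_mem_support_of_forall_le [CommSemiring R] {mo : MonomialOrder σ}
    {f : MvPolynomial σ R} {i : σ →₀ ℕ} (hmem : i ∈ f.support)
    (hmax : ∀ u ∈ f.support, u ≼[mo] i) : mo.degree f = i :=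
  mo.toSyn.injective (le_antisymm (mo.degree_le_iff.2 hmax) (mo.le_degree hmem))

theorem exists_degree_le_degree_of_eq_linearCombination [CommSemiring R] [NoZeroDivisors R]
    {ι : Type*} {mo : MonomialOrder σ} {b : ι → MvPolynomial σ R} {h : ι →₀ MvPolynomial σ R}
    {F : MvPolynomial σ R} (hF : F ≠ 0) (hFh : F = Finsupp.linearCombination _ b h)
    (hdeg : ∀ j, mo.degree (b j * h j) ≼[mo] mo.degree F) :
    ∃ j, mo.degree (b j) ≤ mo.degree F := by
  have hsum : ∑ j ∈ h.support, coeff (mo.degree F) (b j * h j) ≠ 0 := by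
    have hcoeff : coeff (mo.degree F) F ≠ 0 := mo.coeff_degree_ne_zero_iff.2 hF
    nth_rewrite 2 [hFh] at hcoeff
    simpa only [Finsupp.linearCombination_apply, Finsupp.sum, coeff_sum, smul_eq_mul,
      mul_comm] using hcoeff
  obtain ⟨j, -, hj⟩ := Finset.exists_ne_zero_of_sum_ne_zero hsum
  have hne : b j * h j ≠ 0 := fun hzero ↦ hj (by rw [hzero, coeff_zero])
  have hdegree : mo.degree (b j * h j) = mo.degree F :=
    mo.toSyn.injective (le_antisymm (hdeg j) (mo.le_degree (mem_support_iff.2 hj)))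
  exact ⟨j, by rw [← hdegree, mo.degree_mul' hne]; exact le_self_add⟩

section CoordVanishingPoly

variable [CommRing R]

/-- The polynomial in the single variable `X j` that vanishes at the points whose `j`-th coordinate
lies in `S`. For `j` ranging over all coordinates these polynomials generate the vanishing ideal
of a grid. -/
noncomputable def coordVanishingPoly (S : Finset R) (j : σ) : MvPolynomial σ R :=
  ∏ r ∈ S, (X j - C r)

theorem monic_coordVanishingPoly (mo : MonomialOrder σ) (S : Finset R) (j : σ) :
    mo.Monic (coordVanishingPoly S j) :=
  MonomialOrder.Monic.prod fun r _ ↦ mo.monic_X_sub_C j r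

theorem degree_coordVanishingPoly [Nontrivial R] (mo : MonomialOrder σ) (S : Finset R) (j : σ) :
    mo.degree (coordVanishingPoly S j) = Finsupp.single j #S := by
  rw [coordVanishingPoly, mo.degree_prod_of_regular fun r _ ↦ by
    rw [mo.monic_X_sub_C j r]; exact isRegular_one]
  simp [mo.degree_X_sub_C]

theorem eval_coordVanishingPoly_eq_zero {S : Finset R} {j : σ} {x : σ → R} (hx : x j ∈ S) :
    eval x (coordVanishingPoly S j) = 0 := by
  rw [coordVanishingPoly, map_prod]
  exact Finset.prod_eq_zero hx (by simp)

end CoordVanishingPoly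

section Nullstellensatz

variable [CommRing R] [IsDomain R] [Finite σ]

theorem exists_eq_linearCombination_coordVanishingPoly (mo : MonomialOrder σ) (S : σ → Finset R)
    (F : MvPolynomial σ R) (hF : ∀ x : σ → R, (∀ j, x j ∈ S j) → eval x F = 0) :
    ∃ h : σ →₀ MvPolynomial σ R,
      F = Finsupp.linearCombination _ (fun j ↦ coordVanishingPoly (S j) j) h ∧
      ∀ j, mo.degree (coordVanishingPoly (S j) j * h j) ≼[mo] mo.degree F := by
  obtain ⟨h, r, hFr, hdeg, hr⟩ := mo.div (b := fun j ↦ coordVanishingPoly (S j) j)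
    (fun j ↦ by simp only [(monic_coordVanishingPoly mo (S j) j).leadingCoeff_eq_one,
      isUnit_one]) F
  have hr_lt : ∀ c ∈ r.support, ∀ j, c j < #(S j) := fun c hc j ↦ by
    simpa [degree_coordVanishingPoly] using hr c hc j
  have hr_eval : ∀ x : σ → R, (∀ j, x j ∈ S j) → eval x r = 0 := fun x hx ↦ by
    have hcomb :
        eval x (Finsupp.linearCombination _ (fun j ↦ coordVanishingPoly (S j) j) h) = 0 := by
      simp [Finsupp.linearCombination_apply, Finsupp.sum,
        fun j ↦ eval_coordVanishingPoly_eq_zero (hx j)]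
    rw [← hF x hx, hFr, map_add, hcomb, zero_add]
  have hr_zero : r = 0 := by
    by_contra hr_ne
    obtain ⟨c, hc⟩ := support_nonempty.2 hr_ne
    exact hr_ne (eq_zero_of_eval_zero_at_prod_finset r S
      (fun j ↦ (degreeOf_lt_iff (Nat.zero_lt_of_lt (hr_lt c hc j))).2 fun d hd ↦ hr_lt d hd j)
      hr_eval)
  exact ⟨h, by rw [hFr, hr_zero, add_zero], hdeg⟩

theorem exists_eval_ne_zero_of_degree_lt_card (mo : MonomialOrder σ) (S : σ → Finset R)
    {F : MvPolynomial σ R} (hF : F ≠ 0) (hdeg : ∀ j, mo.degree F j < #(S j)) :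
    ∃ x : σ → R, (∀ j, x j ∈ S j) ∧ eval x F ≠ 0 := by
  by_contra! hvanish
  obtain ⟨h, hFh, hh⟩ := exists_eq_linearCombination_coordVanishingPoly mo S F hvanish
  obtain ⟨j, hj⟩ := exists_degree_le_degree_of_eq_linearCombination hF hFh hh
  rw [degree_coordVanishingPoly, Finsupp.single_le_iff] at hj
  exact (hdeg j).not_ge hj

end Nullstellensatz

theorem card_le_card_of_forall_exists_eval_ne_zero [CommRing R] [Nontrivial R]
    (A : Finset (σ →₀ ℕ)) (D : Finset (σ → R))
    (h : ∀ g : MvPolynomial σ R, g ≠ 0 → g.support ⊆ A → ∃ x ∈ D, eval x g ≠ 0) :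
    #A ≤ #D := by
  let evalOn : restrictSupport R (A : Set (σ →₀ ℕ)) →ₗ[R] (D → R) :=
    LinearMap.pi fun x ↦ (aeval (x : σ → R)).toLinearMap ∘ₗ Submodule.subtype _
  have evalOn_injective : Function.Injective evalOn := by
    refine (injective_iff_map_eq_zero evalOn).2 fun ⟨g, hg⟩ hzero ↦ ?_
    by_contra hne
    obtain ⟨x, hxD, hx⟩ := h g (fun hg0 ↦ hne (Subtype.ext hg0)) (by exact_mod_cast hg)
    exact hx (congrFun hzero ⟨x, hxD⟩)
  let monomialBasis := basisRestrictSupport R (A : Set (σ →₀ ℕ))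
  have := Module.Finite.of_basis monomialBasis
  simpa [Module.finrank_eq_card_basis monomialBasis] using
    LinearMap.finrank_le_finrank_of_injective evalOn_injective

section Bound

variable [CommRing R] [IsDomain R] [Fintype σ] [DecidableEq σ]

/-- The truncated subtraction is intended: the product counts the exponents `e` with `e j < #(S j)`
and `mo.degree f ≤ e`, and there are none once `#(S j) ≤ mo.degree f j` for some `j`. -/
theorem prod_card_sub_degree_le_card_filter_eval_ne_zero (mo : MonomialOrder σ)
    (S : σ → Finset R) {f : MvPolynomial σ R} (hf : f ≠ 0) :
    ∏ j, (#(S j) - mo.degree f j) ≤ #{p ∈ Fintype.piFinset S | eval p f ≠ 0} := by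
  let A : Finset (σ →₀ ℕ) := Finset.univ.finsupp fun j ↦ Finset.range (#(S j) - mo.degree f j)
  have hA : #A = ∏ j, (#(S j) - mo.degree f j) := by simp [A, Finset.card_finsupp]
  rw [← hA]
  refine card_le_card_of_forall_exists_eval_ne_zero A _ fun g hg hgA ↦ ?_
  have hdeg : ∀ j, mo.degree (f * g) j < #(S j) := fun j ↦ by
    have hgj : mo.degree g j < #(S j) - mo.degree f j := Finset.mem_range.1 <|
      (Finset.mem_finsupp_iff.1 (hgA (mo.degree_mem_support hg))).2 j (Finset.mem_univ j)
    rw [mo.degree_mul hf hg, Finsupp.add_apply]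
    lia
  obtain ⟨x, hxS, hx⟩ := exists_eval_ne_zero_of_degree_lt_card mo S (mul_ne_zero hf hg) hdeg
  rw [map_mul] at hx
  exact ⟨x, Finset.mem_filter.2 ⟨Fintype.mem_piFinset.2 hxS, left_ne_zero_of_mul hx⟩,
    right_ne_zero_of_mul hx⟩

theorem footprint_bound_general (mo : MonomialOrder σ) (S : σ → Finset R)
    {f : MvPolynomial σ R} (hf : f ≠ 0) :
    #{p ∈ Fintype.piFinset S | eval p f = 0} ≤
      ∏ j, #(S j) - ∏ j, (#(S j) - mo.degree f j) := by
  have hne := prod_card_sub_degree_le_card_filter_eval_ne_zero mo S hf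
  have hsplit := (Fintype.piFinset S).card_filter_add_card_filter_not fun p ↦ eval p f = 0
  rw [Fintype.card_piFinset] at hsplit
  lia

end Bound

end Footprint

/-- **Footprint bound.** Let `K` be a field, `m ≥ 1`, and for each `j` let `S j ⊆ K` be a
finite set of size `s j`. Fix a monomial order on `K[X_1,…,X_m]` and let `f` be a nonzero
polynomial whose leading monomial has exponent vector `i` with `i j < s j` for all `j`.
Then `f` vanishes at most at `∏ s j − ∏ (s j − i j)` points of `S_1 × ⋯ × S_m`. -/
theorem footprint_bound
    (K : Type*) [Field K] (m : ℕ) (hm : 1 ≤ m)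
    (S : Fin m → Finset K) (s : Fin m → ℕ) (hs : ∀ j, (S j).card = s j)
    (mo : MonomialOrder (Fin m))
    (f : MvPolynomial (Fin m) K) (hf : f ≠ 0)
    (i : Fin m →₀ ℕ)
    (hlead_mem : i ∈ f.support)
    (hlead_max : ∀ u ∈ f.support, u ≼[mo] i)
    (hi : ∀ j, i j < s j) :
    ((Fintype.piFinset S).filter (fun p => MvPolynomial.eval p f = 0)).card
      ≤ ∏ j, s j - ∏ j, (s j - i j) := by
  obtain rfl := degree_eq_of_mem_support_of_forall_le hlead_mem hlead_max
  simpa only [hs] using footprint_bound_general mo S hf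
end

section
/- Let K be a field, let m ≥ 1, and let f ∈ K[X_1,…,X_m] be a nonzero polynomial whose Newton polytope is contained in the box [a_1,b_1] × ⋯ × [a_m,b_m], where 0 ≤ a_j ≤ b_j are integers; set ℓ_j = b_j − a_j. Let S_j ⊆ K \ {0} be finite sets with |S_j| = s_j > ℓ_j + 1 for 1 ≤ j ≤ m, and let S ⊆ (K \ {0})^m be a finite set with S_1 × ⋯ × S_m ⊆ S. Then the number of points of S at which f vanishes is at most |S| − ∏_{j=1}^m (s_j − ℓ_j). -/
open scoped Classical

/-- The Newton polytope of a multivariate polynomial: the convex hull (in `ℝ^m`) of the set of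
exponent vectors of its monomials with nonzero coefficient. -/
noncomputable def newtonPolytope {K : Type*} [CommSemiring K] {m : ℕ}
    (f : MvPolynomial (Fin m) K) : Set (Fin m → ℝ) :=
  convexHull ℝ ((fun (u : Fin m →₀ ℕ) (j : Fin m) => (u j : ℝ)) '' f.support)

/-!
On the torus a monomial never vanishes, so dividing `f` by `X^a` changes none of the zeros that
matter and leaves a polynomial `g` of degree at most `ℓ_j` in `X_j`. For such a `g`, induction on
the number of variables gives at least `∏ (s_j - ℓ_j)` nonzeros in the box `S_1 × ⋯ × S_m`: above
each nonzero of the leading coefficient of `g` in the first variable, the fibre of `g` is a nonzero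
univariate polynomial of degree at most `ℓ_1`. Since `S` contains the box, it contains these
nonzeros.
-/

open MvPolynomial Finset

section Counting

theorem card_filter_piFinset_succ {n : ℕ} {α : Fin (n + 1) → Type*} (B : ∀ i, Finset (α i))
    (P : (∀ i, α i) → Prop) [DecidablePred P] :
    #{x ∈ Fintype.piFinset B | P x} =
      ∑ y ∈ Fintype.piFinset (Fin.tail B), #{c ∈ B 0 | P (Fin.cons c y)} := by
  simp only [card_filter]
  rw [← sum_product_right']
  refine (sum_equiv (Fin.consEquiv α) (fun z => ?_) fun z _ => rfl).symm
  simp [Fintype.mem_piFinset, Fin.forall_fin_succ, Fin.tail]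

variable {R : Type*} [CommRing R] [IsDomain R]

theorem card_sub_natDegree_le_card_eval_ne_zero {p : Polynomial R} (hp : p ≠ 0) (B : Finset R) :
    #B - p.natDegree ≤ #{c ∈ B | p.eval c ≠ 0} := by
  have roots_le : #{c ∈ B | p.eval c = 0} ≤ p.natDegree :=
    Polynomial.card_le_degree_of_subset_roots fun c hc =>
      (Polynomial.mem_roots hp).2 (mem_filter.1 hc).2
  have split := card_filter_add_card_filter_not (s := B) (fun c => p.eval c = 0)
  simp only [ne_eq]
  omega

theorem card_sub_degreeOf_zero_le_card_eval_cons_ne_zero {n : ℕ} {f : MvPolynomial (Fin (n + 1)) R}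
    {y : Fin n → R} (hy : eval y (finSuccEquiv R n f).leadingCoeff ≠ 0) (B : Finset R) :
    #B - f.degreeOf 0 ≤ #{c ∈ B | eval (Fin.cons c y) f ≠ 0} := by
  set q := (finSuccEquiv R n f).map (eval y) with hq
  have q_ne_zero : q ≠ 0 := by
    rw [← Polynomial.leadingCoeff_ne_zero, Polynomial.leadingCoeff_map_of_leadingCoeff_ne_zero _ hy]
    exact hy
  have q_natDegree : q.natDegree ≤ f.degreeOf 0 :=
    Polynomial.natDegree_map_le.trans (natDegree_finSuccEquiv f).le
  calc #B - f.degreeOf 0 ≤ #B - q.natDegree := tsub_le_tsub_left q_natDegree _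
    _ ≤ #{c ∈ B | q.eval c ≠ 0} := card_sub_natDegree_le_card_eval_ne_zero q_ne_zero B
    _ = #{c ∈ B | eval (Fin.cons c y) f ≠ 0} := by simp only [hq, eval_eq_eval_mv_eval']

theorem prod_card_sub_degreeOf_le_card_eval_ne_zero {n : ℕ} {f : MvPolynomial (Fin n) R}
    (hf : f ≠ 0) (B : Fin n → Finset R) :
    ∏ j, (#(B j) - f.degreeOf j) ≤ #{x ∈ Fintype.piFinset B | eval x f ≠ 0} := by
  induction n with
  | zero =>
    rw [eq_C_of_isEmpty f, C_ne_zero] at hf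
    rw [eq_C_of_isEmpty f]
    simp [hf]
  | succ n ih =>
    set lead := (finSuccEquiv R n f).leadingCoeff
    have lead_ne_zero : lead ≠ 0 :=
      Polynomial.leadingCoeff_ne_zero.2 (EmbeddingLike.map_ne_zero_iff.2 hf)
    have degreeOf_lead (j : Fin n) : lead.degreeOf j ≤ f.degreeOf j.succ :=
      degreeOf_coeff_finSuccEquiv f j _
    set Y := {y ∈ Fintype.piFinset (Fin.tail B) | eval y lead ≠ 0}
    calc ∏ j, (#(B j) - f.degreeOf j)
        = (∏ j : Fin n, (#(B j.succ) - f.degreeOf j.succ)) * (#(B 0) - f.degreeOf 0) := by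
          rw [Fin.prod_univ_succ, mul_comm]
      _ ≤ (∏ j : Fin n, (#(B j.succ) - lead.degreeOf j)) * (#(B 0) - f.degreeOf 0) := by
          gcongr with j
          exact degreeOf_lead j
      _ ≤ #Y * (#(B 0) - f.degreeOf 0) := by
          gcongr
          exact ih lead_ne_zero (Fin.tail B)
      _ ≤ ∑ y ∈ Y, #{c ∈ B 0 | eval (Fin.cons c y) f ≠ 0} :=
          card_nsmul_le_sum _ _ _ fun y hy =>
            card_sub_degreeOf_zero_le_card_eval_cons_ne_zero (mem_filter.1 hy).2 (B 0)
      _ ≤ ∑ y ∈ Fintype.piFinset (Fin.tail B), #{c ∈ B 0 | eval (Fin.cons c y) f ≠ 0} :=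
          sum_le_sum_of_subset (filter_subset _ _)
      _ = #{x ∈ Fintype.piFinset B | eval x f ≠ 0} :=
          (card_filter_piFinset_succ B fun x => eval x f ≠ 0).symm

end Counting

section Monomial

variable {σ R : Type*} [CommSemiring R]

theorem monomial_one_dvd_of_forall_mem_support_le {f : MvPolynomial σ R} {d : σ →₀ ℕ}
    (h : ∀ u ∈ f.support, d ≤ u) : monomial d 1 ∣ f := by
  rw [monomial_one_dvd_iff_modMonomial_eq_zero]
  ext u
  by_cases hdu : d ≤ u
  · rw [coeff_modMonomial_of_le _ hdu, coeff_zero]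
  · rw [coeff_modMonomial_of_not_le _ hdu, coeff_zero]
    exact notMem_support_iff.1 fun hu => hdu (h u hu)

variable [NoZeroDivisors R] [Nontrivial R]

theorem degreeOf_monomial_one_mul (d : σ →₀ ℕ) {g : MvPolynomial σ R} (hg : g ≠ 0) (i : σ) :
    (monomial d 1 * g).degreeOf i = d i + g.degreeOf i := by
  have monomial_ne_zero : monomial d (1 : R) ≠ 0 := monomial_eq_zero.not.2 one_ne_zero
  rw [degreeOf_mul_eq monomial_ne_zero hg, degreeOf_monomial_eq d i one_ne_zero]

theorem eval_monomial_one_ne_zero {x : σ → R}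
    (hx : ∀ i, x i ≠ 0) (d : σ →₀ ℕ) : eval x (monomial d 1) ≠ 0 := by
  rw [eval_monomial, one_mul]
  exact prod_ne_zero_iff.2 fun i _ => pow_ne_zero _ (hx i)

end Monomial

theorem forall_mem_support_of_newtonPolytope_subset_box {R : Type*} [CommSemiring R] {m : ℕ}
    {f : MvPolynomial (Fin m) R} {a b : Fin m → ℕ}
    (hNP : newtonPolytope f ⊆ {x : Fin m → ℝ | ∀ j, (a j : ℝ) ≤ x j ∧ x j ≤ (b j : ℝ)}) :
    ∀ u ∈ f.support, ∀ j, a j ≤ u j ∧ u j ≤ b j := by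
  intro u hu j
  have hu_box : (a j : ℝ) ≤ u j ∧ (u j : ℝ) ≤ b j := hNP (subset_convexHull ℝ _ ⟨u, hu, rfl⟩) j
  exact_mod_cast hu_box

section Box

variable {R : Type*} [CommRing R] [IsDomain R] {m : ℕ} {f : MvPolynomial (Fin m) R}

/-- `k j` stands for `#(B j) - (b j - a j)`, whose subtractions would truncate in `ℕ`. -/
theorem prod_le_card_eval_ne_zero_of_support_box (hf : f ≠ 0) {a b : Fin m → ℕ}
    (hsupp : ∀ u ∈ f.support, ∀ j, a j ≤ u j ∧ u j ≤ b j)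
    {B : Fin m → Finset R} (hB : ∀ j, ∀ c ∈ B j, c ≠ 0)
    {k : Fin m → ℕ} (hk : ∀ j, b j + k j ≤ a j + #(B j)) :
    ∏ j, k j ≤ #{x ∈ Fintype.piFinset B | eval x f ≠ 0} := by
  set d : Fin m →₀ ℕ := Finsupp.equivFunOnFinite.symm a
  obtain ⟨g, rfl⟩ : monomial d 1 ∣ f :=
    monomial_one_dvd_of_forall_mem_support_le fun u hu j => (hsupp u hu j).1
  have g_ne_zero : g ≠ 0 := right_ne_zero_of_mul hf
  have degreeOf_g (j : Fin m) : a j + g.degreeOf j ≤ b j :=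
    (degreeOf_monomial_one_mul d g_ne_zero j).symm.le.trans
      (degreeOf_le_iff.2 fun u hu => (hsupp u hu j).2)
  calc ∏ j, k j ≤ ∏ j, (#(B j) - g.degreeOf j) :=
        prod_le_prod' fun j _ => by have := hk j; have := degreeOf_g j; omega
    _ ≤ #{x ∈ Fintype.piFinset B | eval x g ≠ 0} :=
        prod_card_sub_degreeOf_le_card_eval_ne_zero g_ne_zero B
    _ ≤ #{x ∈ Fintype.piFinset B | eval x (monomial d 1 * g) ≠ 0} := by
        refine card_le_card (monotone_filter_right _ fun x hx eval_g => ?_)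
        have x_ne_zero (j : Fin m) : x j ≠ 0 := hB j _ (Fintype.mem_piFinset.1 hx j)
        simpa only [map_mul] using mul_ne_zero (eval_monomial_one_ne_zero x_ne_zero d) eval_g

theorem zeros_bound_of_newtonPolytope_in_box_general (hf : f ≠ 0) {a b : Fin m → ℕ}
    (hNP : newtonPolytope f ⊆ {x : Fin m → ℝ | ∀ j, (a j : ℝ) ≤ x j ∧ x j ≤ (b j : ℝ)})
    {B : Fin m → Finset R} (hB : ∀ j, ∀ c ∈ B j, c ≠ 0)
    {k : Fin m → ℕ} (hk : ∀ j, b j + k j ≤ a j + #(B j))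
    {S : Finset (Fin m → R)} (hBS : Fintype.piFinset B ⊆ S) :
    #{p ∈ S | eval p f = 0} ≤ #S - ∏ j, k j := by
  have nonzeros : ∏ j, k j ≤ #{p ∈ S | eval p f ≠ 0} :=
    (prod_le_card_eval_ne_zero_of_support_box hf
      (forall_mem_support_of_newtonPolytope_subset_box hNP) hB hk).trans
      (card_le_card (filter_subset_filter _ hBS))
  have split := card_filter_add_card_filter_not (s := S) (fun p => eval p f = 0)
  simp only [ne_eq] at nonzeros
  omega

end Box

/-- Let `f ∈ K[X_1,…,X_m]` be nonzero with Newton polytope contained in the box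
`[a_1,b_1] × ⋯ × [a_m,b_m]`, `ℓ_j = b_j − a_j`.  If `S_j ⊆ K \ {0}` are finite sets with
`|S_j| = s_j > ℓ_j + 1` and `S ⊆ (K \ {0})^m` is a finite set containing the box
`S_1 × ⋯ × S_m`, then `f` vanishes at most at `|S| − ∏ (s_j − ℓ_j)` points of `S`. -/
theorem zeros_bound_of_newtonPolytope_in_box
    (K : Type*) [Field K] (m : ℕ) (hm : 1 ≤ m)
    (f : MvPolynomial (Fin m) K) (hf : f ≠ 0)
    (a b : Fin m → ℕ) (hab : ∀ j, a j ≤ b j)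
    (ℓ : Fin m → ℕ) (hℓ : ∀ j, ℓ j = b j - a j)
    (hNP : newtonPolytope f ⊆ {x : Fin m → ℝ | ∀ j, (a j : ℝ) ≤ x j ∧ x j ≤ (b j : ℝ)})
    (Sbox : Fin m → Finset K) (hSbox0 : ∀ j, ∀ c ∈ Sbox j, c ≠ 0)
    (s : Fin m → ℕ) (hs : ∀ j, (Sbox j).card = s j) (hsℓ : ∀ j, ℓ j + 1 < s j)
    (S : Finset (Fin m → K)) (hS0 : ∀ p ∈ S, ∀ j, p j ≠ 0)
    (hboxS : Fintype.piFinset Sbox ⊆ S) :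
    (S.filter (fun p => MvPolynomial.eval p f = 0)).card
      ≤ S.card - ∏ j, (s j - ℓ j) := by
  exact zeros_bound_of_newtonPolytope_in_box_general hf hNP hSbox0
    (fun j => by have := hab j; have := hℓ j; have := hs j; have := hsℓ j; omega) hboxS
end

section
/- Let K be a field, let m ≥ 1, let f ∈ K[X_1,…,X_m] be a nonzero polynomial of total degree d, and let S ⊆ K be a finite set with |S| = s. Then the sum over all points p ∈ S^m of the multiplicity of f at p is at most d·s^{m−1}. -/
/-- The translate `F(X + p)` of a multivariate polynomial `F` by a point `p`. -/
noncomputable def polyTranslate {K : Type*} [CommRing K] {m : ℕ}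
    (F : MvPolynomial (Fin m) K) (p : Fin m → K) : MvPolynomial (Fin m) K :=
  MvPolynomial.aeval (fun i => MvPolynomial.X i + MvPolynomial.C (p i)) F

/-- The multiplicity of `F` at a point `p`: the smallest total degree of a monomial appearing
with nonzero coefficient in the translated polynomial `F(X + p)`. -/
noncomputable def multAt {K : Type*} [CommRing K] {m : ℕ}
    (F : MvPolynomial (Fin m) K) (p : Fin m → K) : ℕ :=
  sInf {d : ℕ | ∃ u ∈ (polyTranslate F p).support, (u.sum fun _ e => e) = d}

/-!
Write `f` as a polynomial in `X₀` over `R[X']`, of degree `k` and with leading coefficient `c`. If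
`X'^u` is a monomial of least degree in `c(X' + p)`, then the coefficient `g` of `X'^u` in
`f(X₀, X' + p)` is a univariate polynomial of degree `k`, and translating `g` by `a` exhibits a
monomial of `f(X₀ + a, X' + p)` of degree `mult_p(c) + mult_a(g)`. Summing over `a ∈ S₀` bounds the
multiplicities of `f` on the line over `p` by `|S₀| * mult_p(c) + k`. Induction on the number of
variables, applied to `c`, then bounds the sum over a grid by `∑ i, u i * ∏ j ≠ i, |S j|`, where
`u` is now the lexicographically leading exponent of `f`.
-/

section MapCoeff

open Polynomial

variable {R A B : Type*} [CommSemiring R] [Semiring A] [Semiring B] [Algebra R A] [Algebra R B]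

/-- The polynomial obtained by applying a linear map to every coefficient. In contrast to
`Polynomial.map` the map need not be multiplicative; it is used to extract a fixed monomial from
each coefficient. -/
noncomputable def mapCoeff (φ : A →ₗ[R] B) (q : A[X]) : B[X] :=
  q.sum fun k c => monomial k (φ c)

theorem coeff_mapCoeff (φ : A →ₗ[R] B) (q : A[X]) (k : ℕ) :
    (mapCoeff φ q).coeff k = φ (q.coeff k) := by
  simp +contextual [mapCoeff, sum_def, finsetSum_coeff, coeff_monomial]

theorem mapCoeff_add (φ : A →ₗ[R] B) (p q : A[X]) :
    mapCoeff φ (p + q) = mapCoeff φ p + mapCoeff φ q := by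
  ext k
  simp only [coeff_mapCoeff, coeff_add, map_add]

theorem mapCoeff_monomial (φ : A →ₗ[R] B) (k : ℕ) (c : A) :
    mapCoeff φ (monomial k c) = monomial k (φ c) :=
  sum_monomial_index c _ (by simp)

theorem natDegree_mapCoeff_le (φ : A →ₗ[R] B) (q : A[X]) :
    (mapCoeff φ q).natDegree ≤ q.natDegree := by
  refine natDegree_le_iff_coeff_eq_zero.2 fun k hk => ?_
  rw [coeff_mapCoeff, coeff_eq_zero_of_natDegree_lt hk, map_zero]

theorem taylor_mapCoeff (φ : A →ₗ[R] B) (a : R) (q : A[X]) :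
    taylor (algebraMap R B a) (mapCoeff φ q) = mapCoeff φ (taylor (algebraMap R A a) q) := by
  induction q using Polynomial.induction_on' with
  | add p q hp hq => simp only [mapCoeff_add, map_add, hp, hq]
  | monomial k c =>
    ext j
    have hcoeff (x : R) : φ (c * algebraMap R A x) = φ c * algebraMap R B x := by
      rw [← Algebra.commutes, ← Algebra.smul_def, map_smul, Algebra.smul_def, Algebra.commutes]
    simpa [mapCoeff_monomial, coeff_mapCoeff, taylor_monomial, coeff_X_add_C_pow] using
      (hcoeff (a ^ (k - j) * k.choose j)).symm

end MapCoeff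

theorem sum_rootMultiplicity_le_natDegree {R : Type*} [CommRing R] [IsDomain R]
    (g : Polynomial R) (S : Finset R) : ∑ a ∈ S, g.rootMultiplicity a ≤ g.natDegree := by
  classical
  calc ∑ a ∈ S, g.rootMultiplicity a
      = ∑ a ∈ S, g.roots.count a := by simp only [Polynomial.count_roots]
    _ ≤ ∑ a ∈ S ∪ g.roots.toFinset, g.roots.count a :=
        Finset.sum_le_sum_of_subset Finset.subset_union_left
    _ = g.roots.card := Multiset.sum_count_eq_card fun a ha =>
        Finset.mem_union_right S (Multiset.mem_toFinset.2 ha)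
    _ ≤ g.natDegree := g.card_roots'

theorem coeff_taylor_rootMultiplicity_ne_zero {R : Type*} [CommRing R] {g : Polynomial R}
    (hg : g ≠ 0) (a : R) : (Polynomial.taylor a g).coeff (g.rootMultiplicity a) ≠ 0 := by
  rw [Polynomial.rootMultiplicity_eq_natTrailingDegree, ← Polynomial.taylor_apply]
  exact Polynomial.trailingCoeff_nonzero_iff_nonzero.2 (mt (Polynomial.taylor_eq_zero a g).1 hg)

section Multiplicity

open MvPolynomial

variable {R : Type*} [CommRing R] {m n : ℕ}

/-- Translation `F ↦ F(X + p)` as an algebra homomorphism, so that it can be applied to the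
coefficients of a polynomial over `MvPolynomial (Fin m) R`. -/
noncomputable def polyTranslateHom (p : Fin m → R) :
    MvPolynomial (Fin m) R →ₐ[R] MvPolynomial (Fin m) R :=
  aeval fun i => X i + C (p i)

theorem polyTranslateHom_neg_comp (p : Fin m → R) :
    (polyTranslateHom (-p)).comp (polyTranslateHom p) = AlgHom.id R _ := by
  ext i : 1
  simp [polyTranslateHom]

theorem polyTranslate_ne_zero {F : MvPolynomial (Fin m) R} (hF : F ≠ 0) (p : Fin m → R) :
    polyTranslate F p ≠ 0 := by
  have hinv : Function.LeftInverse (polyTranslateHom (-p)) (polyTranslateHom p) :=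
    DFunLike.congr_fun (polyTranslateHom_neg_comp p)
  exact (map_ne_zero_iff (polyTranslateHom p) hinv.injective).2 hF

theorem multAt_le_of_coeff_ne_zero {F : MvPolynomial (Fin m) R} {p : Fin m → R} {u : Fin m →₀ ℕ}
    (hu : (polyTranslate F p).coeff u ≠ 0) : multAt F p ≤ u.sum fun _ e => e :=
  Nat.sInf_le ⟨u, mem_support_iff.2 hu, rfl⟩

theorem exists_coeff_ne_zero_sum_eq_multAt {F : MvPolynomial (Fin m) R} (hF : F ≠ 0)
    (p : Fin m → R) :
    ∃ u, (polyTranslate F p).coeff u ≠ 0 ∧ (u.sum fun _ e => e) = multAt F p := by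
  obtain ⟨v, hv⟩ := support_nonempty.2 (polyTranslate_ne_zero hF p)
  obtain ⟨u, hu, hdeg⟩ := Nat.sInf_mem
    (s := {d | ∃ u ∈ (polyTranslate F p).support, (u.sum fun _ e => e) = d}) ⟨_, v, hv, rfl⟩
  exact ⟨u, mem_support_iff.1 hu, hdeg⟩

theorem finSuccEquiv_polyTranslate_cons (f : MvPolynomial (Fin (n + 1)) R) (a : R)
    (p : Fin n → R) :
    finSuccEquiv R n (polyTranslate f (Fin.cons a p)) =
      Polynomial.taylor (C a) ((finSuccEquiv R n f).map (polyTranslateHom p)) := by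
  suffices h : (finSuccEquiv R n).toAlgHom.comp (polyTranslateHom (Fin.cons a p)) =
      ((Polynomial.taylorAlgHom (C a : MvPolynomial (Fin n) R)).restrictScalars R).comp
        ((Polynomial.mapAlgHom (polyTranslateHom p)).comp (finSuccEquiv R n).toAlgHom) from
    DFunLike.congr_fun h f
  ext i : 1
  refine Fin.cases ?_ (fun j => ?_) i <;> simp [polyTranslateHom, finSuccEquiv_apply]

/-- The coefficient of `X'^u` in `f(X₀, X' + p)`, a univariate polynomial in the first variable
`X₀`, where `X'` stands for the remaining variables. -/
noncomputable def sliceCoeff (f : MvPolynomial (Fin (n + 1)) R) (p : Fin n → R)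
    (u : Fin n →₀ ℕ) : Polynomial R :=
  mapCoeff (lcoeff R u) ((finSuccEquiv R n f).map (polyTranslateHom p))

theorem coeff_sliceCoeff (f : MvPolynomial (Fin (n + 1)) R) (p : Fin n → R) (u : Fin n →₀ ℕ)
    (k : ℕ) :
    (sliceCoeff f p u).coeff k = (polyTranslate ((finSuccEquiv R n f).coeff k) p).coeff u := by
  rw [sliceCoeff, coeff_mapCoeff, Polynomial.coeff_map]
  rfl

theorem natDegree_sliceCoeff_le (f : MvPolynomial (Fin (n + 1)) R) (p : Fin n → R)
    (u : Fin n →₀ ℕ) : (sliceCoeff f p u).natDegree ≤ (finSuccEquiv R n f).natDegree :=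
  (natDegree_mapCoeff_le _ _).trans Polynomial.natDegree_map_le

theorem coeff_taylor_sliceCoeff (f : MvPolynomial (Fin (n + 1)) R) (a : R) (p : Fin n → R)
    (u : Fin n →₀ ℕ) (k : ℕ) :
    (Polynomial.taylor a (sliceCoeff f p u)).coeff k =
      (polyTranslate f (Fin.cons a p)).coeff (u.cons k) := by
  rw [← finSuccEquiv_coeff_coeff, finSuccEquiv_polyTranslate_cons, ← lcoeff_apply,
    ← coeff_mapCoeff]
  exact congrArg (Polynomial.coeff · k) (taylor_mapCoeff (lcoeff R u) a _)

theorem multAt_cons_le_sum_add_rootMultiplicity {f : MvPolynomial (Fin (n + 1)) R}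
    {p : Fin n → R} {u : Fin n →₀ ℕ} (hg : sliceCoeff f p u ≠ 0) (a : R) :
    multAt f (Fin.cons a p) ≤ (u.sum fun _ e => e) + (sliceCoeff f p u).rootMultiplicity a := by
  have hcoeff := coeff_taylor_rootMultiplicity_ne_zero hg a
  rw [coeff_taylor_sliceCoeff] at hcoeff
  exact (multAt_le_of_coeff_ne_zero hcoeff).trans_eq (by rw [Finsupp.sum_cons, add_comm])

theorem sum_multAt_cons_le [IsDomain R] {f : MvPolynomial (Fin (n + 1)) R} (hf : f ≠ 0)
    (S : Finset R) (p : Fin n → R) :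
    ∑ a ∈ S, multAt f (Fin.cons a p) ≤
      S.card * multAt (finSuccEquiv R n f).leadingCoeff p + (finSuccEquiv R n f).natDegree := by
  have hlead : (finSuccEquiv R n f).leadingCoeff ≠ 0 :=
    Polynomial.leadingCoeff_ne_zero.2 (EmbeddingLike.map_ne_zero_iff.2 hf)
  obtain ⟨u, hu, hdeg⟩ := exists_coeff_ne_zero_sum_eq_multAt hlead p
  have hg : sliceCoeff f p u ≠ 0 := by
    intro h
    rw [Polynomial.leadingCoeff, ← coeff_sliceCoeff, h] at hu
    exact hu (Polynomial.coeff_zero _)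
  calc ∑ a ∈ S, multAt f (Fin.cons a p)
      ≤ ∑ a ∈ S, (multAt (finSuccEquiv R n f).leadingCoeff p +
          (sliceCoeff f p u).rootMultiplicity a) :=
        Finset.sum_le_sum fun a _ => hdeg ▸ multAt_cons_le_sum_add_rootMultiplicity hg a
    _ = S.card * multAt (finSuccEquiv R n f).leadingCoeff p +
          ∑ a ∈ S, (sliceCoeff f p u).rootMultiplicity a := by
        rw [Finset.sum_add_distrib, Finset.sum_const, smul_eq_mul]
    _ ≤ _ := by
        gcongr
        exact (sum_rootMultiplicity_le_natDegree _ S).trans (natDegree_sliceCoeff_le f p u)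

end Multiplicity

section Grid

open Finset Fintype

theorem sum_piFinset_succ {n : ℕ} {α : Fin (n + 1) → Type*} {M : Type*} [AddCommMonoid M]
    (S : ∀ i, Finset (α i)) (φ : (∀ i, α i) → M) :
    ∑ x ∈ piFinset S, φ x = ∑ p ∈ piFinset (Fin.tail S), ∑ a ∈ S 0, φ (Fin.cons a p) := by
  have hS := filter_piFinset_eq_map_consEquiv S fun _ => True
  simp only [filter_true] at hS
  rw [hS, sum_map, sum_product_right]
  rfl

theorem sum_mul_prod_erase_succ {n : ℕ} {M : Type*} [CommSemiring M] (u c : Fin (n + 1) → M) :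
    ∑ i, u i * ∏ j ∈ univ.erase i, c j =
      u 0 * ∏ j, Fin.tail c j + c 0 * ∑ i, Fin.tail u i * ∏ j ∈ univ.erase i, Fin.tail c j := by
  simp only [← filter_ne', prod_filter, Fin.sum_univ_succ, Fin.prod_univ_succ, mul_sum,
    Fin.tail]
  simp [Fin.succ_ne_zero, (Fin.succ_ne_zero _).symm, mul_left_comm]

end Grid

theorem sum_mul_prod_erase_const_le_totalDegree_mul_pow {R : Type*} [CommSemiring R] {m : ℕ}
    {f : MvPolynomial (Fin m) R} {u : Fin m →₀ ℕ} (hu : u ∈ f.support) (s : ℕ) :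
    ∑ i, u i * ∏ _j ∈ Finset.univ.erase i, s ≤ f.totalDegree * s ^ (m - 1) := by
  have hdeg : ∑ i, u i ≤ f.totalDegree := by
    simpa [Finsupp.sum_fintype] using MvPolynomial.le_totalDegree hu
  simpa [← Finset.sum_mul] using Nat.mul_le_mul_right (s ^ (m - 1)) hdeg

theorem sum_multiplicities_le_general {R : Type*} [CommRing R] [IsDomain R] {m : ℕ}
    {f : MvPolynomial (Fin m) R} (hf : f ≠ 0) (S : Fin m → Finset R) :
    ∃ u ∈ f.support, ∑ p ∈ Fintype.piFinset S, multAt f p ≤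
      ∑ i, u i * ∏ j ∈ Finset.univ.erase i, (S j).card := by
  induction m with
  | zero =>
    obtain ⟨u, hu⟩ := MvPolynomial.support_nonempty.2 hf
    have hmult (p : Fin 0 → R) : multAt f p = 0 := by
      obtain ⟨v, -, hv⟩ := exists_coeff_ne_zero_sum_eq_multAt hf p
      rw [← hv, Subsingleton.elim v 0, Finsupp.sum_zero_index]
    exact ⟨u, hu, by simp [hmult]⟩
  | succ n ih =>
    set Q := MvPolynomial.finSuccEquiv R n f
    have hlead : Q.leadingCoeff ≠ 0 :=
      Polynomial.leadingCoeff_ne_zero.2 (EmbeddingLike.map_ne_zero_iff.2 hf)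
    obtain ⟨v, hv, hsum⟩ := ih hlead (Fin.tail S)
    refine ⟨v.cons Q.natDegree, MvPolynomial.mem_support_coeff_finSuccEquiv.1 hv, ?_⟩
    calc ∑ x ∈ Fintype.piFinset S, multAt f x
        = ∑ p ∈ Fintype.piFinset (Fin.tail S), ∑ a ∈ S 0, multAt f (Fin.cons a p) :=
          sum_piFinset_succ S _
      _ ≤ ∑ p ∈ Fintype.piFinset (Fin.tail S),
            ((S 0).card * multAt Q.leadingCoeff p + Q.natDegree) :=
          Finset.sum_le_sum fun p _ => sum_multAt_cons_le hf (S 0) p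
      _ = Q.natDegree * ∏ j, (Fin.tail S j).card +
            (S 0).card * ∑ p ∈ Fintype.piFinset (Fin.tail S), multAt Q.leadingCoeff p := by
          rw [Finset.sum_add_distrib, ← Finset.mul_sum, Finset.sum_const, Fintype.card_piFinset,
            smul_eq_mul, mul_comm (∏ _, _), add_comm]
      _ ≤ Q.natDegree * ∏ j, (Fin.tail S j).card +
            (S 0).card * ∑ i, v i * ∏ j ∈ Finset.univ.erase i, (Fin.tail S j).card := by
          gcongr
      _ = _ := (sum_mul_prod_erase_succ (v.cons Q.natDegree) fun j => (S j).card).symm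

/-- **(Multiplicity Schwartz–Zippel.)** Let `f ∈ K[X_1,…,X_m]` be a nonzero polynomial of total
degree `d` and `S ⊆ K` a finite set with `|S| = s`.  Then the sum over all `p ∈ S^m` of the
multiplicity of `f` at `p` is at most `d·s^(m-1)`. -/
theorem sum_multiplicities_le
    (K : Type*) [Field K] (m : ℕ) (hm : 1 ≤ m)
    (f : MvPolynomial (Fin m) K) (hf : f ≠ 0)
    (d : ℕ) (hd : f.totalDegree = d)
    (S : Finset K) (s : ℕ) (hs : S.card = s) :
    ∑ p ∈ Fintype.piFinset (fun _ : Fin m => S), multAt f p ≤ d * s ^ (m - 1) := by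
  obtain ⟨u, hu, hsum⟩ := sum_multiplicities_le_general hf fun _ => S
  exact hd ▸ hs ▸ hsum.trans (sum_mul_prod_erase_const_le_totalDegree_mul_pow hu S.card)
end

section
/- Let m ≥ 1 and let P ⊆ ℝ^m be an m-dimensional lattice polytope. Then for every integer λ ≥ m, Σ_{k=1}^{λ} |kP ∩ ℤ^m| > C(λ+1, m+1) · m! · vol(P), where C(λ+1, m+1) is the binomial coefficient and vol(P) is the m-dimensional Euclidean volume of P. -/
open scoped Pointwise

/-- The set of lattice points of a subset of `ℝ^m`, viewed as integer vectors. -/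
def latticePts {m : ℕ} (P : Set (Fin m → ℝ)) : Set (Fin m → ℤ) :=
  {x | (fun j => (x j : ℝ)) ∈ P}

/-!
Place the vertices of `P` at height one in `ℝ^(m+1)` and lift them by generic weights: the lower
facets of the lifted cone are the cells of a triangulation of `P`. Nudging every point in a fixed
generic direction `g` assigns each point of the cone over `P` to at most one cell, and the points
that a cell receives contain its simplicial cone with some, but not all, of its facets removed. In
such a half-open cone every coset of the lattice spanned by the `m + 1` generators has a
representative at height `m`; adding nonnegative integer combinations of the generators gives
`C(k, m) · |det|` lattice points at height `k`, where `|det|` is `m!` times the volume of the cell.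
Summing over the cells bounds `|kP ∩ ℤ^m|` from below by `C(k, m) · m! · vol(P)`. If `g` points
beyond a supporting hyperplane of `P` at a vertex `v`, the nudge moves `k v` out of the cone over
`P`, so `k v` is not counted and the bound is strict. The theorem follows by summing over `k`.
-/

open MeasureTheory Filter Topology Module

lemma eventually_pos_add_mul {a c : ℝ} (ha : 0 ≤ a) (h : a = 0 → 0 < c) :
    ∀ᶠ t : ℝ in 𝓝[>] 0, 0 < a + t * c := by
  rcases ha.eq_or_lt with rfl | ha
  · filter_upwards [self_mem_nhdsWithin] with t ht
    simpa using mul_pos ht (h rfl)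
  · have hcont : Continuous fun t : ℝ => a + t * c := by fun_prop
    exact nhdsWithin_le_nhds <| hcont.continuousAt.eventually_const_lt (by simpa using ha)

lemma eventually_nonneg_add_mul {a c : ℝ} (ha : 0 ≤ a) (h : a = 0 → 0 ≤ c) :
    ∀ᶠ t : ℝ in 𝓝[>] 0, 0 ≤ a + t * c := by
  rcases ha.eq_or_lt with rfl | ha
  · filter_upwards [self_mem_nhdsWithin] with t ht
    simpa using mul_nonneg (le_of_lt ht) (h rfl)
  · exact (eventually_pos_add_mul ha.le fun h0 => absurd h0 ha.ne').mono fun _ => le_of_lt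

lemma exists_mem_extremePoints_forall_le {F : Type*} [AddCommGroup F] [Module ℝ F]
    [TopologicalSpace F] [T2Space F] [IsTopologicalAddGroup F] [ContinuousSMul ℝ F]
    [LocallyConvexSpace ℝ F] {s : Set F} (hs : IsCompact s) (hne : s.Nonempty)
    (l : StrongDual ℝ F) :
    ∃ x ∈ s.extremePoints ℝ, ∀ y ∈ s, l x ≤ l y := by
  obtain ⟨z, hz, hmin⟩ := hs.exists_isMinOn hne l.continuous.continuousOn
  have hface : IsExposed ℝ s ((-l).toExposed s) := ContinuousLinearMap.toExposed.isExposed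
  obtain ⟨x, hx⟩ := (hface.isCompact hs).extremePoints_nonempty
    ⟨z, hz, fun y hy => neg_le_neg (hmin hy)⟩
  exact ⟨x, hface.isExtreme.extremePoints_subset_extremePoints hx,
    fun y hy => neg_le_neg_iff.1 (hx.1.2 y hy)⟩

section HalfOpenCone

variable {κ κ' E : Type*} [Fintype κ] [Fintype κ'] [AddCommGroup E] [Module ℝ E]

/-- The nonnegative combinations of `w` whose coefficients on `s` are positive. For linearly
independent `w` this is the simplicial cone on `w` without the facets opposite to the generators in
`s`: the closed cone for `s = ∅`, the relatively open one for `s = univ`. -/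
def halfOpenCone (w : κ → E) (s : Set κ) : Set E :=
  {y | ∃ a : κ → ℝ, 0 ≤ a ∧ (∀ i ∈ s, 0 < a i) ∧ ∑ i, a i • w i = y}

lemma halfOpenCone_comp_equiv (w : κ → E) (s : Set κ) (e : κ' ≃ κ) :
    halfOpenCone (w ∘ e) (e ⁻¹' s) = halfOpenCone w s := by
  ext y
  constructor
  · rintro ⟨a, ha, hpos, rfl⟩
    refine ⟨a ∘ e.symm, fun i => ha _, fun i hi => hpos _ (by simpa using hi), ?_⟩
    simp [← Equiv.sum_comp e]
  · rintro ⟨a, ha, hpos, rfl⟩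
    exact ⟨a ∘ e, fun i => ha _, fun i hi => hpos _ hi, Equiv.sum_comp e fun i => a i • w i⟩

lemma halfOpenCone_anti (w : κ → E) {s t : Set κ} (hst : s ⊆ t) :
    halfOpenCone w t ⊆ halfOpenCone w s :=
  fun _ ⟨a, ha, hpos, hy⟩ => ⟨a, ha, fun i hi => hpos i (hst hi), hy⟩

lemma halfOpenCone_restrict_subset (w : κ → E) (B : Finset κ) (s : Set B) :
    halfOpenCone (fun i : B => w i) s ⊆ halfOpenCone w ∅ := by
  classical
  rintro _ ⟨a, ha, -, rfl⟩
  refine ⟨fun i => if h : i ∈ B then a ⟨i, h⟩ else 0, fun i => ?_, by simp, ?_⟩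
  · dsimp only
    split_ifs with h
    exacts [ha _, le_rfl]
  · rw [← Finset.sum_subset B.subset_univ fun i _ hi => by simp [hi], ← Finset.sum_coe_sort B]
    simp

lemma eventually_add_smul_mem_halfOpenCone_univ {w : κ → E} {s : Set κ} {y : E}
    (hy : y ∈ halfOpenCone w s) {c : κ → ℝ} (hc : ∀ i ∉ s, 0 < c i) :
    ∀ᶠ t : ℝ in 𝓝[>] 0, y + t • ∑ i, c i • w i ∈ halfOpenCone w Set.univ := by
  obtain ⟨a, ha, hpos, rfl⟩ := hy
  have hev : ∀ᶠ t : ℝ in 𝓝[>] 0, ∀ i, 0 < a i + t * c i := eventually_all.2 fun i =>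
    eventually_pos_add_mul (ha i) fun h0 => hc i fun hi => (hpos i hi).ne' h0
  filter_upwards [hev] with t ht
  refine ⟨fun i => a i + t * c i, fun i => (ht i).le, fun i _ => ht i, ?_⟩
  simp only [add_smul, Finset.sum_add_distrib, mul_smul, Finset.smul_sum]

lemma dual_apply_nonpos_of_mem_halfOpenCone {w : κ → E} {s : Set κ} {y : E}
    (hy : y ∈ halfOpenCone w s) (ψ : Dual ℝ E) (hψ : ∀ i, ψ (w i) ≤ 0) : ψ y ≤ 0 := by
  obtain ⟨a, ha, -, rfl⟩ := hy
  simp only [map_sum, map_smul, smul_eq_mul]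
  exact Finset.sum_nonpos fun i _ => mul_nonpos_of_nonneg_of_nonpos (ha i) (hψ i)

lemma add_sum_smul_mem_halfOpenCone {w : κ → E} {s : Set κ} {y : E} (hy : y ∈ halfOpenCone w s)
    {c : κ → ℝ} (hc : 0 ≤ c) : y + ∑ i, c i • w i ∈ halfOpenCone w s := by
  obtain ⟨a, ha, hpos, rfl⟩ := hy
  exact ⟨a + c, add_nonneg ha hc, fun i hi => add_pos_of_pos_of_nonneg (hpos i hi) (hc i),
    by simp [add_smul, Finset.sum_add_distrib]⟩

end HalfOpenCone

section ConeCoords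

variable {ι E : Type*} [Fintype ι] [AddCommGroup E] [Module ℝ E] {w : ι → E} {y : E} {a : ι → ℝ}

/-- The ways of writing `y` as a nonnegative combination of `w`: the feasible set of the linear
programs from which regular triangulations are read off. -/
def coneCoords (w : ι → E) (y : E) : Set (ι → ℝ) :=
  {a | 0 ≤ a ∧ ∑ i, a i • w i = y}

lemma isClosed_setOf_sum_smul_eq (w : ι → E) (y : E) :
    IsClosed {a : ι → ℝ | ∑ i, a i • w i = y} := by
  rcases {a : ι → ℝ | ∑ i, a i • w i = y}.eq_empty_or_nonempty with h | ⟨b, hb⟩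
  · simp [h]
  · have hker : {a : ι → ℝ | ∑ i, a i • w i = y} =
        (· - b) ⁻¹' (Fintype.linearCombination ℝ w).ker := by
      ext a
      simp [Fintype.linearCombination_apply, sub_smul, hb.out, sub_eq_zero]
    rw [hker]
    exact (Submodule.closed_of_finiteDimensional _).preimage (by fun_prop)

lemma isCompact_coneCoords (φ : Dual ℝ E) (hφ : ∀ i, φ (w i) = 1) (y : E) :
    IsCompact (coneCoords w y) := by
  have hclosed : IsClosed (coneCoords w y) :=
    isClosed_Ici.inter (isClosed_setOf_sum_smul_eq w y)
  refine (isCompact_Icc (a := 0) (b := fun _ => φ y)).of_isClosed_subset hclosed ?_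
  rintro a ⟨ha, rfl⟩
  refine ⟨ha, fun i => ?_⟩
  simpa [hφ] using Finset.single_le_sum (fun j _ => ha j) (Finset.mem_univ i)

lemma eventually_add_smul_mem_coneCoords (ha : a ∈ coneCoords w y) {d : ι → ℝ}
    (hd : ∑ i, d i • w i = 0) (hnonneg : ∀ i, a i = 0 → 0 ≤ d i) :
    ∀ᶠ t : ℝ in 𝓝[>] 0, a + t • d ∈ coneCoords w y := by
  have hev : ∀ᶠ t : ℝ in 𝓝[>] 0, ∀ i, 0 ≤ a i + t * d i :=
    eventually_all.2 fun i => eventually_nonneg_add_mul (ha.1 i) (hnonneg i)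
  filter_upwards [hev] with t ht
  refine ⟨ht, ?_⟩
  simp only [Pi.add_apply, Pi.smul_apply, smul_eq_mul, add_smul, mul_smul, Finset.sum_add_distrib,
    ← Finset.smul_sum, hd, ha.2, smul_zero, add_zero]

lemma linearIndepOn_support_of_mem_extremePoints
    (ha : a ∈ (coneCoords w y).extremePoints ℝ) : LinearIndepOn ℝ w (Function.support a) := by
  refine linearIndepOn_iff.2 fun d hdsupp hd => ?_
  rw [Finsupp.linearCombination_apply, Finsupp.sum_fintype _ _ (by simp)] at hd
  have hsupp : ∀ i, a i = 0 → d i = 0 := fun i hi =>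
    Finsupp.notMem_support_iff.1 fun h => hdsupp h hi
  have hplus := eventually_add_smul_mem_coneCoords ha.1 hd fun i hi => (hsupp i hi).ge
  have hminus := eventually_add_smul_mem_coneCoords ha.1 (d := -⇑d) (by simp [hd])
    fun i hi => by simp [hsupp i hi]
  obtain ⟨t, ⟨hp, hm⟩, ht⟩ := ((hplus.and hminus).and self_mem_nhdsWithin).exists
  have hmid : a ∈ openSegment ℝ (a + t • ⇑d) (a + t • -⇑d) :=
    ⟨1 / 2, 1 / 2, by norm_num, by norm_num, by norm_num, by module⟩
  have htd : t • ⇑d = 0 := by simpa using mem_extremePoints.1 ha |>.2 _ hp _ hm hmid |>.1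
  exact DFunLike.coe_injective <| (smul_eq_zero_iff_right (ne_of_gt ht)).1 htd

lemma dual_apply_le_of_forall_dotProduct_le {ω : ι → ℝ} (ha : a ∈ coneCoords w y)
    (hmin : ∀ b ∈ coneCoords w y, ω ⬝ᵥ a ≤ ω ⬝ᵥ b) (ℓ : Dual ℝ E)
    (hℓ : ∀ i ∈ Function.support a, ℓ (w i) = ω i) {j : ι}
    (hj : w j ∈ Submodule.span ℝ (w '' Function.support a)) : ℓ (w j) ≤ ω j := by
  classical
  obtain ⟨c, hcsupp, hc⟩ := (Finsupp.mem_span_image_iff_linearCombination ℝ).1 hj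
  rw [Finsupp.linearCombination_apply, Finsupp.sum_fintype _ _ (by simp)] at hc
  have hc0 : ∀ i, i ∉ Function.support a → c i = 0 := fun i hi =>
    Finsupp.notMem_support_iff.1 fun h => hi (hcsupp h)
  have hℓj : ℓ (w j) = ω ⬝ᵥ c := by
    rw [← hc, map_sum, dotProduct]
    refine Finset.sum_congr rfl fun i _ => ?_
    by_cases hi : i ∈ Function.support a
    · rw [map_smul, hℓ i hi, smul_eq_mul, mul_comm]
    · simp [hc0 i hi]
  have hd : ∑ i, (Pi.single j 1 - ⇑c : ι → ℝ) i • w i = 0 := by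
    simp [sub_smul, hc, Pi.single_apply]
  have hsingle : (0 : ι → ℝ) ≤ Pi.single j 1 := Pi.single_nonneg.2 zero_le_one
  have hev := eventually_add_smul_mem_coneCoords ha hd fun i hi => by
    simpa [hc0 i (by simpa using hi)] using hsingle i
  obtain ⟨t, hmem, ht⟩ := (hev.and self_mem_nhdsWithin).exists
  have hle : 0 ≤ t * (ω j - ω ⬝ᵥ c) := by
    simpa [dotProduct_add, dotProduct_sub] using hmin _ hmem
  rw [hℓj, ← sub_nonneg]
  exact nonneg_of_mul_nonneg_right hle ht

end ConeCoords

section RegularTriangulation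

variable {ι E : Type*} [AddCommGroup E] [Module ℝ E] {w : ι → E} {y : E} {ω : ι → ℝ}

/-- `y` lies on no hyperplane, nor any smaller subspace, spanned by vectors of the family `w`. -/
def IsGenericVector (w : ι → E) (y : E) : Prop :=
  ∀ T : Finset ι, T.card < finrank ℝ E → y ∉ Submodule.span ℝ (w '' T)

/-- No linear functional interpolates the heights `ω` at more than `dim E` vectors of `w`. Lifting
each `w i` to height `ω i`, the lower faces of the lifted cone are then all simplicial. -/
def IsGenericHeight (w : ι → E) (ω : ι → ℝ) : Prop :=
  ∀ (ℓ : Dual ℝ E) (S : Finset ι), (∀ i ∈ S, ℓ (w i) = ω i) → S.card ≤ finrank ℝ E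

/-- The vectors `w i`, `i ∈ B`, form a basis and span a lower facet of the cone lifted by the
heights `ω`. These `B` are the maximal cells of the regular triangulation defined by `ω`. -/
structure IsLowerSimplex (w : ι → E) (ω : ι → ℝ) (B : Finset ι) : Prop where
  linearIndepOn : LinearIndepOn ℝ w B
  card_eq : B.card = finrank ℝ E
  exists_dual : ∃ ℓ : Dual ℝ E, (∀ i ∈ B, ℓ (w i) = ω i) ∧ ∀ i ∉ B, ℓ (w i) < ω i

lemma IsGenericVector.ne_zero (hy : IsGenericVector w y) {B : Finset ι}
    (hB : B.card ≤ finrank ℝ E) {c : B → ℝ} (hc : ∑ i, c i • w i = y) (i : B) : c i ≠ 0 := by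
  classical
  intro hi
  refine hy (B.erase i) ((Finset.card_erase_lt_of_mem i.2).trans_le hB) (hc ▸ ?_)
  refine Submodule.sum_mem _ fun j _ => ?_
  rcases eq_or_ne j i with rfl | hji
  · simp [hi]
  · exact Submodule.smul_mem _ _ <| Submodule.subset_span
      ⟨j, Finset.mem_erase.2 ⟨Subtype.coe_ne_coe.2 hji, j.2⟩, rfl⟩

lemma exists_isGenericHeight [Finite ι] [FiniteDimensional ℝ E] (w : ι → E) :
    ∃ ω, IsGenericHeight w ω := by
  by_contra! hcon
  let evalOn (S : Finset ι) : Dual ℝ E →ₗ[ℝ] (S → ℝ) := LinearMap.pi fun i => Dual.eval ℝ E (w i)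
  let interpolable (S : {S : Finset ι // finrank ℝ E < S.card}) : Submodule ℝ (ι → ℝ) :=
    (evalOn S).range.comap (LinearMap.funLeft ℝ ℝ (Subtype.val : S.1 → ι))
  have hcover : ⋃ S, (interpolable S : Set (ι → ℝ)) = Set.univ := by
    refine Set.eq_univ_of_forall fun ω => ?_
    obtain ⟨ℓ, S, hℓ, hS⟩ : ∃ (ℓ : Dual ℝ E) (S : Finset ι),
        (∀ i ∈ S, ℓ (w i) = ω i) ∧ finrank ℝ E < S.card := by
      simpa [IsGenericHeight] using hcon ω
    exact Set.mem_iUnion.2 ⟨⟨S, hS⟩, ℓ, funext fun i => hℓ i i.2⟩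
  obtain ⟨⟨S, hS⟩, htop⟩ := Subspace.exists_eq_top_of_iUnion_eq_univ hcover
  have hrange : (evalOn S).range = ⊤ := by
    refine Submodule.comap_injective_of_surjective
      (LinearMap.funLeft_surjective_of_injective ℝ ℝ _ Subtype.val_injective) ?_
    rw [Submodule.comap_top]
    exact htop
  have hle := (evalOn S).finrank_range_le
  rw [hrange, finrank_top, finrank_fintype_fun_eq_card, Fintype.card_coe,
    Subspace.dual_finrank_eq] at hle
  exact hS.not_ge hle

lemma span_image_eq_top_of_card_eq_finrank [FiniteDimensional ℝ E] {B : Finset ι}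
    (hli : LinearIndepOn ℝ w B) (hcard : B.card = finrank ℝ E) :
    Submodule.span ℝ (w '' B) = ⊤ := by
  rw [Set.image_eq_range]
  exact hli.span_eq_top_of_card_eq_finrank' (by simpa using hcard)

lemma subset_of_mem_halfOpenCone {B B' : Finset ι} {ℓ ℓ' : Dual ℝ E}
    (hℓB : ∀ i ∈ B, ℓ (w i) = ω i) (hℓ : ∀ i ∉ B, ℓ (w i) < ω i)
    (hℓ' : ∀ i ∈ B', ℓ' (w i) = ω i) (hy : y ∈ halfOpenCone (fun i : B' => w i) Set.univ)
    (hle : ℓ' y ≤ ℓ y) : B' ⊆ B := by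
  obtain ⟨a, -, hpos, rfl⟩ := hy
  by_contra hsub
  obtain ⟨j, hj, hjB⟩ := Finset.not_subset.1 hsub
  refine hle.not_gt ?_
  simp only [map_sum, map_smul, smul_eq_mul]
  refine Finset.sum_lt_sum (fun i _ => ?_) ⟨⟨j, hj⟩, Finset.mem_univ _, ?_⟩
  · refine mul_le_mul_of_nonneg_left ?_ (hpos i trivial).le
    rw [hℓ' i i.2]
    by_cases hi : (i : ι) ∈ B
    exacts [(hℓB i hi).le, (hℓ i hi).le]
  · exact mul_lt_mul_of_pos_left ((hℓ j hjB).trans_eq (hℓ' j hj).symm) (hpos _ trivial)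

lemma IsLowerSimplex.eq_of_mem_halfOpenCone {B B' : Finset ι} (hB : IsLowerSimplex w ω B)
    (hB' : IsLowerSimplex w ω B') (hy : y ∈ halfOpenCone (fun i : B => w i) Set.univ)
    (hy' : y ∈ halfOpenCone (fun i : B' => w i) Set.univ) : B = B' := by
  obtain ⟨ℓ, hℓB, hℓ⟩ := hB.exists_dual
  obtain ⟨ℓ', hℓB', hℓ'⟩ := hB'.exists_dual
  rcases le_total (ℓ y) (ℓ' y) with hle | hle
  · exact Finset.eq_of_subset_of_card_le (subset_of_mem_halfOpenCone hℓB' hℓ' hℓB hy hle)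
      (hB'.card_eq.trans hB.card_eq.symm).le
  · exact (Finset.eq_of_subset_of_card_le (subset_of_mem_halfOpenCone hℓB hℓ hℓB' hy' hle)
      (hB.card_eq.trans hB'.card_eq.symm).le).symm

lemma IsGenericVector.card_eq_finrank [FiniteDimensional ℝ E] (hy : IsGenericVector w y)
    {B : Finset ι} (hli : LinearIndepOn ℝ w B) (hmem : y ∈ Submodule.span ℝ (w '' B)) :
    B.card = finrank ℝ E :=
  le_antisymm (by simpa using hli.fintype_card_le_finrank) (not_lt.1 fun h => hy B h hmem)

lemma exists_dual_apply_eq_of_linearIndependent (hli : LinearIndependent ℝ w) (ω : ι → ℝ) :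
    ∃ ℓ : Dual ℝ E, ∀ i, ℓ (w i) = ω i := by
  obtain ⟨ℓ, hℓ⟩ := LinearMap.exists_extend ((Basis.span hli).constr ℝ ω)
  refine ⟨ℓ, fun i => ?_⟩
  have hi := LinearMap.congr_fun hℓ (Basis.span hli i)
  rwa [Basis.constr_basis, LinearMap.comp_apply, Submodule.subtype_apply, Basis.span_apply] at hi

lemma IsGenericHeight.isLowerSimplex {B : Finset ι}
    (hω : IsGenericHeight w ω) (hli : LinearIndepOn ℝ w B) (hcard : B.card = finrank ℝ E)
    (ℓ : Dual ℝ E) (hℓB : ∀ i ∈ B, ℓ (w i) = ω i) (hℓ : ∀ i, ℓ (w i) ≤ ω i) :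
    IsLowerSimplex w ω B := by
  classical
  refine ⟨hli, hcard, ℓ, hℓB, fun j hj => (hℓ j).lt_of_ne fun heq => ?_⟩
  have hle := hω ℓ (insert j B) (by simpa [heq] using hℓB)
  rw [Finset.card_insert_of_notMem hj] at hle
  lia

lemma exists_isLowerSimplex_mem_halfOpenCone [Fintype ι] [FiniteDimensional ℝ E] (φ : Dual ℝ E)
    (hφ : ∀ i, φ (w i) = 1) (hω : IsGenericHeight w ω) (hy : IsGenericVector w y)
    (hmem : y ∈ halfOpenCone w ∅) :
    ∃ B, IsLowerSimplex w ω B ∧ y ∈ halfOpenCone (fun i : B => w i) Set.univ := by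
  classical
  obtain ⟨b, hb, -, hby⟩ := hmem
  obtain ⟨a, hext, hmin⟩ := exists_mem_extremePoints_forall_le (isCompact_coneCoords φ hφ y)
    ⟨b, hb, hby⟩ (LinearMap.toContinuousLinearMap (dotProductBilin ℝ ℝ ω))
  let B : Finset ι := {i | a i ≠ 0}
  have hBsupp : (B : Set ι) = Function.support a := by ext; simp [B]
  have hli : LinearIndepOn ℝ w B := hBsupp ▸ linearIndepOn_support_of_mem_extremePoints hext
  have hsum : ∑ i : B, a i • w i = y := by
    rw [Finset.sum_coe_sort B fun i => a i • w i, Finset.sum_filter_of_ne, hext.1.2]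
    exact fun i _ => left_ne_zero_of_smul
  have hcard : B.card = finrank ℝ E := hy.card_eq_finrank hli <|
    Submodule.mem_span_image_finset_iff_exists_fun ℝ |>.2 ⟨fun i => a i, hsum⟩
  obtain ⟨ℓ, hℓ⟩ := exists_dual_apply_eq_of_linearIndependent hli fun i => ω i
  have hℓle : ∀ j, ℓ (w j) ≤ ω j := fun j =>
    dual_apply_le_of_forall_dotProduct_le hext.1 hmin ℓ
      (fun i hi => hℓ ⟨i, hBsupp.ge hi⟩) <| by
        simp [← hBsupp, span_image_eq_top_of_card_eq_finrank hli hcard]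
  refine ⟨B, hω.isLowerSimplex hli hcard ℓ (fun i hi => hℓ ⟨i, hi⟩) hℓle,
    fun i => a i, fun i => hext.1.1 i, fun i _ => ?_, hsum⟩
  exact (hext.1.1 i).lt_of_ne' (Finset.mem_filter.1 i.2).2

end RegularTriangulation

section LatticeCount

open Matrix

lemma exists_int_add_mem_Icc {κ : Type*} (b : κ → ℝ) (s : Set κ) :
    ∃ z : κ → ℤ, ∀ i, b i + z i ∈ Set.Icc 0 1 ∧ (i ∈ s → 0 < b i + z i) ∧
      (i ∉ s → b i + z i < 1) := by
  classical
  refine ⟨fun i => -if i ∈ s then toIocDiv one_pos 0 (b i) else toIcoDiv one_pos 0 (b i),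
    fun i => ?_⟩
  rw [Int.cast_neg, ← sub_eq_add_neg]
  by_cases hi : i ∈ s
  · have hmem := sub_toIocDiv_zsmul_mem_Ioc one_pos 0 (b i)
    rw [zsmul_one, zero_add] at hmem
    rw [if_pos hi]
    exact ⟨Set.Ioc_subset_Icc_self hmem, fun _ => hmem.1, absurd hi⟩
  · have hmem := sub_toIcoDiv_zsmul_mem_Ico one_pos 0 (b i)
    rw [zsmul_one, zero_add] at hmem
    rw [if_neg hi]
    exact ⟨Set.Ico_subset_Icc_self hmem, fun h => absurd h hi, fun _ => hmem.2⟩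

variable {κ : Type*} [Fintype κ]

lemma exists_int_add_nonneg_sum_eq {b : κ → ℝ} {N : ℤ} (hb : ∑ i, b i = N) {s : Set κ}
    (hs : s ≠ Set.univ) :
    ∃ z : κ → ℤ, (∀ i, 0 ≤ b i + z i) ∧ (∀ i ∈ s, 0 < b i + z i) ∧
      N + ∑ i, z i = Fintype.card κ - 1 := by
  classical
  obtain ⟨i₀, hi₀⟩ := (Set.ne_univ_iff_exists_notMem s).1 hs
  obtain ⟨z, hz⟩ := exists_int_add_mem_Icc b s
  have hlt : (N : ℝ) + ∑ i, (z i : ℝ) < Fintype.card κ :=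
    calc (N : ℝ) + ∑ i, (z i : ℝ) = ∑ i, (b i + z i) := by rw [Finset.sum_add_distrib, hb]
      _ < ∑ _i : κ, (1 : ℝ) := Finset.sum_lt_sum (fun i _ => (hz i).1.2)
          ⟨i₀, Finset.mem_univ _, (hz i₀).2.2 hi₀⟩
      _ = Fintype.card κ := by simp
  have hdefect : 0 ≤ Fintype.card κ - 1 - (N + ∑ i, z i) := by
    have : N + ∑ i, z i < Fintype.card κ := by exact_mod_cast hlt
    lia
  have hle : z ≤ z + Pi.single i₀ (Fintype.card κ - 1 - (N + ∑ i, z i)) :=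
    le_add_of_nonneg_right (Pi.single_nonneg.2 hdefect)
  have hadd (i : κ) := add_le_add_right (Int.cast_le (R := ℝ).2 (hle i)) (b i)
  refine ⟨_, fun i => (hz i).1.1.trans (hadd i), fun i hi => ((hz i).2.1 hi).trans_le (hadd i), ?_⟩
  simp only [Pi.add_apply, Finset.sum_add_distrib, Finset.sum_pi_single', Finset.mem_univ, if_true]
  ring

lemma intCast_add_vecMul (y z : κ → ℤ) (W : Matrix κ κ ℤ) :
    (fun j => ((y + z ᵥ* W) j : ℝ)) =
      (fun j => (y j : ℝ)) + ∑ i, (z i : ℝ) • fun j => (W i j : ℝ) := by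
  ext j
  simp [vecMul, dotProduct]

lemma sum_eq_intCast_dotProduct {W : Matrix κ κ ℤ} {h : κ → ℤ} (hh : W *ᵥ h = 1) {b : κ → ℝ}
    {y : κ → ℤ} (hb : ∑ i, b i • (fun j => (W i j : ℝ)) = fun j => (y j : ℝ)) :
    ∑ i, b i = (y ⬝ᵥ h : ℤ) := by
  have hrow (i : κ) : (fun j => (W i j : ℝ)) ⬝ᵥ (fun j => (h j : ℝ)) = 1 := by
    simpa [mulVec, dotProduct] using congrArg (Int.cast (R := ℝ)) (congrFun hh i)
  calc ∑ i, b i = (∑ i, b i • (fun j => (W i j : ℝ))) ⬝ᵥ fun j => (h j : ℝ) := by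
        simp only [sum_dotProduct, smul_dotProduct, hrow, smul_eq_mul, mul_one]
    _ = (y ⬝ᵥ h : ℤ) := by rw [hb]; simp [dotProduct]

lemma mk_add_vecMul (W : Matrix κ κ ℤ) (y z : κ → ℤ) :
    (Submodule.Quotient.mk (y + z ᵥ* W) : (κ → ℤ) ⧸ Submodule.span ℤ (Set.range W.row)) =
      Submodule.Quotient.mk y := by
  rw [Submodule.Quotient.eq, add_sub_cancel_left, ← range_vecMulLinear]
  exact ⟨z, rfl⟩

variable [DecidableEq κ] {W : Matrix κ κ ℤ}

lemma natCard_quotient_span_row (hdet : W.det ≠ 0) :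
    Nat.card ((κ → ℤ) ⧸ Submodule.span ℤ (Set.range W.row)) = W.det.natAbs := by
  have hli : LinearIndependent ℤ W.row := linearIndependent_rows_of_det_ne_zero hdet
  rw [← Submodule.natAbs_det_basis_change (Pi.basisFun ℤ κ) _ (Basis.span hli), Pi.basisFun_det]
  congr 2
  ext i j
  simp [Basis.span_apply]

lemma exists_sum_smul_row_eq (hdet : W.det ≠ 0) (y : κ → ℝ) :
    ∃ b : κ → ℝ, ∑ i, b i • (fun j => (W i j : ℝ)) = y := by
  have hunit : IsUnit (W.map (Int.cast : ℤ → ℝ)) := by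
    rw [isUnit_iff_isUnit_det, isUnit_iff_ne_zero, ← Int.cast_det]
    exact_mod_cast hdet
  obtain ⟨b, hb⟩ := vecMul_surjective_iff_isUnit.2 hunit y
  exact ⟨b, by rw [← hb]; exact (vecMul_eq_sum _ _).symm⟩

lemma exists_mk_eq_mem_halfOpenCone (hdet : W.det ≠ 0) {h : κ → ℤ} (hh : W *ᵥ h = 1)
    {s : Set κ} (hs : s ≠ Set.univ) (q : (κ → ℤ) ⧸ Submodule.span ℤ (Set.range W.row)) :
    ∃ x : κ → ℤ, Submodule.Quotient.mk x = q ∧ x ⬝ᵥ h = Fintype.card κ - 1 ∧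
      (fun j => (x j : ℝ)) ∈ halfOpenCone (fun i j => (W i j : ℝ)) s := by
  obtain ⟨y, rfl⟩ := Submodule.Quotient.mk_surjective _ q
  obtain ⟨b, hb⟩ := exists_sum_smul_row_eq hdet fun j => (y j : ℝ)
  obtain ⟨z, hz, hzs, hzsum⟩ := exists_int_add_nonneg_sum_eq (sum_eq_intCast_dotProduct hh hb) hs
  refine ⟨y + z ᵥ* W, mk_add_vecMul W y z, ?_, fun i => b i + z i, hz, hzs, ?_⟩
  · rw [add_dotProduct, ← dotProduct_mulVec, hh, dotProduct_one, hzsum]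
  · rw [intCast_add_vecMul, ← hb]
    simp only [add_smul, Finset.sum_add_distrib]

lemma injective_add_natCast_vecMul (hdet : W.det ≠ 0)
    {X : (κ → ℤ) ⧸ Submodule.span ℤ (Set.range W.row) → κ → ℤ}
    (hX : ∀ q, Submodule.Quotient.mk (X q) = q) :
    Function.Injective fun p : ((κ → ℤ) ⧸ Submodule.span ℤ (Set.range W.row)) × (κ →₀ ℕ) =>
      X p.1 + (fun i => (p.2 i : ℤ)) ᵥ* W := by
  rintro ⟨q, n⟩ ⟨q', n'⟩ heq
  obtain rfl : q = q' := by
    rw [← hX q, ← hX q', ← mk_add_vecMul W _ fun i => (n i : ℤ),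
      ← mk_add_vecMul W (X q') fun i => (n' i : ℤ)]
    exact congrArg Submodule.Quotient.mk heq
  have hvec := vecMul_injective_iff.2 (linearIndependent_rows_of_det_ne_zero hdet)
    (add_left_cancel heq)
  have hn : n = n' := by
    ext i
    exact_mod_cast congrFun hvec i
  rw [hn]

lemma exists_finset_card_ge_forall_mem_halfOpenCone {n : ℕ} (hκ : Fintype.card κ = n + 1)
    (W : Matrix κ κ ℤ) {h : κ → ℤ} (hh : W *ᵥ h = 1) {s : Set κ} (hs : s ≠ Set.univ) (k : ℕ) :
    ∃ F : Finset (κ → ℤ), k.choose n * W.det.natAbs ≤ F.card ∧ ∀ y ∈ F, y ⬝ᵥ h = k ∧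
      (fun j => (y j : ℝ)) ∈ halfOpenCone (fun i j => (W i j : ℝ)) s := by
  rcases eq_or_ne W.det 0 with hdet | hdet
  · exact ⟨∅, by simp [hdet]⟩
  rcases lt_or_ge k n with hk | hk
  · exact ⟨∅, by simp [Nat.choose_eq_zero_of_lt hk]⟩
  have hcard := natCard_quotient_span_row hdet
  have : Finite ((κ → ℤ) ⧸ Submodule.span ℤ (Set.range W.row)) :=
    Nat.finite_of_card_ne_zero (by simpa [hcard] using hdet)
  have := Fintype.ofFinite ((κ → ℤ) ⧸ Submodule.span ℤ (Set.range W.row))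
  choose X hX hXh hXmem using exists_mk_eq_mem_halfOpenCone hdet hh hs
  refine ⟨(Finset.univ ×ˢ Finset.univ.finsuppAntidiag (k - n)).map
    ⟨_, injective_add_natCast_vecMul hdet hX⟩, ?_, ?_⟩
  · rw [Finset.card_map, Finset.card_product, Finset.card_univ, ← Nat.card_eq_fintype_card, hcard,
      Finset.card_finsuppAntidiag_nat_eq_choose, Finset.card_univ, hκ,
      show n + 1 + (k - n) - 1 = k by lia, Nat.choose_symm hk, mul_comm]
  · simp only [Finset.forall_mem_map]
    rintro ⟨q, c⟩ hc
    have hcsum : ∑ i, c i = k - n :=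
      (Finset.mem_finsuppAntidiag.1 (Finset.mem_product.1 hc).2).1
    constructor
    · change (X q + (fun i => (c i : ℤ)) ᵥ* W) ⬝ᵥ h = k
      rw [add_dotProduct, ← dotProduct_mulVec, hh, dotProduct_one, hXh, hκ, ← Nat.cast_sum, hcsum]
      lia
    · change (fun j => ((X q + (fun i => (c i : ℤ)) ᵥ* W) j : ℝ)) ∈ _
      rw [intCast_add_vecMul]
      exact add_sum_smul_mem_halfOpenCone (hXmem q) fun i => by simp

end LatticeCount

section SimplexVolume

open Matrix

variable {ι : Type*} [Fintype ι]

/-- The open simplex spanned by the origin and the standard basis vectors. -/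
def openCornerSimplex (ι : Type*) [Fintype ι] : Set (ι → ℝ) :=
  {b | (∀ i, 0 < b i) ∧ ∑ i, b i < 1}

lemma isOpen_openCornerSimplex : IsOpen (openCornerSimplex ι) := by
  simp only [openCornerSimplex, Set.ofPred_and, Set.ofPred_forall]
  exact (isOpen_iInter_of_finite fun i => isOpen_lt continuous_const (continuous_apply i)).inter
    (isOpen_lt (by fun_prop) continuous_const)

lemma volume_preserving_pi_units_smul (s : ι → ℤˣ) :
    MeasurePreserving fun (x : ι → ℝ) i => s i • x i := by
  refine volume_preserving_pi (f := fun i (x : ℝ) => s i • x) fun i => ?_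
  rcases Int.units_eq_one_or (s i) with h | h
  · simpa [h] using! MeasurePreserving.id (volume : Measure ℝ)
  · simpa [h, Units.smul_def] using Measure.measurePreserving_neg (volume : Measure ℝ)

lemma abs_eq_units_smul_of_pos {s : ℤˣ} {x : ℝ} (h : 0 < s • x) : |x| = s • x := by
  rcases Int.units_eq_one_or s with rfl | rfl
  · simpa using le_of_lt h
  · simpa [Units.smul_def] using le_of_lt h

lemma two_pow_mul_volume_openCornerSimplex_le :
    2 ^ Fintype.card ι * volume (openCornerSimplex ι) ≤
      volume {x : ι → ℝ | ∑ i, |x i| ^ (1 : ℝ) < 1} := by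
  classical
  let reflect (s : ι → ℤˣ) (x : ι → ℝ) : ι → ℝ := fun i => s i • x i
  have hmeas := (isOpen_openCornerSimplex (ι := ι)).measurableSet
  have habs {s x} (hx : x ∈ reflect s ⁻¹' openCornerSimplex ι) (i : ι) : |x i| = s i • x i :=
    abs_eq_units_smul_of_pos (hx.1 i)
  have hdisj : Pairwise (Function.onFun Disjoint fun s => reflect s ⁻¹' openCornerSimplex ι) := by
    refine fun s t hst => Set.disjoint_left.2 fun x hs ht => hst (funext fun i => ?_)
    have hne : x i ≠ 0 := fun h0 => (hs.1 i).ne' (by simp [reflect, h0])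
    have heq : ((s i : ℤ) : ℝ) * x i = (t i : ℤ) * x i := by
      simpa [Units.smul_def] using (habs hs i).symm.trans (habs ht i)
    exact Units.ext (Int.cast_injective (mul_right_cancel₀ hne heq))
  calc 2 ^ Fintype.card ι * volume (openCornerSimplex ι)
      = ∑ s : ι → ℤˣ, volume (reflect s ⁻¹' openCornerSimplex ι) := by
        simp [reflect, (volume_preserving_pi_units_smul _).measure_preimage hmeas.nullMeasurableSet]
    _ = volume (⋃ s, reflect s ⁻¹' openCornerSimplex ι) := by
        rw [measure_iUnion hdisj fun s => (volume_preserving_pi_units_smul s).measurable hmeas,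
          tsum_fintype]
    _ ≤ _ := by
        refine measure_mono (Set.iUnion_subset fun s x hx => ?_)
        simpa only [Set.mem_ofPred_eq, Real.rpow_one, habs hx] using hx.2

lemma factorial_mul_volume_openCornerSimplex_le :
    ((Fintype.card ι).factorial : ENNReal) * volume (openCornerSimplex ι) ≤ 1 := by
  set n := Fintype.card ι with hn
  have hball : volume {x : ι → ℝ | ∑ i, |x i| ^ (1 : ℝ) < 1} = 2 ^ n / n.factorial := by
    rw [volume_sum_rpow_lt_one _ le_rfl]
    simp [Real.Gamma_nat_eq_factorial, one_add_one_eq_two, ← hn,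
      ENNReal.ofReal_div_of_pos, n.factorial_pos, ENNReal.ofReal_pow]
  refine (ENNReal.mul_le_mul_iff_right (a := 2 ^ n) (by simp) (by simp)).1 ?_
  calc (2 : ENNReal) ^ n * (n.factorial * volume (openCornerSimplex ι))
      = n.factorial * (2 ^ n * volume (openCornerSimplex ι)) := by ring
    _ ≤ n.factorial * (2 ^ n / n.factorial) := by
        gcongr
        exact two_pow_mul_volume_openCornerSimplex_le.trans hball.le
    _ ≤ 2 ^ n * 1 := by rw [mul_one]; exact ENNReal.mul_div_le

variable {m : ℕ}

lemma det_vecCons_one {R : Type*} [CommRing R] (u : Fin (m + 1) → Fin m → R) :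
    (of fun i => vecCons 1 (u i)).det = (of fun i : Fin m => u i.succ - u 0).det := by
  let A : Matrix (Fin (m + 1)) (Fin (m + 1)) R :=
    of (vecCons (vecCons 1 (u 0)) fun i => vecCons 0 (u i.succ - u 0))
  have hA : (of fun i => vecCons 1 (u i)).det = A.det := by
    refine det_eq_of_forall_row_eq_smul_add_const (vecCons 0 1) 0 rfl fun i j => ?_
    refine Fin.cases ?_ (fun i => ?_) i <;> refine Fin.cases ?_ (fun j => ?_) j <;> simp [A]
  have hcorner : A 0 0 = 1 := rfl
  have hcolumn (i : Fin m) : A i.succ 0 = 0 := rfl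
  have hminor : A.submatrix Fin.succ Fin.succ = of fun i : Fin m => u i.succ - u 0 := rfl
  rw [hA, det_succ_column_zero, Fin.sum_univ_succ]
  simp [hcorner, hcolumn, hminor]

lemma preimage_vecCons_one_halfOpenCone_subset (u : Fin (m + 1) → Fin m → ℝ) :
    vecCons 1 ⁻¹' halfOpenCone (fun i => vecCons 1 (u i)) Set.univ ⊆
      (u 0 + ·) '' ((of fun i : Fin m => u i.succ - u 0)ᵀ.toLin' '' openCornerSimplex (Fin m)) := by
  rintro x ⟨a, -, hpos, hx⟩
  have hsum : a 0 + ∑ i : Fin m, a i.succ = 1 := by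
    simpa [Fin.sum_univ_succ] using congrFun hx 0
  have hcoord (j : Fin m) : a 0 * u 0 j + ∑ i : Fin m, a i.succ * u i.succ j = x j := by
    simpa [Fin.sum_univ_succ] using congrFun hx j.succ
  refine ⟨_, ⟨fun i => a i.succ, ⟨fun i => hpos _ trivial, ?_⟩, rfl⟩, ?_⟩
  · linarith [hpos 0 trivial]
  · ext j
    simp only [toLin'_apply, mulVec_transpose, vecMul, dotProduct, of_apply, Pi.add_apply,
      Pi.sub_apply, mul_sub, Finset.sum_sub_distrib, ← Finset.sum_mul]
    linear_combination hcoord j - u 0 j * hsum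

lemma factorial_mul_volume_preimage_vecCons_one_halfOpenCone_le (u : Fin (m + 1) → Fin m → ℝ) :
    (m.factorial : ENNReal) *
        volume (vecCons 1 ⁻¹' halfOpenCone (fun i => vecCons 1 (u i)) Set.univ) ≤
      ENNReal.ofReal |(of fun i => vecCons 1 (u i)).det| := by
  rw [det_vecCons_one]
  set M : Matrix (Fin m) (Fin m) ℝ := of fun i : Fin m => u i.succ - u 0
  calc (m.factorial : ENNReal) *
          volume (vecCons 1 ⁻¹' halfOpenCone (fun i => vecCons 1 (u i)) Set.univ)
      ≤ m.factorial * volume (Mᵀ.toLin' '' openCornerSimplex (Fin m)) := by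
        refine mul_le_mul_right ?_ _
        refine (measure_mono (μ := volume) (preimage_vecCons_one_halfOpenCone_subset u)).trans_eq ?_
        rw [Set.image_add_left, measure_preimage_add]
    _ = ENNReal.ofReal |M.det| * (m.factorial * volume (openCornerSimplex (Fin m))) := by
        rw [Measure.addHaar_image_linearMap, LinearMap.det_toLin', det_transpose, mul_left_comm]
    _ ≤ ENNReal.ofReal |M.det| := by
        simpa using mul_le_mul_right (factorial_mul_volume_openCornerSimplex_le (ι := Fin m)) _

end SimplexVolume

lemma volume_preimage_vecCons_one_submodule_eq_zero {m : ℕ} {p : Submodule ℝ (Fin (m + 1) → ℝ)}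
    (hp : p ≠ ⊤) : volume (Matrix.vecCons 1 ⁻¹' (p : Set (Fin (m + 1) → ℝ))) = 0 := by
  let cons : (Fin m → ℝ) →ᵃ[ℝ] (Fin (m + 1) → ℝ) :=
    (LinearMap.vecCons 0 LinearMap.id).toAffineMap +
      AffineMap.const ℝ _ (Pi.single 0 1 : Fin (m + 1) → ℝ)
  have hcons (x : Fin m → ℝ) : cons x = Matrix.vecCons 1 x := by
    ext j
    refine Fin.cases ?_ (fun j => ?_) j <;> simp [cons]
  let A : AffineSubspace ℝ (Fin m → ℝ) := p.toAffineSubspace.comap cons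
  have hA : (A : Set (Fin m → ℝ)) = Matrix.vecCons 1 ⁻¹' p := by
    ext x
    simp [A, hcons]
  rw [← hA]
  refine Measure.addHaar_affineSubspace _ _ fun htop => hp ?_
  have hmem (x : Fin m → ℝ) : Matrix.vecCons 1 x ∈ p := by
    have hx : x ∈ (A : Set (Fin m → ℝ)) := htop ▸ trivial
    rwa [hA] at hx
  refine Submodule.eq_top_iff'.2 fun y => ?_
  convert p.add_mem (p.smul_mem (Matrix.vecHead y - 1) (hmem 0)) (hmem (Matrix.vecTail y))
  ext j
  refine Fin.cases ?_ (fun j => ?_) j <;> simp [Matrix.vecHead, Matrix.vecTail]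

lemma ae_isGenericVector_vecCons_one {m : ℕ} {κ : Type*} [Countable κ]
    (w : κ → Fin (m + 1) → ℝ) :
    ∀ᵐ x : Fin m → ℝ, IsGenericVector w (Matrix.vecCons 1 x) := by
  classical
  simp only [IsGenericVector, ae_all_iff]
  intro T hT
  have hspan : Submodule.span ℝ (w '' T) ≠ ⊤ := by
    intro htop
    have hle := finrank_span_finset_le_card (R := ℝ) (T.image w)
    rw [Set.finrank, Finset.coe_image, htop, finrank_top] at hle
    exact (hle.trans Finset.card_image_le).not_gt hT
  simpa [ae_iff] using! volume_preimage_vecCons_one_submodule_eq_zero hspan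

lemma convexHull_range_eq_linearCombination_image_stdSimplex {ι E : Type*} [Fintype ι]
    [AddCommGroup E] [Module ℝ E] (z : ι → E) :
    convexHull ℝ (Set.range z) = Fintype.linearCombination ℝ z '' stdSimplex ℝ ι := by
  classical
  rw [← convexHull_rangle_single_eq_stdSimplex, LinearMap.image_convexHull, ← Set.range_comp]
  congr
  ext i
  simp [Fintype.linearCombination_apply, Pi.single_apply]

section LatticePolytope

open Matrix

variable {m : ℕ} {ι : Type*} [Fintype ι]

/-- The lattice points `v i` placed at height one. The height is coordinate `0`, so the slice at
height `k` of the cone over `homogenize v` is the `k`-th dilate of the polytope spanned by `v`. -/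
def homogenize {ι : Type*} (v : ι → Fin m → ℤ) (i : ι) : Fin (m + 1) → ℝ :=
  vecCons 1 fun j => (v i j : ℝ)

lemma sum_smul_homogenize_eq_vecCons_iff {v : ι → Fin m → ℤ} {a : ι → ℝ} {r : ℝ}
    {x : Fin m → ℝ} :
    ∑ i, a i • homogenize v i = vecCons r x ↔
      ∑ i, a i = r ∧ ∑ i, a i • (fun j => (v i j : ℝ)) = x := by
  simp only [funext_iff, Fin.forall_fin_succ, homogenize, Finset.sum_apply, Pi.smul_apply,
    smul_eq_mul, cons_val_zero, cons_val_succ, mul_one]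

lemma vecCons_one_mem_halfOpenCone_of_mem_convexHull {v : ι → Fin m → ℤ} {x : Fin m → ℝ}
    (hx : x ∈ convexHull ℝ (Set.range fun i j => (v i j : ℝ))) :
    vecCons 1 x ∈ halfOpenCone (homogenize v) ∅ := by
  rw [convexHull_range_eq_linearCombination_image_stdSimplex] at hx
  obtain ⟨a, ⟨ha, hsum⟩, hx⟩ := hx
  exact ⟨a, ha, by simp, sum_smul_homogenize_eq_vecCons_iff.2 ⟨hsum, hx⟩⟩

lemma mem_smul_convexHull_of_vecCons_mem_halfOpenCone {v : ι → Fin m → ℤ} {r : ℝ} (hr : 0 < r)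
    {x : Fin m → ℝ} (hx : vecCons r x ∈ halfOpenCone (homogenize v) ∅) :
    x ∈ r • convexHull ℝ (Set.range fun i j => (v i j : ℝ)) := by
  obtain ⟨a, ha, -, hx⟩ := hx
  obtain ⟨hsum, rfl⟩ := sum_smul_homogenize_eq_vecCons_iff.1 hx
  rw [Set.mem_smul_set_iff_inv_smul_mem₀ hr.ne', ← hsum]
  exact Finset.centerMass_mem_convexHull _ (fun i _ => ha i) (hsum ▸ hr) fun i _ => ⟨i, rfl⟩

lemma exists_finset_card_ge_vecCons_mem_halfOpenCone (u : Fin (m + 1) → Fin m → ℤ)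
    {s : Set (Fin (m + 1))} (hs : s ≠ Set.univ) (k : ℕ) :
    ∃ F : Finset (Fin m → ℤ),
      k.choose m * (m.factorial * volume (vecCons 1 ⁻¹' halfOpenCone (homogenize u) Set.univ)) ≤
        F.card ∧
      ∀ x ∈ F, vecCons (k : ℝ) (fun j => (x j : ℝ)) ∈ halfOpenCone (homogenize u) s := by
  let W : Matrix (Fin (m + 1)) (Fin (m + 1)) ℤ := of fun i => vecCons 1 (u i)
  have hW : (fun i j => (W i j : ℝ)) = homogenize u := by
    ext i j
    refine Fin.cases ?_ (fun j => ?_) j <;> simp [W, homogenize]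
  obtain ⟨F, hcard, hF⟩ := exists_finset_card_ge_forall_mem_halfOpenCone (Fintype.card_fin _) W
    (h := Pi.single 0 1) (by ext i; simp [W]) hs k
  have hhead : ∀ y ∈ F, y 0 = k := fun y hy => by simpa using (hF y hy).1
  have hcons {y : Fin (m + 1) → ℤ} (hy : y ∈ F) :
      vecCons (k : ℝ) (fun j => ((vecTail y j : ℤ) : ℝ)) = (fun j => (y j : ℝ)) := by
    ext j
    refine Fin.cases ?_ (fun j => ?_) j <;> simp [hhead y hy, vecTail]
  refine ⟨F.image vecTail, ?_, ?_⟩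
  · have hvol := factorial_mul_volume_preimage_vecCons_one_halfOpenCone_le fun i j => (u i j : ℝ)
    have hdet : ENNReal.ofReal |(of (homogenize u)).det| = W.det.natAbs := by
      rw [← hW, ← ENNReal.ofReal_natCast, Nat.cast_natAbs, Int.cast_abs, Int.cast_det]
      rfl
    rw [Finset.card_image_of_injOn fun y hy y' hy' htail => ?_]
    · calc _ ≤ (k.choose m : ENNReal) * W.det.natAbs := mul_le_mul_right (hvol.trans_eq hdet) _
        _ ≤ F.card := by exact_mod_cast hcard
    · rw [← cons_head_tail y, ← cons_head_tail y', htail]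
      congr 1
      exact (hhead y hy).trans (hhead y' hy').symm
  · simp only [Finset.forall_mem_image]
    intro y hy
    rw [hcons hy, ← hW]
    exact (hF y hy).2

lemma exists_finset_card_ge_vecCons_mem_halfOpenCone_of_card_eq {u : ι → Fin m → ℤ}
    (hι : Fintype.card ι = m + 1) {s : Set ι} (hs : s ≠ Set.univ) (k : ℕ) :
    ∃ F : Finset (Fin m → ℤ),
      k.choose m * (m.factorial * volume (vecCons 1 ⁻¹' halfOpenCone (homogenize u) Set.univ)) ≤
        F.card ∧
      ∀ x ∈ F, vecCons (k : ℝ) (fun j => (x j : ℝ)) ∈ halfOpenCone (homogenize u) s := by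
  let e : Fin (m + 1) ≃ ι := (Fintype.equivFinOfCardEq hι).symm
  have hcone (t : Set ι) :
      halfOpenCone (homogenize (u ∘ e)) (e ⁻¹' t) = halfOpenCone (homogenize u) t :=
    halfOpenCone_comp_equiv (homogenize u) t e
  have hs' : e ⁻¹' s ≠ Set.univ := fun h => hs <| by
    simpa using congrArg (e '' ·) h
  simpa only [← hcone, Set.preimage_univ] using
    exists_finset_card_ge_vecCons_mem_halfOpenCone (u ∘ e) hs' k

lemma IsLowerSimplex.exists_finset_eventually_vecCons_mem_halfOpenCone {κ : Type*}
    {v : κ → Fin m → ℤ} {ω : κ → ℝ} {B : Finset κ}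
    (hB : IsLowerSimplex (homogenize v) ω B) {g : Fin m → ℝ}
    (hg : IsGenericVector (homogenize v) (vecCons 1 g)) (k : ℕ) :
    ∃ F : Finset (Fin m → ℤ),
      k.choose m * (m.factorial *
        volume (vecCons 1 ⁻¹' halfOpenCone (fun i : B => homogenize v i) Set.univ)) ≤ F.card ∧
      ∀ x ∈ F, vecCons (k : ℝ) (fun j => (x j : ℝ)) ∈
          halfOpenCone (fun i : B => homogenize v i) ∅ ∧
        ∀ᶠ t : ℝ in 𝓝[>] 0, vecCons (k : ℝ) (fun j => (x j : ℝ)) + t • vecCons 1 g ∈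
          halfOpenCone (fun i : B => homogenize v i) Set.univ := by
  have hcard : B.card = m + 1 := by simpa using hB.card_eq
  have hspan : vecCons 1 g ∈ Submodule.span ℝ (homogenize v '' B) := by
    rw [span_image_eq_top_of_card_eq_finrank hB.linearIndepOn hB.card_eq]
    trivial
  obtain ⟨c, hc⟩ := Submodule.mem_span_image_finset_iff_exists_fun ℝ |>.1 hspan
  have hc0 (i : B) : c i ≠ 0 := hg.ne_zero hB.card_eq.le hc i
  have hsum : ∑ i, c i = 1 :=
    (sum_smul_homogenize_eq_vecCons_iff (v := fun i : B => v i).1 hc).1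
  have hs : {i | c i < 0} ≠ Set.univ := fun huniv => by
    have hneg (i : B) : c i < 0 := huniv.ge trivial
    linarith [Finset.sum_nonpos fun i (_ : i ∈ Finset.univ) => (hneg i).le]
  obtain ⟨F, hF, hmem⟩ := exists_finset_card_ge_vecCons_mem_halfOpenCone_of_card_eq
    (u := fun i : B => v i) (by simpa using hcard) hs k
  refine ⟨F, hF, fun x hx => ⟨halfOpenCone_anti _ (Set.empty_subset _) (hmem x hx), ?_⟩⟩
  rw [← hc]
  exact eventually_add_smul_mem_halfOpenCone_univ (hmem x hx) fun i hi =>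
    (not_lt.1 hi).lt_of_ne' (hc0 i)

open scoped Classical in
lemma volume_convexHull_le_sum_isLowerSimplex (v : ι → Fin m → ℤ) {ω : ι → ℝ}
    (hω : IsGenericHeight (homogenize v) ω) :
    volume (convexHull ℝ (Set.range fun i j => (v i j : ℝ))) ≤
      ∑ B with IsLowerSimplex (homogenize v) ω B,
        volume (vecCons 1 ⁻¹' halfOpenCone (fun i : B => homogenize v i) Set.univ) := by
  refine (measure_mono_ae ?_).trans (measure_biUnion_finset_le _ _)
  filter_upwards [ae_isGenericVector_vecCons_one (homogenize v)] with x hgen hx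
  obtain ⟨B, hB, hxB⟩ := exists_isLowerSimplex_mem_halfOpenCone (LinearMap.proj 0)
    (fun _ => by simp [homogenize]) hω hgen (vecCons_one_mem_halfOpenCone_of_mem_convexHull hx)
  exact Set.mem_biUnion (by simpa using hB) hxB

lemma exists_finset_eventually_vecCons_mem_halfOpenCone (v : ι → Fin m → ℤ) {g : Fin m → ℝ}
    (hg : IsGenericVector (homogenize v) (vecCons 1 g)) (k : ℕ) :
    ∃ F : Finset (Fin m → ℤ),
      k.choose m * (m.factorial * volume (convexHull ℝ (Set.range fun i j => (v i j : ℝ)))) ≤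
        F.card ∧
      ∀ x ∈ F, vecCons (k : ℝ) (fun j => (x j : ℝ)) ∈ halfOpenCone (homogenize v) ∅ ∧
        ∀ᶠ t : ℝ in 𝓝[>] 0, vecCons (k : ℝ) (fun j => (x j : ℝ)) + t • vecCons 1 g ∈
          halfOpenCone (homogenize v) ∅ := by
  classical
  obtain ⟨ω, hω⟩ := exists_isGenericHeight (homogenize v)
  choose! F hcard hmem hev using fun B (hB : IsLowerSimplex (homogenize v) ω B) =>
    hB.exists_finset_eventually_vecCons_mem_halfOpenCone hg k
  let T : Finset (Finset ι) := {B | IsLowerSimplex (homogenize v) ω B}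
  have hT {B : Finset ι} (hB : B ∈ T) : IsLowerSimplex (homogenize v) ω B :=
    (Finset.mem_filter.1 hB).2
  have hdisj : (T : Set (Finset ι)).PairwiseDisjoint F := fun B hB B' hB' hne =>
    Finset.disjoint_left.2 fun x hx hx' => hne <| by
      obtain ⟨t, ht, ht'⟩ := ((hev B (hT hB) x hx).and (hev B' (hT hB') x hx')).exists
      exact (hT hB).eq_of_mem_halfOpenCone (hT hB') ht ht'
  refine ⟨T.biUnion F, ?_, fun x hx => ?_⟩
  · rw [Finset.card_biUnion hdisj, Nat.cast_sum]
    refine le_trans ?_ (Finset.sum_le_sum fun B hB => hcard B (hT hB))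
    rw [← Finset.mul_sum, ← Finset.mul_sum]
    gcongr
    exact volume_convexHull_le_sum_isLowerSimplex v hω
  · obtain ⟨B, hB, hxB⟩ := Finset.mem_biUnion.1 hx
    exact ⟨halfOpenCone_restrict_subset _ B _ (hmem B (hT hB) x hxB),
      (hev B (hT hB) x hxB).mono fun t ht => halfOpenCone_restrict_subset _ B _ ht⟩

lemma exists_isGenericVector_forall_notMem [NeZero m] [Nonempty ι] (v : ι → Fin m → ℤ) :
    ∃ (g : Fin m → ℝ) (i : ι), IsGenericVector (homogenize v) (vecCons 1 g) ∧
      ∀ r t : ℝ, 0 < t → r • homogenize v i + t • vecCons 1 g ∉ halfOpenCone (homogenize v) ∅ := by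
  obtain ⟨j⟩ : Nonempty (Fin m) := inferInstance
  obtain ⟨i, hi⟩ := Finite.exists_max fun i => v i j
  have hopen : IsOpen {g : Fin m → ℝ | (v i j : ℝ) < g j} :=
    isOpen_lt continuous_const (continuous_apply j)
  obtain ⟨g, hg, hig⟩ := (Measure.dense_of_ae
    (ae_isGenericVector_vecCons_one (homogenize v))).exists_mem_open hopen
      ⟨fun _ => (v i j : ℝ) + 1, lt_add_one (v i j : ℝ)⟩
  refine ⟨g, i, hg, fun r t ht hmem => ?_⟩
  let ψ : Dual ℝ (Fin (m + 1) → ℝ) :=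
    LinearMap.proj (Fin.succ j) - (v i j : ℝ) • LinearMap.proj 0
  have hψ (i' : ι) : ψ (homogenize v i') ≤ 0 := by
    simpa [ψ, homogenize] using hi i'
  have hψi : ψ (homogenize v i) = 0 := by simp [ψ, homogenize]
  have hψg : 0 < ψ (vecCons 1 g) := by simpa [ψ] using hig
  have hle := dual_apply_nonpos_of_mem_halfOpenCone hmem ψ hψ
  rw [map_add, map_smul, map_smul, hψi, smul_zero, zero_add] at hle
  exact hle.not_gt (mul_pos ht hψg)

lemma latticePts_finite {P : Set (Fin m → ℝ)} (hP : Bornology.IsBounded P) :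
    (latticePts P).Finite := by
  obtain ⟨a, ha⟩ := hP.bddBelow
  obtain ⟨b, hb⟩ := hP.bddAbove
  refine (Set.finite_Icc (fun j => ⌊a j⌋) fun j => ⌈b j⌉).subset
    fun x hx => ⟨fun j => ?_, fun j => ?_⟩
  · exact Int.cast_le.1 ((Int.floor_le (a j)).trans (ha hx j))
  · exact Int.cast_le.1 ((hb hx j).trans (Int.le_ceil (b j)))

lemma choose_mul_factorial_mul_volume_lt_ncard_latticePts [NeZero m] {ι : Type*} [Finite ι]
    [Nonempty ι] (v : ι → Fin m → ℤ) {k : ℕ} (hk : 0 < k) :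
    k.choose m * (m.factorial * volume (convexHull ℝ (Set.range fun i j => (v i j : ℝ)))) <
      (latticePts ((k : ℝ) • convexHull ℝ (Set.range fun i j => (v i j : ℝ)))).ncard := by
  have := Fintype.ofFinite ι
  obtain ⟨g, i, hg, hmiss⟩ := exists_isGenericVector_forall_notMem v
  obtain ⟨F, hcard, hF⟩ := exists_finset_eventually_vecCons_mem_halfOpenCone v hg k
  set P := convexHull ℝ (Set.range fun i j => (v i j : ℝ))
  have hk' : (0 : ℝ) < k := Nat.cast_pos.2 hk
  have hsub : (F : Set (Fin m → ℤ)) ⊆ latticePts ((k : ℝ) • P) := fun x hx =>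
    mem_smul_convexHull_of_vecCons_mem_halfOpenCone hk' (hF x hx).1
  have hmem : k • v i ∈ latticePts ((k : ℝ) • P) :=
    ⟨_, subset_convexHull _ _ ⟨i, rfl⟩, by ext; simp⟩
  have hnotMem : k • v i ∉ F := fun hi => by
    obtain ⟨t, ht, ht0⟩ := ((hF _ hi).2.and self_mem_nhdsWithin).exists
    refine hmiss k t ht0 ?_
    convert ht using 2
    ext j
    refine Fin.cases ?_ (fun j => ?_) j <;> simp [homogenize]
  have hfin : (latticePts ((k : ℝ) • P)).Finite :=
    latticePts_finite ((isBounded_convexHull.2 (Set.finite_range _).isBounded).smul₀ _)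
  have hlt : F.card < (latticePts ((k : ℝ) • P)).ncard := by
    rw [← Set.ncard_coe_finset]
    exact Set.ncard_lt_ncard (hsub.ssubset_of_mem_notMem hmem hnotMem) hfin
  exact hcard.trans_lt (by exact_mod_cast hlt)

end LatticePolytope

lemma sum_Icc_one_choose {n r : ℕ} (hr : 1 ≤ r) :
    ∑ k ∈ Finset.Icc 1 n, k.choose r = (n + 1).choose (r + 1) := by
  rw [← Nat.sum_Icc_choose]
  refine (Finset.sum_subset (Finset.Icc_subset_Icc_left hr) fun k hk hkr => ?_).symm
  exact Nat.choose_eq_zero_of_lt (by grind)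

/-- Let `P ⊆ ℝ^m` (`m ≥ 1`) be an `m`-dimensional lattice polytope.  For every integer
`λ ≥ m` one has `Σ_{k=1}^{λ} |kP ∩ ℤ^m| > C(λ+1, m+1) · m! · vol(P)`. -/
theorem sum_ehrhart_gt_choose_mul_vol
    (m : ℕ) (hm : 1 ≤ m) (P : Set (Fin m → ℝ))
    (hP : ∃ V : Finset (Fin m → ℤ),
      P = convexHull ℝ ((fun (v : Fin m → ℤ) (j : Fin m) => (v j : ℝ)) '' ↑V))
    (hPfull : (interior P).Nonempty)
    (lam : ℕ) (hlam : m ≤ lam) :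
    ((Nat.choose (lam + 1) (m + 1) : ℝ)) * (Nat.factorial m) *
        (MeasureTheory.volume P).toReal
      < (∑ k ∈ Finset.Icc 1 lam, (latticePts ((k : ℝ) • P)).ncard : ℕ) := by
  obtain ⟨V, rfl⟩ := hP
  have : NeZero m := ⟨by lia⟩
  have : Nonempty V := by
    obtain ⟨x, hx⟩ := convexHull_nonempty_iff.1 (hPfull.mono interior_subset)
    exact ⟨⟨_, hx.choose_spec.1⟩⟩
  rw [Set.image_eq_range]
  set P := convexHull ℝ (Set.range fun (v : V) j => (v.1 j : ℝ))
  have hterm : ∀ k ∈ Finset.Icc 1 lam, (k.choose m : ℝ) * (m.factorial * (volume P).toReal) <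
      (latticePts ((k : ℝ) • P)).ncard := fun k hk => by
    have hlt := choose_mul_factorial_mul_volume_lt_ncard_latticePts (fun v : V => v.1)
      (Finset.mem_Icc.1 hk).1
    simpa using ENNReal.toReal_strict_mono (ENNReal.natCast_ne_top _) hlt
  rw [← sum_Icc_one_choose hm, mul_assoc, Nat.cast_sum, Nat.cast_sum, Finset.sum_mul]
  exact Finset.sum_lt_sum_of_nonempty (Finset.nonempty_Icc.2 (hm.trans hlam)) hterm
end

section
/- Let m ≥ 1, let P ⊆ ℝ^m be an m-dimensional lattice polytope, and let n be a positive integer. Then for every integer λ ≥ max{ m, e·((m+1)·n / vol(P))^{1/(m+1)} }, one has Σ_{k=1}^{λ} |kP ∩ ℤ^m| > n. -/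
open scoped Pointwise

/-!
Let the polytope `P` be spanned by lattice points and let `C` be the cone over `{1} × P`. Minimizing
a generic linear cost over all nonnegative coefficient vectors representing a point of `C`
triangulates `C` into simplicial cones generated by the spanning points. Translate the lattice
`ℤ × ℤ ^ m` by a small generic vector of `C`: every point of the translate in `C` then lies in the
interior of a single simplicial cone, so its optimal coefficient vector has exactly `m + 1` positive
entries. Splitting these entries into integral and fractional parts shows that the number of
translated points at height `k` is `∑ b, C(k - g b + m, m)`, the sum being over a finite set of
fractional vectors `b` whose heights `g b` lie between `0` and `m`.

The translated points at height `k` contain a copy of the lattice points of `k P`, so comparing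
growth rates gives at least `m! vol P` summands. For a small translation no lattice points are
gained, and summing over `0 ≤ k ≤ l` gives a total above `m! vol P · C(l + 1, m + 1)`, where `k = 0`
contributes at most one. The theorem follows from `(x / e) ^ r ≤ x (x - 1) ⋯ (x - r + 1)` for
integers `r ≤ x`.
-/

namespace EhrhartSum

open Filter Function MeasureTheory Topology
open Module (Dual finrank)

section RealEstimates

theorem pow_mul_factorial_le_pow_mul_descFactorial {r n : ℕ} (h : r ≤ n) :
    n ^ r * r.factorial ≤ r ^ r * n.descFactorial r := by
  rw [← Nat.descFactorial_self r, Nat.descFactorial_eq_prod_range,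
    Nat.descFactorial_eq_prod_range, ← Finset.card_range r, ← Finset.prod_const,
    ← Finset.prod_const, Finset.card_range, ← Finset.prod_mul_distrib, ← Finset.prod_mul_distrib]
  refine Finset.prod_le_prod' fun i _ => ?_
  rw [Nat.mul_sub, Nat.mul_sub, mul_comm r n]
  exact Nat.sub_le_sub_left (Nat.mul_le_mul_right i h) _

theorem natCast_pow_self_le_exp_one_pow_mul_factorial (r : ℕ) :
    (r : ℝ) ^ r ≤ Real.exp 1 ^ r * r.factorial := by
  have h := Real.pow_div_factorial_le_exp (r : ℝ) r.cast_nonneg r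
  rwa [div_le_iff₀ (by positivity), ← Real.exp_one_pow] at h

theorem div_exp_one_pow_le_descFactorial {r n : ℕ} (h : r ≤ n) :
    (n / Real.exp 1) ^ r ≤ (n.descFactorial r : ℝ) := by
  have hfact : (0 : ℝ) < r.factorial := by positivity
  rw [div_pow, div_le_iff₀ (by positivity)]
  refine le_of_mul_le_mul_right ?_ hfact
  calc (n : ℝ) ^ r * r.factorial
      ≤ r ^ r * n.descFactorial r := by
        exact_mod_cast pow_mul_factorial_le_pow_mul_descFactorial h
    _ ≤ Real.exp 1 ^ r * r.factorial * n.descFactorial r := by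
        gcongr
        exact natCast_pow_self_le_exp_one_pow_mul_factorial r
    _ = n.descFactorial r * Real.exp 1 ^ r * r.factorial := by ring

theorem choose_add_div_pow_le {k : ℕ} (hk : k ≠ 0) (d : ℕ) :
    ((k + d).choose d : ℝ) / k ^ d ≤ (1 + d / k) ^ d / d.factorial := by
  have hk' : (k : ℝ) ≠ 0 := Nat.cast_ne_zero.2 hk
  rw [div_le_iff₀ (by positivity), div_mul_eq_mul_div, ← mul_pow, add_mul, one_mul,
    div_mul_cancel₀ _ hk']
  exact_mod_cast Nat.choose_le_pow_div d (k + d)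

theorem le_div_pow_of_mul_rpow_inv_le {x y C : ℝ} {r : ℕ} (hr : r ≠ 0) (hx : 0 ≤ x) (hC : 0 < C)
    (h : C * x ^ (r⁻¹ : ℝ) ≤ y) : x ≤ (y / C) ^ r := by
  rw [← Real.rpow_inv_natCast_pow hx hr]
  exact pow_le_pow_left₀ (Real.rpow_nonneg hx _) ((le_div_iff₀' hC).2 h) r

end RealEstimates

section GradedCount

/-- The coefficient of `z ^ k` in `(∑ b ∈ B, z ^ g b) / (1 - z) ^ (d + 1)`, that is, the number of
monomials of degree `k` in a free module over a polynomial ring in `d + 1` variables whose basis `B`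
is graded by `g`. -/
def gradedCount {β : Type*} (d : ℕ) (B : Finset β) (g : β → ℕ) (k : ℕ) : ℕ :=
  ∑ b ∈ B with g b ≤ k, (k - g b + d).choose d

variable {β : Type*} {d l : ℕ} {B : Finset β} {g : β → ℕ}

theorem gradedCount_le (d : ℕ) (B : Finset β) (g : β → ℕ) (k : ℕ) :
    gradedCount d B g k ≤ B.card * (k + d).choose d :=
  calc gradedCount d B g k
      ≤ ∑ b ∈ B with g b ≤ k, (k + d).choose d :=
        Finset.sum_le_sum fun b _ => Nat.choose_le_choose d (by omega)
    _ ≤ ∑ _b ∈ B, (k + d).choose d := Finset.sum_le_sum_of_subset (Finset.filter_subset _ _)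
    _ = B.card * (k + d).choose d := by rw [Finset.sum_const, smul_eq_mul]

theorem exists_eq_zero_of_gradedCount_zero_ne_zero (h : gradedCount d B g 0 ≠ 0) :
    ∃ b ∈ B, g b = 0 := by
  obtain ⟨b, hb, -⟩ := Finset.exists_ne_zero_of_sum_ne_zero h
  obtain ⟨hbB, hgb⟩ := Finset.mem_filter.1 hb
  exact ⟨b, hbB, Nat.le_zero.1 hgb⟩

theorem sum_range_ite_choose {j : ℕ} (d : ℕ) (hj : j ≤ l) :
    ∑ k ∈ Finset.range (l + 1), (if j ≤ k then (k - j + d).choose d else 0) =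
      (l - j + d + 1).choose (d + 1) := by
  rw [← Nat.sum_range_add_choose, ← Finset.sum_filter]
  refine Finset.sum_nbij' (· - j) (· + j) ?_ ?_ ?_ ?_ fun _ _ => rfl <;> grind

theorem sum_range_gradedCount (hg : ∀ b ∈ B, g b ≤ l) :
    ∑ k ∈ Finset.range (l + 1), gradedCount d B g k =
      ∑ b ∈ B, (l - g b + d + 1).choose (d + 1) := by
  simp only [gradedCount, Finset.sum_filter]
  rw [Finset.sum_comm]
  exact Finset.sum_congr rfl fun b hb => sum_range_ite_choose d (hg b hb)

theorem card_mul_choose_lt_sum_range_gradedCount (hd : 1 ≤ d) (hl : d ≤ l)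
    (hg : ∀ b ∈ B, g b ≤ d) (hzero : ∃ b ∈ B, g b = 0) :
    B.card * (l + 1).choose (d + 1) < ∑ k ∈ Finset.range (l + 1), gradedCount d B g k := by
  rw [sum_range_gradedCount fun b hb => (hg b hb).trans hl, ← smul_eq_mul, ← Finset.sum_const]
  obtain ⟨b₀, hb₀, hgb₀⟩ := hzero
  refine Finset.sum_lt_sum (fun b hb => Nat.choose_le_choose _ ?_) ⟨b₀, hb₀, ?_⟩
  · have := hg b hb
    omega
  · calc (l + 1).choose (d + 1)
        < (l + 1).choose d + (l + 1).choose (d + 1) :=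
          Nat.lt_add_of_pos_left (Nat.choose_pos (by omega))
      _ = (l + 1 + 1).choose (d + 1) := (Nat.choose_succ_succ' (l + 1) d).symm
      _ ≤ (l - g b₀ + d + 1).choose (d + 1) := Nat.choose_le_choose _ (by omega)

end GradedCount

section Box

variable {ι : Type*} {d k : ℕ} {A : Set (ι → ℝ)} {a b : ι → ℝ}

/-- The part of `A` inside the half-open cube `[0, 1) ^ ι`, for `A` consisting of nonnegative
vectors. -/
def box (A : Set (ι → ℝ)) : Set (ι → ℝ) := {a ∈ A | ∀ i, a i < 1}

/-- `A` is a disjoint union of translated orthants `b + ℕ ^ support b`, all of dimension `d + 1`,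
with `b` ranging over `box A`. -/
structure IsBoxClosed (d : ℕ) (A : Set (ι → ℝ)) : Prop where
  nonneg : ∀ a ∈ A, 0 ≤ a
  fract_mem : ∀ a ∈ A, Int.fract ∘ a ∈ A
  add_natCast_mem : ∀ a ∈ A, ∀ n : ι → ℕ, support n ⊆ support a → a + Nat.cast ∘ n ∈ A
  ncard_support : ∀ a ∈ A, (support a).ncard = d + 1

theorem fract_add_natCast_floor (ha : 0 ≤ a) :
    Int.fract ∘ a + Nat.cast ∘ (fun i => ⌊a i⌋₊) = a := by
  ext i
  simp only [Pi.add_apply, comp_apply, natCast_floor_eq_intCast_floor (ha i), Int.fract_add_floor]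

namespace IsBoxClosed

theorem fract_mem_box (hA : IsBoxClosed d A) (ha : a ∈ A) : Int.fract ∘ a ∈ box A :=
  ⟨hA.fract_mem a ha, fun i => Int.fract_lt_one (a i)⟩

theorem support_fract (hA : IsBoxClosed d A) (ha : a ∈ A) :
    support (Int.fract ∘ a) = support a := by
  have hcard := hA.ncard_support a ha
  refine Set.eq_of_subset_of_ncard_le (support_comp_subset Int.fract_zero a) ?_
    (Set.finite_of_ncard_pos (by omega))
  rw [hcard, hA.ncard_support _ (hA.fract_mem a ha)]

theorem fract_add_natCast_of_mem_box (hA : IsBoxClosed d A) (hb : b ∈ box A) (n : ι → ℕ) :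
    Int.fract ∘ (b + Nat.cast ∘ n) = b := by
  ext i
  simp only [comp_apply, Pi.add_apply, Int.fract_add_natCast]
  exact Int.fract_eq_self.2 ⟨hA.nonneg b hb.1 i, hb.2 i⟩

end IsBoxClosed

variable [Fintype ι]

/-- The integral part of the coordinate sum; for coefficient vectors over a polytope this is the
dilation factor of the slice they belong to. -/
noncomputable def level (a : ι → ℝ) : ℕ := ⌊∑ i, a i⌋₊

/-- The part of `A` of level `k`. -/
def slice (A : Set (ι → ℝ)) (k : ℕ) : Set (ι → ℝ) := {a ∈ A | level a = k}

theorem level_add_natCast (ha : 0 ≤ a) (n : ι → ℕ) :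
    level (a + Nat.cast ∘ n) = level a + ∑ i, n i := by
  simp only [level, Pi.add_apply, comp_apply, Finset.sum_add_distrib, ← Nat.cast_sum]
  exact Nat.floor_add_natCast (Finset.sum_nonneg fun i _ => ha i) _

theorem natCast_level_eq {j : ℤ} {τ : ℝ} (hτ : 0 ≤ τ) (hτ' : τ < 1) (ha : 0 ≤ a)
    (hsum : ∑ i, a i = j + τ) : (level a : ℤ) = j := by
  rw [level, Int.natCast_floor_eq_floor (Finset.sum_nonneg fun i _ => ha i), hsum, Int.floor_eq_iff]
  constructor <;> linarith

namespace IsBoxClosed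

theorem level_le_of_mem_box (hA : IsBoxClosed d A) (hb : b ∈ box A) : level b ≤ d := by
  classical
  have hcard : (support b).toFinset.card = d + 1 := by
    rw [← Set.ncard_eq_toFinset_card', hA.ncard_support b hb.1]
  have hsum : ∑ i, b i < (d + 1 : ℕ) :=
    calc ∑ i, b i = ∑ i ∈ (support b).toFinset, b i :=
          (Finset.sum_subset (Finset.subset_univ _) (by simp)).symm
      _ < ∑ i ∈ (support b).toFinset, 1 :=
          Finset.sum_lt_sum_of_nonempty (Finset.card_pos.1 (by omega)) fun i _ => hb.2 i
      _ = (d + 1 : ℕ) := by rw [Finset.sum_const, hcard, nsmul_one]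
  exact Nat.lt_succ_iff.1 ((Nat.floor_lt (Finset.sum_nonneg fun i _ => hA.nonneg b hb.1 i)).2 hsum)

theorem box_finite (hA : IsBoxClosed d A) (hfin : ∀ k, (slice A k).Finite) : (box A).Finite :=
  ((Set.finite_Iic d).biUnion fun k _ => hfin k).subset fun _ hb =>
    Set.mem_biUnion (hA.level_le_of_mem_box hb) ⟨hb.1, rfl⟩

theorem level_eq_level_fract_add (hA : IsBoxClosed d A) (ha : a ∈ A) :
    level a = level (Int.fract ∘ a) + ∑ i, ⌊a i⌋₊ := by
  conv_lhs => rw [← fract_add_natCast_floor (hA.nonneg a ha)]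
  exact level_add_natCast (fun i => Int.fract_nonneg (a i)) _

theorem setOf_fract_eq_image [DecidableEq ι] (hA : IsBoxClosed d A) (hb : b ∈ box A)
    (hk : level b ≤ k) :
    {a ∈ slice A k | Int.fract ∘ a = b} =
      (fun n : ι →₀ ℕ => b + Nat.cast ∘ n) ''
        (Set.toFinite (support b)).toFinset.finsuppAntidiag (k - level b) := by
  have hsum {n : ι →₀ ℕ} (hn : n.support ⊆ (Set.toFinite (support b)).toFinset) :
      (Set.toFinite (support b)).toFinset.sum n = ∑ i, n i :=
    Finset.sum_subset (Finset.subset_univ _) fun i _ hi =>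
      Finsupp.notMem_support_iff.1 fun h => hi (hn h)
  ext a
  simp only [Set.mem_image, Finset.mem_coe, Finset.mem_finsuppAntidiag]
  constructor
  · rintro ⟨⟨ha, rfl⟩, rfl⟩
    let n : ι →₀ ℕ := Finsupp.equivFunOnFinite.symm fun i => ⌊a i⌋₊
    have hn : n.support ⊆ (Set.toFinite (support (Int.fract ∘ a))).toFinset := fun i hi => by
      rw [Set.Finite.mem_toFinset, hA.support_fract ha]
      intro hai
      simp [n, hai] at hi
    refine ⟨n, ⟨?_, hn⟩, fract_add_natCast_floor (hA.nonneg a ha)⟩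
    rw [hsum hn, hA.level_eq_level_fract_add ha, Nat.add_sub_cancel_left]
    rfl
  · rintro ⟨n, ⟨hnk, hn⟩, rfl⟩
    refine ⟨⟨hA.add_natCast_mem b hb.1 n fun i hi => ?_, ?_⟩,
      hA.fract_add_natCast_of_mem_box hb n⟩
    · exact (Set.Finite.mem_toFinset _).1 (hn (Finsupp.mem_support_iff.2 hi))
    · rw [level_add_natCast (hA.nonneg b hb.1), ← hsum hn, hnk, Nat.add_sub_cancel' hk]

theorem ncard_setOf_fract_eq (hA : IsBoxClosed d A) (hb : b ∈ box A) (hk : level b ≤ k) :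
    {a ∈ slice A k | Int.fract ∘ a = b}.ncard = (k - level b + d).choose d := by
  classical
  have hinj : Injective fun n : ι →₀ ℕ => b + Nat.cast ∘ n := fun n n' h =>
    DFunLike.coe_injective (Nat.cast_injective.comp_left (add_left_cancel h))
  rw [hA.setOf_fract_eq_image hb hk, Set.ncard_image_of_injective _ hinj, Set.ncard_coe_finset,
    Finset.card_finsuppAntidiag_nat_eq_choose, ← Set.ncard_eq_toFinset_card,
    hA.ncard_support b hb.1, ← Nat.choose_symm_add]
  congr 1
  omega

theorem ncard_slice (hA : IsBoxClosed d A) (hfin : ∀ k, (slice A k).Finite) (k : ℕ) :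
    (slice A k).ncard = gradedCount d (hA.box_finite hfin).toFinset level k := by
  classical
  have hmaps : ∀ a ∈ (hfin k).toFinset,
      Int.fract ∘ a ∈ {b ∈ (hA.box_finite hfin).toFinset | level b ≤ k} := by
    intro a ha
    obtain ⟨haA, rfl⟩ := (hfin k).mem_toFinset.1 ha
    rw [Finset.mem_filter, Set.Finite.mem_toFinset, hA.level_eq_level_fract_add haA]
    exact ⟨hA.fract_mem_box haA, Nat.le_add_right _ _⟩
  rw [Set.ncard_eq_toFinset_card _ (hfin k), Finset.card_eq_sum_card_fiberwise hmaps, gradedCount]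
  refine Finset.sum_congr rfl fun b hb => ?_
  rw [Finset.mem_filter, Set.Finite.mem_toFinset] at hb
  rw [← hA.ncard_setOf_fract_eq hb.1 hb.2, ← Set.ncard_coe_finset]
  simp only [Finset.coe_filter, Set.Finite.mem_toFinset]

end IsBoxClosed

end Box

section Optimal

variable {ι E : Type*} [AddCommGroup E] [Module ℝ E]
  {T : (ι → ℝ) →ₗ[ℝ] E} {c : Dual ℝ (ι → ℝ)} {a b r : ι → ℝ}

/-- `a` is an optimal solution of the linear program of minimizing the cost `c` over the nonnegative
vectors with the same image under `T` as `a`. -/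
structure IsOptimal (T : (ι → ℝ) →ₗ[ℝ] E) (c : Dual ℝ (ι → ℝ)) (a : ι → ℝ) : Prop where
  nonneg : 0 ≤ a
  le : ∀ b, 0 ≤ b → T b = T a → c a ≤ c b

/-- No nonzero vector in the kernel of `T` is supported on the support of an optimal solution. The
supports of the optimal solutions then form a regular triangulation of the cone generated by the
images of the unit vectors under `T`. -/
def IsGeneric (T : (ι → ℝ) →ₗ[ℝ] E) (c : Dual ℝ (ι → ℝ)) : Prop :=
  ∀ a, IsOptimal T c a → ∀ r, support r ⊆ support a → T r = 0 → r = 0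

theorem exists_pos_add_smul_nonneg [Finite ι] (ha : 0 ≤ a) (hr : ∀ i, a i = 0 → 0 ≤ r i) :
    ∃ δ > (0 : ℝ), 0 ≤ a + δ • r := by
  have hcoord (i : ι) : ∀ᶠ δ : ℝ in 𝓝[>] 0, 0 ≤ a i + δ * r i := by
    rcases (ha i).eq_or_lt with hai | hai
    · filter_upwards [self_mem_nhdsWithin] with δ hδ
      exact add_nonneg (ha i) (mul_nonneg hδ.le (hr i hai.symm))
    · have hcont : Continuous fun δ : ℝ => a i + δ * r i := by fun_prop
      refine nhdsWithin_le_nhds ((hcont.tendsto 0).eventually_const_le ?_)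
      simpa using hai
  obtain ⟨δ, hδ, hpos⟩ := ((eventually_all.2 hcoord).and self_mem_nhdsWithin).exists
  exact ⟨δ, hpos, hδ⟩

theorem IsOptimal.map_nonneg [Finite ι] (ha : IsOptimal T c a) (hr : ∀ i, a i = 0 → 0 ≤ r i)
    (hTr : T r = 0) : 0 ≤ c r := by
  obtain ⟨δ, hδ, hnonneg⟩ := exists_pos_add_smul_nonneg ha.nonneg hr
  have hle := ha.le _ hnonneg (by rw [map_add, map_smul, hTr, smul_zero, add_zero])
  rw [map_add, map_smul, smul_eq_mul, le_add_iff_nonneg_right] at hle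
  exact nonneg_of_mul_nonneg_right hle hδ

theorem IsOptimal.map_eq_zero [Finite ι] (ha : IsOptimal T c a) (hr : support r ⊆ support a)
    (hTr : T r = 0) : c r = 0 := by
  have hzero (i : ι) (hi : a i = 0) : r i = 0 := notMem_support.1 fun h => hr h hi
  refine le_antisymm ?_ (ha.map_nonneg (fun i hi => (hzero i hi).ge) hTr)
  rw [← neg_nonneg, ← map_neg]
  exact ha.map_nonneg (fun i hi => by simp [hzero i hi]) (by rw [map_neg, hTr, neg_zero])

theorem IsOptimal.of_support_subset [Finite ι] (ha : IsOptimal T c a) (hb : 0 ≤ b)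
    (hba : support b ⊆ support a) : IsOptimal T c b where
  nonneg := hb
  le b' hb' hT := by
    rw [← sub_nonneg, ← map_sub]
    refine ha.map_nonneg (fun i hi => ?_) (by rw [map_sub, hT, sub_self])
    have hbi : b i = 0 := notMem_support.1 fun h => hba h hi
    simpa [hbi] using hb' i

theorem IsOptimal.add (ha : IsOptimal T c a) (hb : IsOptimal T c b) (hab : T a = T b) :
    IsOptimal T c (a + b) where
  nonneg := add_nonneg ha.nonneg hb.nonneg
  le b' hb' hT := by
    have hhalf : T ((2⁻¹ : ℝ) • b') = T a := by
      rw [map_smul, hT, map_add, ← hab, ← two_smul ℝ, inv_smul_smul₀ two_ne_zero]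
    have hnonneg : 0 ≤ (2⁻¹ : ℝ) • b' := smul_nonneg (by norm_num) hb'
    have hca := ha.le _ hnonneg hhalf
    have hcb := hb.le _ hnonneg (hhalf.trans hab)
    rw [map_smul, smul_eq_mul] at hca hcb
    rw [map_add]
    linarith

theorem exists_isGeneric [Finite ι] (T : (ι → ℝ) →ₗ[ℝ] E) : ∃ c, IsGeneric T c := by
  -- It suffices that `c` does not vanish on one chosen kernel vector for each dependent support.
  let Dependent := {S : Set ι // ∃ r ≠ 0, support r ⊆ S ∧ T r = 0}
  choose r hr_ne hr_supp hr_ker using fun S : Dependent => S.2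
  obtain ⟨c, hc⟩ := Module.exists_dual_forall_apply_ne_zero (K := ℝ) r hr_ne
  refine ⟨c, fun a ha s hsa hTs => ?_⟩
  by_contra hs
  let S : Dependent := ⟨support a, s, hs, hsa, hTs⟩
  exact hc S (ha.map_eq_zero (hr_supp S) (hr_ker S))

theorem IsGeneric.injOn (hc : IsGeneric T c) : Set.InjOn T {a | IsOptimal T c a} := by
  intro a ha b hb hab
  refine sub_eq_zero.1 (hc _ (ha.add hb hab) (a - b) (fun i => ?_)
    (by rw [map_sub, hab, sub_self]))
  contrapose!
  simp only [notMem_support, Pi.add_apply, Pi.sub_apply]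
  intro hi
  have := ha.nonneg i
  have := hb.nonneg i
  simp only [Pi.zero_apply] at *
  linarith

theorem IsGeneric.ncard_support_le [Finite ι] [FiniteDimensional ℝ E] (hc : IsGeneric T c)
    (ha : IsOptimal T c a) : (support a).ncard ≤ finrank ℝ E := by
  rw [← Pi.dim_spanSubset (R := ℝ)]
  refine LinearMap.finrank_le_finrank_of_injective
    (f := T.domRestrict (Pi.spanSubset ℝ (support a))) ?_
  rw [← LinearMap.ker_eq_bot, LinearMap.ker_eq_bot']
  intro r hr
  refine Subtype.ext (hc a ha r (fun i hi => ?_) hr)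
  by_contra hia
  exact hi (Pi.mem_spanSubset_iff.1 r.2 i hia)

theorem IsGeneric.isBoxClosed [Finite ι] [FiniteDimensional ℝ E] {d : ℕ} {Y : Set E}
    (hc : IsGeneric T c) (hdim : finrank ℝ E = d + 1)
    (hY : ∀ y ∈ Y, ∀ n : ι → ℤ, y + T (Int.cast ∘ n) ∈ Y)
    (hsupp : ∀ a, T a ∈ Y → d + 1 ≤ (support a).ncard) :
    IsBoxClosed d {a | IsOptimal T c a ∧ T a ∈ Y} where
  nonneg a ha := ha.1.nonneg
  fract_mem a ha := by
    refine ⟨ha.1.of_support_subset (fun i => Int.fract_nonneg (a i))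
      (support_comp_subset Int.fract_zero a), ?_⟩
    have hfract : Int.fract ∘ a = a + Int.cast ∘ (fun i => -⌊a i⌋) := by
      ext i
      simp [Int.fract, sub_eq_add_neg]
    rw [hfract, map_add]
    exact hY _ ha.2 _
  add_natCast_mem a ha n hn := by
    refine ⟨ha.1.of_support_subset (add_nonneg ha.1.nonneg fun i => Nat.cast_nonneg _) ?_, ?_⟩
    · exact (support_add _ _).trans
        (Set.union_subset subset_rfl ((support_comp_subset Nat.cast_zero n).trans hn))
    · rw [map_add]
      simpa [comp_def] using hY _ ha.2 fun i => n i
  ncard_support a ha := (hdim ▸ hc.ncard_support_le ha.1).antisymm (hsupp a ha.2)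

theorem exists_isOptimal_map_eq [Finite ι] [TopologicalSpace E] [IsTopologicalAddGroup E]
    [ContinuousSMul ℝ E] [T2Space E] (c : Dual ℝ (ι → ℝ)) (ha : 0 ≤ a)
    (hbdd : Bornology.IsBounded {b | 0 ≤ b ∧ T b = T a}) :
    ∃ b, IsOptimal T c b ∧ T b = T a := by
  have := Fintype.ofFinite ι
  have hclosed : IsClosed {b | 0 ≤ b ∧ T b = T a} :=
    isClosed_Ici.inter (isClosed_eq T.continuous_of_finiteDimensional continuous_const)
  have hcompact := Metric.isCompact_of_isClosed_isBounded hclosed hbdd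
  obtain ⟨b, ⟨hb, hTb⟩, hmin⟩ :=
    hcompact.exists_isMinOn ⟨a, ha, rfl⟩ c.continuous_of_finiteDimensional.continuousOn
  exact ⟨b, ⟨hb, fun b' hb' hT => hmin ⟨hb', hT.trans hTb⟩⟩, hTb⟩

end Optimal

theorem dense_setOf_forall_finrank_le_ncard_support {ι E : Type*} [Finite ι]
    [NormedAddCommGroup E] [NormedSpace ℝ E] [FiniteDimensional ℝ E] (T : (ι → ℝ) →ₗ[ℝ] E)
    {L : Set E} (hL : L.Countable) :
    Dense {ξ | ∀ x ∈ L, ∀ a, T a = x + ξ → finrank ℝ E ≤ (support a).ncard} := by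
  borelize E
  -- The excluded points lie on countably many translates of proper subspaces, a null set.
  have hnull (x : E) (S : Set ι) :
      ∀ᵐ ξ ∂(Measure.addHaar : Measure E), S.ncard < finrank ℝ E →
        x + ξ ∉ (Pi.spanSubset ℝ S).map T := by
    by_cases hS : S.ncard < finrank ℝ E
    · have hproper : (Pi.spanSubset ℝ S).map T ≠ ⊤ := by
        intro htop
        have hle := Submodule.finrank_map_le T (Pi.spanSubset ℝ S)
        rw [htop, finrank_top, Pi.dim_spanSubset] at hle
        exact hS.not_ge hle
      simp only [hS, true_imp_iff, ae_iff, not_not]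
      exact (measure_preimage_add _ x _).trans (Measure.addHaar_submodule _ _ hproper)
    · simp [hS]
  refine Measure.dense_of_ae (μ := Measure.addHaar) ?_
  filter_upwards [(ae_ball_iff hL).2 fun x _ => ae_all_iff.2 (hnull x)] with ξ hξ x hx a ha
  by_contra! hlt
  refine hξ x hx (support a) hlt ⟨a, Pi.mem_spanSubset_iff.2 fun i hi => ?_, ha⟩
  exact notMem_support.1 hi

section LatticePoints

variable {m : ℕ} {P : Set (Fin m → ℝ)}

/-- The inclusion of `ℤ ^ m` into `ℝ ^ m`. -/
def intVec (m : ℕ) : (Fin m → ℤ) →+ (Fin m → ℝ) := (Int.castAddHom ℝ).compLeft (Fin m)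

theorem intVec_apply (z : Fin m → ℤ) (j : Fin m) : intVec m z j = z j := rfl

theorem mem_latticePts {z : Fin m → ℤ} : z ∈ latticePts P ↔ intVec m z ∈ P := Iff.rfl

theorem range_intVec :
    Set.range (intVec m) = (Submodule.span ℤ (Set.range (Pi.basisFun ℝ (Fin m))) : Set _) := by
  ext x
  simp only [SetLike.mem_coe, Module.Basis.mem_span_iff_repr_mem, Pi.basisFun_repr, Set.mem_range,
    eq_intCast, Classical.skolem, funext_iff, intVec_apply]

theorem isClosedEmbedding_intVec : IsClosedEmbedding (intVec m) :=
  .piMap fun _ => Int.isClosedEmbedding_coe_real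

theorem latticePts_finite (hP : Bornology.IsBounded P) : (latticePts P).Finite :=
  ((isClosedEmbedding_intVec.isCompact_preimage hP.isCompact_closure).finite_of_discrete).subset
    fun _ hz => subset_closure hz

theorem ncard_latticePts_smul {t : ℝ} (ht : t ≠ 0) :
    (latticePts (t • P)).ncard = Nat.card ↑(P ∩ t⁻¹ • Set.range (intVec m)) := by
  have himage : P ∩ t⁻¹ • Set.range (intVec m) =
      (fun z => t⁻¹ • intVec m z) '' latticePts (t • P) := by
    ext x
    constructor
    · rintro ⟨hx, _, ⟨z, rfl⟩, rfl⟩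
      exact ⟨z, (Set.mem_smul_set_iff_inv_smul_mem₀ ht _ _).2 hx, rfl⟩
    · rintro ⟨z, hz, rfl⟩
      exact ⟨(Set.mem_smul_set_iff_inv_smul_mem₀ ht _ _).1 hz, _, ⟨z, rfl⟩, rfl⟩
  rw [Nat.card_coe_set_eq, himage, Set.ncard_image_of_injective]
  exact (smul_right_injective _ (inv_ne_zero ht)).comp isClosedEmbedding_intVec.injective

theorem tendsto_ncard_latticePts_smul_div_pow (hc : Convex ℝ P) (hP : IsCompact P) :
    Tendsto (fun k : ℕ => ((latticePts ((k : ℝ) • P)).ncard : ℝ) / k ^ m) atTop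
      (𝓝 (volume.real P)) := by
  have h := tendsto_card_div_pow_atTop_volume P hP.isBounded hP.measurableSet
    (hc.addHaar_frontier volume)
  rw [Fintype.card_fin, ← range_intVec] at h
  refine h.congr' ?_
  filter_upwards [eventually_ne_atTop 0] with k hk
  rw [ncard_latticePts_smul (Nat.cast_ne_zero.2 hk)]

theorem volume_mul_factorial_le {N : ℕ} (hc : Convex ℝ P) (hP : IsCompact P)
    (h : ∀ k : ℕ, 1 ≤ k → (latticePts ((k : ℝ) • P)).ncard ≤ N * (k + m).choose m) :
    volume.real P * m.factorial ≤ N := by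
  have hlim : Tendsto (fun k : ℕ => N * ((1 + m / k) ^ m / m.factorial : ℝ)) atTop
      (𝓝 (N * ((1 + 0) ^ m / m.factorial))) :=
    ((((tendsto_const_div_atTop_nhds_zero_nat _).const_add 1).pow m).div_const _).const_mul _
  have hvol : volume.real P ≤ N * ((1 + 0) ^ m / m.factorial) := by
    refine le_of_tendsto_of_tendsto (tendsto_ncard_latticePts_smul_div_pow hc hP) hlim ?_
    filter_upwards [eventually_ge_atTop 1] with k hk
    calc ((latticePts ((k : ℝ) • P)).ncard : ℝ) / k ^ m
        ≤ (N * (k + m).choose m : ℕ) / k ^ m := by gcongr; exact h k hk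
      _ = N * ((k + m).choose m / k ^ m) := by rw [Nat.cast_mul, mul_div_assoc]
      _ ≤ N * ((1 + m / k) ^ m / m.factorial) :=
          mul_le_mul_of_nonneg_left (choose_add_div_pow_le (Nat.one_le_iff_ne_zero.1 hk) m)
            N.cast_nonneg
  rwa [add_zero, one_pow, mul_one_div, le_div_iff₀ (by positivity)] at hvol

end LatticePoints

section Homogenization

variable {ι E : Type*} [Fintype ι] [AddCommGroup E] [Module ℝ E] {v : ι → E} {t : ℝ} {x : E}

/-- The linear map sending the unit vectors to the points `v i` at height one; the image of the
nonnegative orthant is the cone over the polytope spanned by `v`. -/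
def homogenization (v : ι → E) : (ι → ℝ) →ₗ[ℝ] ℝ × E :=
  Fintype.linearCombination ℝ fun i => (1, v i)

theorem homogenization_apply (v : ι → E) (a : ι → ℝ) :
    homogenization v a = (∑ i, a i, ∑ i, a i • v i) := by
  simp [homogenization, Fintype.linearCombination_apply, Prod.ext_iff, Prod.fst_sum, Prod.snd_sum]

theorem mem_convexHull_range_iff :
    x ∈ convexHull ℝ (Set.range v) ↔ ∃ a, 0 ≤ a ∧ homogenization v a = (1, x) := by
  classical
  have hrange : Set.range v =
      Fintype.linearCombination ℝ v '' Set.range fun i => (Pi.single i 1 : ι → ℝ) := by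
    rw [← Set.range_comp]
    simp [comp_def, Fintype.linearCombination_apply_single]
  rw [hrange, ← LinearMap.image_convexHull, convexHull_rangle_single_eq_stdSimplex]
  simp only [homogenization_apply, stdSimplex, Set.mem_image, Set.mem_ofPred_eq, Prod.mk.injEq,
    Fintype.linearCombination_apply, Pi.le_def, Pi.zero_apply, and_assoc]

theorem mem_smul_convexHull_range_iff (ht : 0 < t) :
    x ∈ t • convexHull ℝ (Set.range v) ↔ ∃ a, 0 ≤ a ∧ homogenization v a = (t, x) := by
  rw [Set.mem_smul_set_iff_inv_smul_mem₀ ht.ne', mem_convexHull_range_iff]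
  constructor
  · rintro ⟨a, ha, hax⟩
    refine ⟨t • a, smul_nonneg ht.le ha, ?_⟩
    rw [map_smul, hax, Prod.smul_mk, smul_eq_mul, mul_one, smul_inv_smul₀ ht.ne']
  · rintro ⟨a, ha, hax⟩
    refine ⟨t⁻¹ • a, smul_nonneg (inv_nonneg.2 ht.le) ha, ?_⟩
    rw [map_smul, hax, Prod.smul_mk, smul_eq_mul, inv_mul_cancel₀ ht.ne']

theorem isBounded_nonneg_fiber_homogenization (v : ι → E) (y : ℝ × E) :
    Bornology.IsBounded {a | 0 ≤ a ∧ homogenization v a = y} := by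
  refine (Metric.isBounded_Icc (0 : ι → ℝ) fun _ => y.1).subset fun a ha => ⟨ha.1, fun i => ?_⟩
  rw [← ha.2, homogenization_apply]
  exact Finset.single_le_sum (fun j _ => ha.1 j) (Finset.mem_univ i)

end Homogenization

section Shift

theorem exists_mem_dense_inter_cone {E : Type*} [NormedAddCommGroup E] [NormedSpace ℝ E]
    {P : Set E} {D N : Set (ℝ × E)} (hP : (interior P).Nonempty) (hD : Dense D)
    (hN : N ∈ 𝓝 0) : ∃ ξ ∈ D ∩ N, 0 < ξ.1 ∧ ξ.2 ∈ ξ.1 • P := by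
  obtain ⟨p, hp⟩ := hP
  have hcont : ContinuousOn (fun ξ : ℝ × E => ξ.1⁻¹ • ξ.2) {ξ | 0 < ξ.1} :=
    (continuousOn_fst.inv₀ fun ξ hξ => ne_of_gt hξ).smul continuousOn_snd
  have hopen : IsOpen ({ξ : ℝ × E | 0 < ξ.1} ∩ (fun ξ => ξ.1⁻¹ • ξ.2) ⁻¹' interior P) :=
    hcont.isOpen_inter_preimage (isOpen_lt continuous_const continuous_fst) isOpen_interior
  have hray : Tendsto (fun t : ℝ => (t, t • p)) (𝓝[>] 0) (𝓝 0) := by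
    have hcont : Continuous fun t : ℝ => (t, t • p) := by fun_prop
    have hlim := (hcont.tendsto 0).mono_left (nhdsWithin_le_nhds (s := Set.Ioi 0))
    rwa [zero_smul] at hlim
  obtain ⟨t, htN, ht⟩ :=
    ((hray.eventually (interior_mem_nhds.2 hN)).and self_mem_nhdsWithin).exists
  obtain ⟨ξ, ⟨⟨hξ, hξP⟩, hξN⟩, hξD⟩ := hD.inter_open_nonempty _ (hopen.inter isOpen_interior)
    ⟨(t, t • p), ⟨ht, by simpa [inv_smul_smul₀ (ne_of_gt ht)] using hp⟩, htN⟩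
  exact ⟨ξ, ⟨hξD, interior_subset hξN⟩, hξ,
    (Set.mem_smul_set_iff_inv_smul_mem₀ hξ.ne' _ _).2 (interior_subset hξP)⟩

variable {m : ℕ} {P : Set (Fin m → ℝ)} {ξ : ℝ × (Fin m → ℝ)}

/-- The lattice points of `(k + τ) P - p`, where `ξ = (τ, p)`; equivalently, the points of height
`k` in the integer lattice translated by `ξ` that lie in the cone over `P`. -/
def shiftedPts (P : Set (Fin m → ℝ)) (ξ : ℝ × (Fin m → ℝ)) (k : ℕ) : Set (Fin m → ℤ) :=
  latticePts ((· + ξ.2) ⁻¹' ((k + ξ.1) • P))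

theorem mem_shiftedPts {k : ℕ} {z : Fin m → ℤ} :
    z ∈ shiftedPts P ξ k ↔ intVec m z + ξ.2 ∈ ((k : ℝ) + ξ.1) • P := Iff.rfl

theorem shiftedPts_finite (hP : Bornology.IsBounded P) (k : ℕ) : (shiftedPts P ξ k).Finite :=
  latticePts_finite ((isometry_add_right ξ.2).antilipschitz.isBounded_preimage (hP.smul₀ _))

theorem latticePts_smul_subset_shiftedPts (hc : Convex ℝ P) (hξ : 0 ≤ ξ.1) (hξP : ξ.2 ∈ ξ.1 • P)
    (k : ℕ) : latticePts ((k : ℝ) • P) ⊆ shiftedPts P ξ k := by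
  intro z hz
  rw [shiftedPts, hc.add_smul k.cast_nonneg hξ]
  exact Set.add_mem_add hz hξP

theorem eventually_shiftedPts_subset (hP : IsCompact P) (k : ℕ) :
    ∀ᶠ ξ in 𝓝 0, shiftedPts P ξ k ⊆ latticePts ((k : ℝ) • P) := by
  have hclosed : IsClosed (intVec m '' (latticePts ((k : ℝ) • P))ᶜ) :=
    isClosedEmbedding_intVec.isClosedMap _ (isClosed_discrete _)
  have hcont : Continuous fun y : (ℝ × (Fin m → ℝ)) × (Fin m → ℝ) =>
      ((k : ℝ) + y.1.1) • y.2 - y.1.2 := by fun_prop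
  have htube : ∀ᶠ ξ : ℝ × (Fin m → ℝ) in 𝓝 0, ∀ q ∈ P,
      ((k : ℝ) + ξ.1) • q - ξ.2 ∉ intVec m '' (latticePts ((k : ℝ) • P))ᶜ := by
    refine hP.eventually_forall_of_forall_eventually fun q hq =>
      (hclosed.isOpen_compl.preimage hcont).mem_nhds ?_
    rintro ⟨z, hz, hzq⟩
    refine hz (mem_latticePts.2 ?_)
    rw [hzq]
    simpa using Set.smul_mem_smul_set hq
  filter_upwards [htube] with ξ hξ z hz
  obtain ⟨q, hq, hqz : (k + ξ.1) • q = intVec m z + ξ.2⟩ := hz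
  by_contra hzk
  exact hξ q hq ⟨z, hzk, by rw [hqz, add_sub_cancel_right]⟩

theorem ncard_latticePts_zero_smul_le_one : (latticePts ((0 : ℝ) • P)).ncard ≤ 1 := by
  refine (Set.ncard_le_ncard (t := {0}) fun z hz => ?_).trans (Set.ncard_singleton _).le
  obtain ⟨q, -, hq : (0 : ℝ) • q = intVec m z⟩ := hz
  rw [zero_smul] at hq
  exact isClosedEmbedding_intVec.injective (hq.symm.trans (map_zero _).symm)

end Shift

section LatticePolytope

/-- The polytope spanned by the lattice points `v i`. -/
def latticePolytope {m : ℕ} {ι : Type*} (v : ι → Fin m → ℤ) : Set (Fin m → ℝ) :=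
  convexHull ℝ (Set.range (intVec m ∘ v))

variable {m : ℕ} {ι : Type*}

theorem isCompact_latticePolytope [Finite ι] (v : ι → Fin m → ℤ) : IsCompact (latticePolytope v) :=
  (Set.finite_range _).isCompact_convexHull ℝ

theorem volume_real_latticePolytope_pos [Finite ι] {v : ι → Fin m → ℤ}
    (hP : (interior (latticePolytope v)).Nonempty) : 0 < volume.real (latticePolytope v) :=
  ENNReal.toReal_pos (Measure.measure_pos_of_nonempty_interior _ hP).ne'
    (isCompact_latticePolytope v).measure_lt_top.ne

theorem convex_latticePolytope (v : ι → Fin m → ℤ) : Convex ℝ (latticePolytope v) :=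
  convex_convexHull ℝ _

end LatticePolytope

section OptimalCoeffs

variable {m : ℕ} {ι : Type*} [Fintype ι] {v : ι → Fin m → ℤ}
  {c : Dual ℝ (ι → ℝ)} {ξ : ℝ × (Fin m → ℝ)}

/-- The translate of the integer lattice `ℤ × ℤ ^ m` by `ξ`. -/
def shiftedLattice (ξ : ℝ × (Fin m → ℝ)) : Set (ℝ × (Fin m → ℝ)) :=
  Set.range fun x : ℤ × (Fin m → ℤ) => ((x.1 : ℝ), intVec m x.2) + ξ

/-- The optimal coefficient vectors of the points of `shiftedLattice ξ` in the cone over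
`latticePolytope v`. -/
def optimalCoeffs (v : ι → Fin m → ℤ) (c : Dual ℝ (ι → ℝ)) (ξ : ℝ × (Fin m → ℝ)) :
    Set (ι → ℝ) :=
  {a | IsOptimal (homogenization (intVec m ∘ v)) c a ∧
    homogenization (intVec m ∘ v) a ∈ shiftedLattice ξ}

theorem homogenization_intCast (v : ι → Fin m → ℤ) (n : ι → ℤ) :
    homogenization (intVec m ∘ v) (Int.cast ∘ n) =
      (((∑ i, n i : ℤ) : ℝ), intVec m (∑ i, n i • v i)) := by
  rw [homogenization_apply]
  simp only [comp_apply, Int.cast_smul_eq_zsmul, Int.cast_sum, map_sum, map_zsmul]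

theorem add_homogenization_intCast_mem_shiftedLattice {y : ℝ × (Fin m → ℝ)}
    (hy : y ∈ shiftedLattice ξ) (n : ι → ℤ) :
    y + homogenization (intVec m ∘ v) (Int.cast ∘ n) ∈ shiftedLattice ξ := by
  obtain ⟨x, rfl⟩ := hy
  refine ⟨x + (∑ i, n i, ∑ i, n i • v i), ?_⟩
  simp only [homogenization_intCast, Prod.fst_add, Prod.snd_add, Int.cast_add, map_add,
    ← Prod.mk_add_mk, add_right_comm]

theorem image_slice_optimalCoeffs (hξ : 0 < ξ.1) (hξ' : ξ.1 < 1) (k : ℕ) :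
    homogenization (intVec m ∘ v) '' slice (optimalCoeffs v c ξ) k =
      (fun z => ((k : ℝ) + ξ.1, intVec m z + ξ.2)) '' shiftedPts (latticePolytope v) ξ k := by
  have hpos : (0 : ℝ) < k + ξ.1 := by positivity
  ext y
  constructor
  · rintro ⟨a, ⟨⟨hopt, x, hx⟩, rfl⟩, rfl⟩
    have hsum : ∑ i, a i = x.1 + ξ.1 := by
      simpa [homogenization_apply] using (congrArg Prod.fst hx).symm
    have hlevel : ((level a : ℤ) : ℝ) = x.1 :=
      congrArg Int.cast (natCast_level_eq hξ.le hξ' hopt.nonneg hsum)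
    rw [Int.cast_natCast] at hlevel
    refine ⟨x.2, mem_shiftedPts.2 <|
      (mem_smul_convexHull_range_iff hpos).2 ⟨a, hopt.nonneg, ?_⟩, ?_⟩
    · rw [← hx, hlevel]
      rfl
    · rw [← hx, hlevel]
      rfl
  · rintro ⟨z, hz, rfl⟩
    obtain ⟨a, ha, haz⟩ := (mem_smul_convexHull_range_iff hpos).1 (mem_shiftedPts.1 hz)
    obtain ⟨b, hb, hba⟩ := exists_isOptimal_map_eq (T := homogenization (intVec m ∘ v)) c ha
      (isBounded_nonneg_fiber_homogenization _ _)
    have hbz := hba.trans haz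
    have hsum : ∑ i, b i = (k : ℤ) + ξ.1 := by
      simpa [homogenization_apply] using congrArg Prod.fst hbz
    refine ⟨b, ⟨⟨hb, (k, z), ?_⟩, ?_⟩, hbz⟩
    · simp only [hbz, Int.cast_natCast]
      rfl
    · exact_mod_cast natCast_level_eq hξ.le hξ' hb.nonneg hsum

theorem finite_slice_optimalCoeffs (hc : IsGeneric (homogenization (intVec m ∘ v)) c)
    (hξ : 0 < ξ.1) (hξ' : ξ.1 < 1) (k : ℕ) : (slice (optimalCoeffs v c ξ) k).Finite := by
  refine Set.Finite.of_finite_image ?_ (hc.injOn.mono fun a ha => ha.1.1)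
  rw [image_slice_optimalCoeffs hξ hξ']
  exact (shiftedPts_finite (isCompact_latticePolytope v).isBounded k).image _

theorem ncard_slice_optimalCoeffs (hc : IsGeneric (homogenization (intVec m ∘ v)) c)
    (hξ : 0 < ξ.1) (hξ' : ξ.1 < 1) (k : ℕ) :
    (slice (optimalCoeffs v c ξ) k).ncard = (shiftedPts (latticePolytope v) ξ k).ncard := by
  rw [← Set.InjOn.ncard_image (hc.injOn.mono fun a ha => ha.1.1),
    image_slice_optimalCoeffs hξ hξ', Set.ncard_image_of_injective]
  intro z z' h
  exact isClosedEmbedding_intVec.injective (add_right_cancel (congrArg Prod.snd h))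

end OptimalCoeffs

section Count

variable {m : ℕ} {ι : Type*} [Finite ι] {v : ι → Fin m → ℤ}

theorem exists_shift_ncard_shiftedPts_eq_gradedCount {N : Set (ℝ × (Fin m → ℝ))}
    (hP : (interior (latticePolytope v)).Nonempty) (hN : N ∈ 𝓝 0) :
    ∃ ξ ∈ N, 0 < ξ.1 ∧ ξ.2 ∈ ξ.1 • latticePolytope v ∧
      ∃ (B : Finset (ι → ℝ)) (g : (ι → ℝ) → ℕ), (∀ b ∈ B, g b ≤ m) ∧
        ∀ k, (shiftedPts (latticePolytope v) ξ k).ncard = gradedCount m B g k := by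
  have := Fintype.ofFinite ι
  let T := homogenization (intVec m ∘ v)
  obtain ⟨c, hc⟩ := exists_isGeneric T
  have hdim : finrank ℝ (ℝ × (Fin m → ℝ)) = m + 1 := by simp [add_comm]
  obtain ⟨ξ, ⟨hgen, hξN, hξ'⟩, hξ, hξP⟩ := exists_mem_dense_inter_cone hP
    (dense_setOf_forall_finrank_le_ncard_support T
      (Set.countable_range fun x : ℤ × (Fin m → ℤ) => ((x.1 : ℝ), intVec m x.2)))
    (inter_mem hN (continuous_fst.continuousAt.eventually_lt_const zero_lt_one))
  have hA : IsBoxClosed m (optimalCoeffs v c ξ) := by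
    refine hc.isBoxClosed hdim
      (fun y hy n => add_homogenization_intCast_mem_shiftedLattice hy n) fun a ha => ?_
    obtain ⟨x, hx⟩ := ha
    rw [← hdim]
    exact hgen _ ⟨x, rfl⟩ a hx.symm
  have hfin := finite_slice_optimalCoeffs hc hξ hξ'
  refine ⟨ξ, hξN, hξ, hξP, (hA.box_finite hfin).toFinset, level, fun b hb => ?_, fun k => ?_⟩
  · exact hA.level_le_of_mem_box ((hA.box_finite hfin).mem_toFinset.1 hb)
  · rw [← ncard_slice_optimalCoeffs hc hξ hξ', hA.ncard_slice hfin]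

theorem exists_volume_mul_factorial_le_and_mul_choose_le {l : ℕ} (hm : 1 ≤ m) (hl : m ≤ l)
    (hP : (interior (latticePolytope v)).Nonempty) :
    ∃ N : ℕ, volume.real (latticePolytope v) * m.factorial ≤ N ∧
      N * (l + 1).choose (m + 1) ≤
        ∑ k ∈ Finset.Icc 1 l, (latticePts ((k : ℝ) • latticePolytope v)).ncard := by
  have hcompact := isCompact_latticePolytope v
  have hconvex := convex_latticePolytope v
  obtain ⟨ξ, hsubset, hξ, hξP, B, g, hg, hcount⟩ :=
    exists_shift_ncard_shiftedPts_eq_gradedCount hP ((eventually_all_finite (Set.finite_Iic l)).2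
      fun k _ => eventually_shiftedPts_subset hcompact k)
  have hsuperset := latticePts_smul_subset_shiftedPts hconvex hξ.le hξP
  have hzero : ∃ b ∈ B, g b = 0 := by
    refine exists_eq_zero_of_gradedCount_zero_ne_zero (d := m) ?_
    rw [← hcount 0]
    refine Set.ncard_ne_zero_of_mem (a := 0) ?_ (shiftedPts_finite hcompact.isBounded 0)
    simpa [mem_shiftedPts] using hξP
  refine ⟨B.card, volume_mul_factorial_le hconvex hcompact fun k _ => ?_, ?_⟩
  · calc (latticePts ((k : ℝ) • latticePolytope v)).ncard
        ≤ (shiftedPts (latticePolytope v) ξ k).ncard :=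
          Set.ncard_le_ncard (hsuperset k) (shiftedPts_finite hcompact.isBounded k)
      _ ≤ B.card * (k + m).choose m := (hcount k).trans_le (gradedCount_le m B g k)
  · refine Nat.le_of_lt_add_one ?_
    calc B.card * (l + 1).choose (m + 1)
        < ∑ k ∈ Finset.range (l + 1), gradedCount m B g k :=
          card_mul_choose_lt_sum_range_gradedCount hm hl hg hzero
      _ ≤ ∑ k ∈ Finset.range (l + 1), (latticePts ((k : ℝ) • latticePolytope v)).ncard :=
          Finset.sum_le_sum fun k hk => (hcount k).symm.trans_le <|
            Set.ncard_le_ncard (hsubset k (Finset.mem_range_succ_iff.1 hk))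
              (latticePts_finite (hcompact.isBounded.smul₀ _))
      _ ≤ ∑ k ∈ Finset.Icc 1 l, (latticePts ((k : ℝ) • latticePolytope v)).ncard + 1 := by
          rw [Finset.range_eq_Ico, Finset.sum_eq_sum_Ico_succ_bot l.succ_pos, add_comm,
            Nat.cast_zero]
          exact Nat.add_le_add_left ncard_latticePts_zero_smul_le_one _

theorem volume_mul_descFactorial_le {l : ℕ} (hm : 1 ≤ m) (hl : m ≤ l)
    (hP : (interior (latticePolytope v)).Nonempty) :
    volume.real (latticePolytope v) * (l + 1).descFactorial (m + 1) ≤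
      (m + 1) * (∑ k ∈ Finset.Icc 1 l, (latticePts ((k : ℝ) • latticePolytope v)).ncard : ℕ) := by
  obtain ⟨N, hvol, hsum⟩ := exists_volume_mul_factorial_le_and_mul_choose_le hm hl hP
  calc volume.real (latticePolytope v) * (l + 1).descFactorial (m + 1)
      = (m + 1) * (volume.real (latticePolytope v) * m.factorial * (l + 1).choose (m + 1)) := by
        rw [Nat.descFactorial_eq_factorial_mul_choose, Nat.factorial_succ]
        push_cast
        ring
    _ ≤ (m + 1) * (N * (l + 1).choose (m + 1)) := by gcongr
    _ ≤ _ := by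
        gcongr
        exact_mod_cast hsum

theorem div_exp_one_pow_mul_volume_le {l : ℕ} (hm : 1 ≤ m) (hl : m ≤ l)
    (hP : (interior (latticePolytope v)).Nonempty) :
    ((l + 1 : ℕ) / Real.exp 1) ^ (m + 1) * volume.real (latticePolytope v) ≤
      (m + 1) * (∑ k ∈ Finset.Icc 1 l, (latticePts ((k : ℝ) • latticePolytope v)).ncard : ℕ) :=
  calc ((l + 1 : ℕ) / Real.exp 1) ^ (m + 1) * volume.real (latticePolytope v)
      ≤ (l + 1).descFactorial (m + 1) * volume.real (latticePolytope v) := by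
        gcongr
        exact div_exp_one_pow_le_descFactorial (Nat.succ_le_succ hl)
    _ = volume.real (latticePolytope v) * (l + 1).descFactorial (m + 1) := mul_comm _ _
    _ ≤ _ := volume_mul_descFactorial_le hm hl hP

end Count

end EhrhartSum

/-- Let `P ⊆ ℝ^m` (`m ≥ 1`) be an `m`-dimensional lattice polytope and `n` a positive integer.
For every integer `λ ≥ max{ m, e·((m+1)·n / vol(P))^{1/(m+1)} }` one has
`Σ_{k=1}^{λ} |kP ∩ ℤ^m| > n`. -/
theorem sum_ehrhart_gt_n
    (m : ℕ) (hm : 1 ≤ m) (P : Set (Fin m → ℝ))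
    (hP : ∃ V : Finset (Fin m → ℤ),
      P = convexHull ℝ ((fun (v : Fin m → ℤ) (j : Fin m) => (v j : ℝ)) '' ↑V))
    (hPfull : (interior P).Nonempty)
    (n : ℕ) (hn : 1 ≤ n)
    (lam : ℕ) (hlam_m : m ≤ lam)
    (hlam_e : Real.exp 1 *
        (((m + 1 : ℝ) * n / (MeasureTheory.volume P).toReal) ^ ((1 : ℝ) / (m + 1)))
      ≤ (lam : ℝ)) :
    n < ∑ k ∈ Finset.Icc 1 lam, (latticePts ((k : ℝ) • P)).ncard := by
  obtain ⟨V, hV⟩ := hP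
  obtain rfl : P = EhrhartSum.latticePolytope ((↑) : V → Fin m → ℤ) :=
    hV.trans (congrArg (convexHull ℝ) (Set.image_eq_range _ _))
  have hvol := EhrhartSum.volume_real_latticePolytope_pos hPfull
  rw [one_div, ← Nat.cast_add_one] at hlam_e
  have hpow := EhrhartSum.le_div_pow_of_mul_rpow_inv_le m.succ_ne_zero (by positivity)
    (Real.exp_pos 1) hlam_e
  rw [Nat.cast_add_one] at hpow
  have hlt : (m + 1 : ℝ) * n < (m + 1) * (∑ k ∈ Finset.Icc 1 lam,
      (latticePts ((k : ℝ) • EhrhartSum.latticePolytope ((↑) : V → Fin m → ℤ))).ncard : ℕ) :=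
    calc (m + 1 : ℝ) * n
        ≤ (lam / Real.exp 1) ^ (m + 1) * _ := (div_le_iff₀ hvol).1 hpow
      _ < ((lam + 1 : ℕ) / Real.exp 1) ^ (m + 1) * _ := by gcongr; exact lam.lt_succ_self
      _ ≤ _ := EhrhartSum.div_exp_one_pow_mul_volume_le hm hlam_m hPfull
  exact_mod_cast lt_of_mul_lt_mul_left hlt (by positivity)
end

section
/- Let m ≥ 1, let P ⊆ ℝ^m be an m-dimensional lattice polytope, and let n, r be positive integers. Then for every integer λ ≥ max{ m, e·((m+1)·n·C(m+r, m+1) / vol(P))^{1/(m+1)} }, one has Σ_{k=1}^{λ} |kP ∩ ℤ^m| > n·C(m+r, m+1), where C(m+r, m+1) is the binomial coefficient. -/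
open scoped Pointwise

/-!
Let `C` be the cone over `P` placed at height one. Its lattice points of positive height at most
`λ` are the lattice points of the dilates `kP`, `1 ≤ k ≤ λ`, and its part of height at most one has
volume `vol P / (m + 1)`. Representing each point of `C` by its lexicographically least nonnegative
combination of the points spanning `P` triangulates `C` without new rays.

A full-dimensional cell of this triangulation is spanned by the rows of an integer matrix `M`, and
its part of height at most one has volume `|det M| / (m + 1)!`. With all its facets but one removed,
the cell contains the translates, by nonnegative integer combinations of the rows of `M`, of the
`|det M|` lattice points of a half-open parallelepiped. These points have heights between `1` and
`m`, so at least `|det M| * (λ + 1).choose (m + 1)` of the translates have height at most `λ`. The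
half-open cells are disjoint if each keeps a facet through which the vertical direction
`(1, 0, …, 0)` enters it. Summing over the cells yields `m! * vol P * (λ + 1).choose (m + 1)` as a
lower bound for the number of lattice points, and `q ^ d ≤ e ^ d * d! * q.choose d` turns the
hypothesis on `λ` into the claim.
-/

namespace Ehrhart

open Set Matrix MeasureTheory Function
open scoped Nat

/-! ### Lexicographic order -/

lemma toLex_cons_le_toLex_cons {α : Type*} [LinearOrder α] {d : ℕ} (a : α) {x y : Fin d → α}
    (h : toLex x ≤ toLex y) :
    toLex (Fin.cons a x : Fin (d + 1) → α) ≤ toLex (Fin.cons a y : Fin (d + 1) → α) := by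
  rcases h.eq_or_lt with heq | hlt
  · rw [toLex_inj.mp heq]
  · exact le_of_lt ((Fin.pi_lex_lt_cons_cons (· < ·)).mpr (Or.inr ⟨rfl, hlt⟩))

lemma exists_forall_toLex_le_of_isCompact {α : Type*} [LinearOrder α] [TopologicalSpace α]
    [OrderClosedTopology α] {d : ℕ} {K : Set (Fin d → α)} (hK : IsCompact K)
    (hne : K.Nonempty) : ∃ x ∈ K, ∀ y ∈ K, toLex x ≤ toLex y := by
  induction d with
  | zero =>
    obtain ⟨x, hx⟩ := hne
    exact ⟨x, hx, fun y _ => (congrArg toLex (Subsingleton.elim x y)).le⟩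
  | succ d ih =>
    obtain ⟨a, haK, ha_min⟩ := hK.exists_isMinOn hne (continuous_apply 0).continuousOn
    have hslice : IsCompact (Fin.tail '' (K ∩ {x | x 0 = a 0})) :=
      (hK.inter_right (isClosed_eq (continuous_apply 0) continuous_const)).image
        (continuous_pi fun j => continuous_apply j.succ)
    obtain ⟨_, ⟨x, ⟨hxK, hx0⟩, rfl⟩, hx_min⟩ := ih hslice ⟨_, a, ⟨haK, rfl⟩, rfl⟩
    refine ⟨x, hxK, fun y hyK => ?_⟩
    have hxy : x 0 ≤ y 0 := hx0.trans_le (ha_min hyK)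
    rcases hxy.eq_or_lt with heq | hlt
    · rw [← Fin.cons_self_tail x, ← Fin.cons_self_tail y, heq]
      exact toLex_cons_le_toLex_cons _ (hx_min _ ⟨y, ⟨hyK, heq.symm.trans hx0⟩, rfl⟩)
    · exact le_of_lt ⟨0, fun j hj => absurd hj (Fin.not_lt_zero j), hlt⟩

lemma toLex_smul_le_toLex_smul {ι R : Type*} [LinearOrder ι] [Mul R] [Zero R] [PartialOrder R]
    [PosMulStrictMono R] {a : R} (ha : 0 < a) {x y : ι → R} (h : toLex x ≤ toLex y) :
    toLex (a • x) ≤ toLex (a • y) := by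
  rcases h.eq_or_lt with heq | ⟨i, hlt_eq, hlt⟩
  · rw [toLex_inj.mp heq]
  · exact le_of_lt ⟨i, fun j hj => congrArg (a * ·) (hlt_eq j hj), mul_lt_mul_of_pos_left hlt ha⟩

lemma exists_pos_smul_le_of_support_subset {ι : Type*} [Finite ι] {c c' : ι → ℝ} (hc : 0 ≤ c)
    (h : support c' ⊆ support c) : ∃ ε : ℝ, 0 < ε ∧ ε • c' ≤ c := by
  have hev : ∀ i, ∀ᶠ ε in nhdsWithin (0 : ℝ) (Ioi 0), ε * c' i ≤ c i := by
    intro i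
    by_cases hi : c i = 0
    · have hi' : c' i = 0 := notMem_support.mp fun hmem => h hmem hi
      simp [hi, hi']
    · have hlim : Filter.Tendsto (fun ε : ℝ => ε * c' i) (nhdsWithin 0 (Ioi 0)) (nhds (0 * c' i)) :=
        (Continuous.tendsto (by fun_prop) 0).mono_left nhdsWithin_le_nhds
      rw [zero_mul] at hlim
      exact hlim.eventually_le_const ((hc i).lt_of_ne' hi)
  obtain ⟨ε, hle, hpos⟩ := ((Filter.eventually_all.mpr hev).and self_mem_nhdsWithin).exists
  exact ⟨ε, hpos, hle⟩

/-! ### The lexicographic triangulation of a cone -/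

section LexFace

variable {ι κ : Type*} [Fintype ι] [LinearOrder ι]

/-- `c` is a lexicographically least way of writing a point of the cone spanned by the rows of `A`,
namely `c ᵥ* A`, as a nonnegative combination of these rows. -/
def IsLexMin (A : Matrix ι κ ℝ) (c : ι → ℝ) : Prop :=
  0 ≤ c ∧ ∀ b, 0 ≤ b → b ᵥ* A = c ᵥ* A → toLex c ≤ toLex b

/-- `σ` indexes a face of the lexicographic (pulling) triangulation of the cone spanned by the rows
of `A`: every nonnegative combination of the rows in `σ` is lexicographically least. -/
def IsLexFace (A : Matrix ι κ ℝ) (σ : Set ι) : Prop :=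
  ∀ c, 0 ≤ c → support c ⊆ σ → IsLexMin A c

variable {A : Matrix ι κ ℝ} {c c' : ι → ℝ} {σ τ : Set ι}

lemma IsLexMin.eq_of_vecMul_eq (hc : IsLexMin A c) (hc' : IsLexMin A c')
    (h : c ᵥ* A = c' ᵥ* A) : c = c' :=
  toLex_inj.mp ((hc.2 c' hc'.1 h.symm).antisymm (hc'.2 c hc.1 h))

lemma IsLexMin.isLexFace_support (hc : IsLexMin A c) : IsLexFace A (support c) := by
  intro b hb hsupp
  refine ⟨hb, fun b' hb' heq => ?_⟩
  obtain ⟨ε, hε, hle⟩ := exists_pos_smul_le_of_support_subset hc.1 hsupp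
  -- Trading `ε • b` for another representation of the same vector keeps `c` nonnegative.
  have hlex : toLex c ≤ toLex (c - ε • b + ε • b') :=
    hc.2 _ (add_nonneg (sub_nonneg.mpr hle) (smul_nonneg hε.le hb'))
      (by rw [add_vecMul, sub_vecMul, smul_vecMul, smul_vecMul, heq, sub_add_cancel])
  have hε_lex : toLex (ε • b) ≤ toLex (ε • b') := by
    have hsum : toLex c + toLex (ε • b) ≤ toLex c + toLex (ε • b') := by
      calc toLex c + toLex (ε • b) ≤ toLex (c - ε • b + ε • b') + toLex (ε • b) :=
            add_le_add_left hlex _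
        _ = toLex c + toLex (ε • b') := by
            rw [← toLex_add, ← toLex_add, add_right_comm, sub_add_cancel]
    exact le_of_add_le_add_left hsum
  simpa [smul_smul, hε.ne'] using toLex_smul_le_toLex_smul (inv_pos.mpr hε) hε_lex

lemma IsLexFace.mono (hσ : IsLexFace A σ) (h : τ ⊆ σ) : IsLexFace A τ :=
  fun c hc hsupp => hσ c hc (hsupp.trans h)

lemma IsLexFace.eq_zero_of_vecMul_eq_zero (hσ : IsLexFace A σ) (hsupp : support c ⊆ σ)
    (h : c ᵥ* A = 0) : c = 0 := by
  have hpos : IsLexMin A c⁺ := hσ _ (posPart_nonneg c) fun i hi => hsupp fun h0 => hi (by simp [h0])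
  have hneg : IsLexMin A c⁻ := hσ _ (negPart_nonneg c) fun i hi => hsupp fun h0 => hi (by simp [h0])
  rw [← posPart_sub_negPart c, sub_vecMul, sub_eq_zero] at h
  rw [← posPart_sub_negPart c, hpos.eq_of_vecMul_eq hneg h, sub_self]

end LexFace

lemma extend_vecMul {ι κ μ R : Type*} [Fintype ι] [Fintype κ] [NonUnitalNonAssocSemiring R]
    {f : κ → ι} (hf : Injective f) (t : κ → R) (A : Matrix ι μ R) :
    extend f t 0 ᵥ* A = t ᵥ* A.submatrix f id := by
  ext j
  refine (Fintype.sum_of_injective f hf _ _ (fun i hi => ?_) fun k => ?_).symm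
  · rw [extend_apply' _ _ _ hi, Pi.zero_apply, zero_mul]
  · rw [hf.extend_apply]; rfl

lemma exists_isLexMin_vecMul_eq {N : ℕ} {κ : Type*} {A : Matrix (Fin N) κ ℝ} {j : κ}
    (hA : ∀ i, 0 < A i j) {c : Fin N → ℝ} (hc : 0 ≤ c) :
    ∃ c', IsLexMin A c' ∧ c' ᵥ* A = c ᵥ* A := by
  have hbdd : {b | 0 ≤ b ∧ b ᵥ* A = c ᵥ* A} ⊆ Icc 0 fun i => (c ᵥ* A) j / A i j := by
    rintro b ⟨hb, hbc⟩
    refine ⟨hb, fun i => (le_div_iff₀ (hA i)).mpr ?_⟩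
    rw [← hbc]
    exact Finset.single_le_sum (f := fun i => b i * A i j)
      (fun k _ => mul_nonneg (hb k) (hA k).le) (Finset.mem_univ i)
  have hclosed : IsClosed {b | 0 ≤ b ∧ b ᵥ* A = c ᵥ* A} :=
    isClosed_Ici.inter (isClosed_eq (by fun_prop) continuous_const)
  obtain ⟨c', ⟨hc', heq⟩, hmin⟩ :=
    exists_forall_toLex_le_of_isCompact (isCompact_Icc.of_isClosed_subset hclosed hbdd) ⟨c, hc, rfl⟩
  exact ⟨c', ⟨hc', fun b hb hbc => hmin b ⟨hb, hbc.trans heq⟩⟩, heq⟩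

/-- Index sets, listed increasingly, of the full-dimensional cells of the lexicographic
triangulation of the cone spanned by the rows of `A`. -/
noncomputable def lexFacets {N d : ℕ} (A : Matrix (Fin N) (Fin d) ℝ) : Finset (Fin d ↪o Fin N) :=
  {f : Fin d ↪o Fin N | IsLexFace A (range f)}.toFinite.toFinset

section LexFacets

variable {N d : ℕ} {A : Matrix (Fin N) (Fin d) ℝ} {f g : Fin d ↪o Fin N}

lemma mem_lexFacets : f ∈ lexFacets A ↔ IsLexFace A (range f) := by
  rw [lexFacets, Set.Finite.mem_toFinset, mem_ofPred_eq]

lemma isLexMin_extend_of_mem_lexFacets (hf : f ∈ lexFacets A) {t : Fin d → ℝ} (ht : 0 ≤ t) :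
    IsLexMin A (extend f t 0) :=
  mem_lexFacets.mp hf _ (extend_nonneg ht le_rfl)
    (support_extend_zero_subset.trans (image_subset_range _ _))

lemma det_submatrix_ne_zero_of_mem_lexFacets (hf : f ∈ lexFacets A) :
    (A.submatrix f id).det ≠ 0 := by
  intro hdet
  obtain ⟨t, ht, hzero⟩ := exists_vecMul_eq_zero_iff.mpr hdet
  have hext : extend f t 0 = 0 :=
    (mem_lexFacets.mp hf).eq_zero_of_vecMul_eq_zero
      (support_extend_zero_subset.trans (image_subset_range _ _))
      ((extend_vecMul f.injective t A).trans hzero)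
  exact ht (funext fun k => by rw [← f.injective.extend_apply t 0 k, hext]; rfl)

lemma exists_vecMul_submatrix_eq_of_mem_lexFacets (hf : f ∈ lexFacets A) (x : Fin d → ℝ) :
    ∃ t, t ᵥ* A.submatrix f id = x :=
  vecMul_surjective_iff_isUnit.mpr
    ((isUnit_iff_isUnit_det _).mpr (det_submatrix_ne_zero_of_mem_lexFacets hf).isUnit) x

lemma exists_mem_lexFacets_or_mem_span {j : Fin d} (hA : ∀ i, 0 < A i j) {c : Fin N → ℝ}
    (hc : 0 ≤ c) :
    (∃ f ∈ lexFacets A, ∃ t, 0 ≤ t ∧ t ᵥ* A.submatrix f id = c ᵥ* A) ∨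
      ∃ s : Finset (Fin N), s.card < d ∧ c ᵥ* A ∈ Submodule.span ℝ (A '' s) := by
  classical
  obtain ⟨c', hc', heq⟩ := exists_isLexMin_vecMul_eq hA hc
  rw [← heq]
  let s : Finset (Fin N) := {i | c' i ≠ 0}
  have hs : (s : Set (Fin N)) = support c' := by ext; simp [s]
  rcases lt_or_ge s.card d with hlt | hge
  · refine Or.inr ⟨s, hlt, ?_⟩
    rw [vecMul_eq_sum]
    refine Submodule.sum_mem _ fun i _ => ?_
    by_cases hi : c' i = 0
    · simp [hi]
    · exact Submodule.smul_mem _ _ (Submodule.subset_span ⟨i, by rw [hs]; exact hi, rfl⟩)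
  · left
    obtain ⟨u, hus, hu⟩ := Finset.exists_subset_card_eq hge
    have hsub : range (u.orderEmbOfFin hu) ⊆ support c' := by
      rw [Finset.range_orderEmbOfFin, ← hs]; exact_mod_cast hus
    have hf : u.orderEmbOfFin hu ∈ lexFacets A :=
      mem_lexFacets.mpr (hc'.isLexFace_support.mono hsub)
    obtain ⟨t, ht⟩ := exists_vecMul_submatrix_eq_of_mem_lexFacets hf (c' ᵥ* A)
    have hdiff : c' - extend (u.orderEmbOfFin hu) t 0 = 0 := by
      refine hc'.isLexFace_support.eq_zero_of_vecMul_eq_zero ?_ ?_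
      · exact (support_sub _ _).trans
          (union_subset subset_rfl
            (support_extend_zero_subset.trans ((image_subset_range _ _).trans hsub)))
      · rw [sub_vecMul, extend_vecMul (u.orderEmbOfFin hu).injective, ht, sub_self]
    refine ⟨_, hf, t, fun k => ?_, ht⟩
    rw [← (u.orderEmbOfFin hu).injective.extend_apply t 0 k, ← sub_eq_zero.mp hdiff]
    exact hc'.1 _

lemma eventually_forall_pos_smul_add {ι : Type*} [Finite ι] {t w : ι → ℝ} {i₀ : ι} (ht : 0 ≤ t)
    (ht_pos : ∀ i ≠ i₀, 0 < t i) (hw : 0 < w i₀) :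
    ∀ᶠ K : ℝ in Filter.atTop, ∀ i, 0 < (K • t + w) i := by
  refine Filter.eventually_all.mpr fun i => ?_
  rcases eq_or_ne i i₀ with rfl | hi
  · filter_upwards [Filter.eventually_ge_atTop 0] with K hK
    exact add_pos_of_nonneg_of_pos (mul_nonneg hK (ht i)) hw
  · exact (Filter.tendsto_atTop_add_const_right _ _
      (Filter.tendsto_id.atTop_mul_const (ht_pos i hi))).eventually_gt_atTop 0

/-- Half-open cells are disjoint: a short step from a common point in the common direction
`w ᵥ* A.submatrix f id` leads into the interior of both cells, where the lexicographically least
representation determines the cell. -/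
lemma eq_of_vecMul_submatrix_eq (hf : f ∈ lexFacets A) (hg : g ∈ lexFacets A)
    {t s w z : Fin d → ℝ} {i j : Fin d}
    (ht : 0 ≤ t) (ht_pos : ∀ k ≠ i, 0 < t k) (hs : 0 ≤ s) (hs_pos : ∀ k ≠ j, 0 < s k)
    (hw : 0 < w i) (hz : 0 < z j) (hts : t ᵥ* A.submatrix f id = s ᵥ* A.submatrix g id)
    (hwz : w ᵥ* A.submatrix f id = z ᵥ* A.submatrix g id) : f = g := by
  obtain ⟨K, htK, hsK⟩ := ((eventually_forall_pos_smul_add ht ht_pos hw).and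
    (eventually_forall_pos_smul_add hs hs_pos hz)).exists
  have hext : extend f (K • t + w) 0 = extend g (K • s + z) 0 := by
    refine (isLexMin_extend_of_mem_lexFacets hf fun k => (htK k).le).eq_of_vecMul_eq
      (isLexMin_extend_of_mem_lexFacets hg fun k => (hsK k).le) ?_
    rw [extend_vecMul f.injective, extend_vecMul g.injective, add_vecMul, add_vecMul, smul_vecMul,
      smul_vecMul, hts, hwz]
  have hsupp : ∀ (h : Fin d ↪o Fin N) (b : Fin d → ℝ), (∀ k, 0 < b k) →
      support (extend h b 0) = range h := by
    intro h b hb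
    rw [support_extend_zero h.injective, eq_univ_of_forall (s := support b) fun k => (hb k).ne',
      image_univ]
  exact OrderEmbedding.range_inj.mp (by rw [← hsupp f _ htK, hext, hsupp g _ hsK])

end LexFacets

/-! ### Lattice points of a half-open parallelepiped -/

lemma intCast_vecMul {ι κ : Type*} [Fintype ι] (n : ι → ℤ) (M : Matrix ι κ ℤ) :
    (fun j => ((n ᵥ* M) j : ℝ)) = (fun i => (n i : ℝ)) ᵥ* M.map (Int.cast : ℤ → ℝ) :=
  funext ((Int.castRingHom ℝ).map_vecMul M n)

section BoxPoints

variable {κ : Type*} [Fintype κ]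

/-- The lattice points of the parallelepiped consisting of the combinations of the rows of `M` whose
coefficient at the row `j` lies in `I j`; the sets `I j` allow for half-open parallelepipeds. -/
def boxPoints (M : Matrix κ κ ℤ) (I : κ → Set ℝ) : Set (κ → ℤ) :=
  {z | ∃ t ∈ univ.pi I, t ᵥ* M.map (Int.cast : ℤ → ℝ) = fun j => (z j : ℝ)}

variable [DecidableEq κ] {M : Matrix κ κ ℤ} {I : κ → Set ℝ}

lemma card_quotient_range_vecMulLinear (hM : M.det ≠ 0) :
    Nat.card ((κ → ℤ) ⧸ LinearMap.range M.vecMulLinear) = M.det.natAbs := by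
  have hinj : Injective M.vecMulLinear :=
    (injective_iff_map_eq_zero _).mpr fun _ h => eq_zero_of_vecMul_eq_zero hM h
  rw [← Submodule.natAbs_det_basis_change (Pi.basisFun ℤ κ) _
    ((Pi.basisFun ℤ κ).map (LinearEquiv.ofInjective M.vecMulLinear hinj)), Pi.basisFun_det]
  congr 2
  ext i j
  simp [Module.Basis.map_apply, LinearEquiv.ofInjective_apply]

lemma isUnit_map_intCast (hM : M.det ≠ 0) : IsUnit (M.map (Int.cast : ℤ → ℝ)) := by
  rw [isUnit_iff_isUnit_det, ← Int.cast_det]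
  exact (Int.cast_ne_zero.mpr hM).isUnit

lemma injOn_add_vecMul_boxPoints (hM : M.det ≠ 0) (hI : ∀ j (x : ℝ), ∃! n : ℤ, x + n ∈ I j) :
    InjOn (fun p : (κ → ℤ) × (κ → ℤ) => p.1 + p.2 ᵥ* M) (boxPoints M I ×ˢ univ) := by
  rintro ⟨z, n⟩ ⟨⟨t, ht, htz⟩, -⟩ ⟨z', n'⟩ ⟨⟨t', ht', htz'⟩, -⟩ heq
  have hcoeff : t + (fun j => (n j : ℝ)) = t' + fun j => (n' j : ℝ) := by
    refine vecMul_injective_of_isUnit (isUnit_map_intCast hM) ?_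
    beta_reduce
    rw [add_vecMul, add_vecMul, htz, htz', ← intCast_vecMul, ← intCast_vecMul]
    exact funext fun j => by simpa using congrArg (Int.cast : ℤ → ℝ) (congrFun heq j)
  have hn : n = n' := by
    funext j
    have hj : t' j + (n' j - n j : ℤ) = t j := by
      have hcoeff_j : t j + n j = t' j + n' j := congrFun hcoeff j
      push_cast
      linarith
    have hdiff : n' j - n j = 0 :=
      (hI j (t' j)).unique (by rw [hj]; exact ht j trivial) (by simpa using ht' j trivial)
    exact (sub_eq_zero.mp hdiff).symm
  subst hn
  exact Prod.ext (add_right_cancel heq) rfl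

lemma ncard_boxPoints (hM : M.det ≠ 0) (hI : ∀ j (x : ℝ), ∃! n : ℤ, x + n ∈ I j) :
    (boxPoints M I).ncard = M.det.natAbs := by
  rw [← card_quotient_range_vecMulLinear hM, ← Nat.card_coe_set_eq]
  refine Nat.card_eq_of_bijective (fun z => Submodule.Quotient.mk z.1) ⟨?_, ?_⟩
  · intro z z' h
    obtain ⟨n, hn⟩ := (Submodule.Quotient.eq _).mp h
    have hsum : z.1 + 0 ᵥ* M = z'.1 + n ᵥ* M := by
      rw [← vecMulLinear_apply M n, hn, zero_vecMul, add_zero, add_sub_cancel]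
    exact Subtype.ext (congrArg Prod.fst (injOn_add_vecMul_boxPoints hM hI
      (x₁ := (z.1, 0)) (x₂ := (z'.1, n)) ⟨z.2, trivial⟩ ⟨z'.2, trivial⟩ hsum))
  · intro q
    obtain ⟨z, rfl⟩ := Submodule.Quotient.mk_surjective _ q
    obtain ⟨t, ht⟩ := vecMul_surjective_iff_isUnit.mpr (isUnit_map_intCast hM) fun j => (z j : ℝ)
    choose n hn _ using fun j => hI j (t j)
    refine ⟨⟨z + n ᵥ* M, t + (fun j => (n j : ℝ)), fun j _ => hn j, ?_⟩,
      (Submodule.Quotient.eq _).mpr ⟨n, by simp⟩⟩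
    rw [add_vecMul, ← intCast_vecMul, show t ᵥ* _ = _ from ht]
    exact funext fun j => by simp

end BoxPoints

lemma existsUnique_add_intCast_mem_update_Ioc {κ : Type*} [DecidableEq κ] (i j : κ) (x : ℝ) :
    ∃! n : ℤ, x + n ∈ update (fun _ : κ => Ioc (0 : ℝ) 1) i (Ico 0 1) j := by
  rcases eq_or_ne j i with rfl | hj
  · simpa using existsUnique_add_zsmul_mem_Ico one_pos x 0
  · simpa [hj] using existsUnique_add_zsmul_mem_Ioc one_pos x 0

lemma ncard_setOf_sum_le (d M : ℕ) : {n : Fin d → ℕ | ∑ i, n i ≤ M}.ncard = (M + d).choose d := by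
  have hslack : {n : Fin d → ℕ | ∑ i, n i ≤ M} ≃ {n : Fin (d + 1) → ℕ // ∑ i, n i = M} :=
    { toFun := fun n => ⟨Fin.cons (M - ∑ i, n.1 i) n.1, by
        rw [Fin.sum_cons]; exact Nat.sub_add_cancel n.2⟩
      invFun := fun n => ⟨Fin.tail n.1, by
        exact (Nat.le_add_left _ _).trans ((Fin.sum_univ_succ n.1).symm.trans n.2).le⟩
      left_inv := fun n => by simp
      right_inv := fun n => by
        have hzero : M - ∑ i, Fin.tail n.1 i = n.1 0 :=
          Nat.sub_eq_of_eq_add ((Fin.sum_univ_succ n.1).symm.trans n.2).symm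
        exact Subtype.ext ((congrArg (Fin.cons · _) hzero).trans (Fin.cons_self_tail n.1)) }
  rw [← Nat.card_coe_set_eq, Nat.card_congr (hslack.trans (Sym.equivNatSumOfFintype _ _).symm),
    Nat.card_eq_fintype_card, Sym.card_sym_eq_choose, Fintype.card_fin, add_right_comm,
    Nat.add_sub_cancel, add_comm d, Nat.choose_symm_add]

/-! ### Lattice points of a truncated cone -/

lemma vecMul_apply_of_forall_eq_one {ι κ R : Type*} [Fintype ι] [NonAssocSemiring R]
    {A : Matrix ι κ R} {j : κ} (hA : ∀ i, A i j = 1) (c : ι → R) : (c ᵥ* A) j = ∑ i, c i := by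
  simp [vecMul, dotProduct, hA]

/-- The part of the cone spanned by the rows of `A` on which the first coordinate, the height, is
positive and at most `h`. -/
def truncatedCone {ι : Type*} [Fintype ι] {m : ℕ} (A : Matrix ι (Fin (m + 1)) ℝ) (h : ℝ) :
    Set (Fin (m + 1) → ℝ) :=
  {x | x 0 ∈ Ioc 0 h ∧ ∃ c, 0 ≤ c ∧ c ᵥ* A = x}

/-- The part of height at most `h` of the simplicial cone spanned by the rows of `M`, with all its
facets removed except the one opposite to the row `i`. -/
def halfOpenCell {m : ℕ} (M : Matrix (Fin (m + 1)) (Fin (m + 1)) ℝ) (i : Fin (m + 1)) (h : ℝ) :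
    Set (Fin (m + 1) → ℝ) :=
  {x | x 0 ∈ Ioc 0 h ∧ ∃ t, 0 ≤ t ∧ (∀ j ≠ i, 0 < t j) ∧ t ᵥ* M = x}

lemma isBounded_truncatedCone {ι : Type*} [Fintype ι] {m : ℕ} {A : Matrix ι (Fin (m + 1)) ℝ}
    (hA : ∀ i, A i 0 = 1) (h : ℝ) : Bornology.IsBounded (truncatedCone A h) := by
  refine ((isCompact_Icc (a := (0 : ι → ℝ)) (b := fun _ => h)).image
    (f := fun c => c ᵥ* A) (by fun_prop)).isBounded.subset ?_
  rintro _ ⟨hx, c, hc, rfl⟩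
  refine ⟨c, ⟨hc, fun i => ?_⟩, rfl⟩
  calc c i ≤ ∑ k, c k := Finset.single_le_sum (fun k _ => hc k) (Finset.mem_univ i)
    _ = (c ᵥ* A) 0 := (vecMul_apply_of_forall_eq_one hA c).symm
    _ ≤ h := hx.2

lemma finite_latticePts_of_isBounded {m : ℕ} {S : Set (Fin m → ℝ)} (hS : Bornology.IsBounded S) :
    (latticePts S).Finite := by
  obtain ⟨r, hr⟩ := hS.subset_closedBall 0
  refine (finite_Icc (fun _ => ⌈-r⌉) fun _ => ⌊r⌋).subset fun z hz => ?_
  have hnorm : ∀ j, |(z j : ℝ)| ≤ r := fun j =>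
    (norm_le_pi_norm (fun j => (z j : ℝ)) j).trans (mem_closedBall_zero_iff.mp (hr hz))
  exact ⟨fun j => Int.ceil_le.mpr (abs_le.mp (hnorm j)).1,
    fun j => Int.le_floor.mpr (abs_le.mp (hnorm j)).2⟩

lemma apply_zero_mem_Icc_of_mem_boxPoints {m : ℕ} (hm : 1 ≤ m)
    {M : Matrix (Fin (m + 1)) (Fin (m + 1)) ℤ} (hM : ∀ i, M i 0 = 1) {i : Fin (m + 1)}
    {z : Fin (m + 1) → ℤ} (hz : z ∈ boxPoints M (update (fun _ => Ioc 0 1) i (Ico 0 1))) :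
    z 0 ∈ Icc 1 (m : ℤ) := by
  obtain ⟨t, ht, htz⟩ := hz
  have hzero : (z 0 : ℝ) = ∑ j, t j := by
    rw [← congrFun htz 0]
    exact vecMul_apply_of_forall_eq_one (fun i => by simp [hM]) t
  have hti : t i ∈ Ico (0 : ℝ) 1 := by simpa using ht i trivial
  have htj : ∀ j, t (i.succAbove j) ∈ Ioc (0 : ℝ) 1 := fun j => by
    simpa [Fin.succAbove_ne] using ht (i.succAbove j) trivial
  rw [Fin.sum_univ_succAbove _ i] at hzero
  have hpos : 0 < ∑ j, t (i.succAbove j) :=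
    Finset.sum_pos (fun j _ => (htj j).1) ⟨⟨0, hm⟩, Finset.mem_univ _⟩
  have hle : ∑ j, t (i.succAbove j) ≤ m := by
    simpa using Finset.sum_le_sum fun j (_ : j ∈ Finset.univ) => (htj j).2
  have hz_pos : (0 : ℝ) < z 0 := by linarith [hti.1]
  have hz_lt : (z 0 : ℝ) < m + 1 := by linarith [hti.2]
  exact ⟨by exact_mod_cast hz_pos, Int.lt_add_one_iff.mp (by exact_mod_cast hz_lt)⟩

lemma add_vecMul_mem_latticePts_halfOpenCell {m : ℕ} (hm : 1 ≤ m)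
    {M : Matrix (Fin (m + 1)) (Fin (m + 1)) ℤ} (hM : ∀ i, M i 0 = 1) {i : Fin (m + 1)} {lam : ℕ}
    (hlam : m ≤ lam) {z : Fin (m + 1) → ℤ}
    (hz : z ∈ boxPoints M (update (fun _ => Ioc 0 1) i (Ico 0 1))) {n : Fin (m + 1) → ℕ}
    (hn : ∑ j, n j ≤ lam - m) :
    z + (fun j => (n j : ℤ)) ᵥ* M ∈ latticePts (halfOpenCell (M.map Int.cast) i lam) := by
  have hheight := apply_zero_mem_Icc_of_mem_boxPoints hm hM hz
  obtain ⟨t, ht, htz⟩ := hz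
  have htj : ∀ j ≠ i, 0 < t j := fun j hj =>
    (show t j ∈ Ioc 0 1 by simpa [hj] using ht j trivial).1
  have hti : 0 ≤ t i := (show t i ∈ Ico 0 1 by simpa using ht i trivial).1
  have ht_nonneg : ∀ j, 0 ≤ t j := fun j => by
    rcases eq_or_ne j i with rfl | hj
    exacts [hti, (htj j hj).le]
  refine ⟨?_, t + fun j => (n j : ℝ), fun j => add_nonneg (ht_nonneg j) (Nat.cast_nonneg _),
    fun j hj => add_pos_of_pos_of_nonneg (htj j hj) (Nat.cast_nonneg _), ?_⟩
  · have hzero : (z + (fun j => (n j : ℤ)) ᵥ* M) 0 = z 0 + ((∑ j, n j : ℕ) : ℤ) := by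
      rw [Pi.add_apply, vecMul_apply_of_forall_eq_one hM, Nat.cast_sum]
    have hn_le : ((∑ j, n j : ℕ) : ℤ) ≤ lam - m := by lia
    have hle : z 0 + ((∑ j, n j : ℕ) : ℤ) ≤ lam := by linarith [hheight.2, hn_le]
    have hpos : 0 < z 0 + ((∑ j, n j : ℕ) : ℤ) :=
      add_pos_of_pos_of_nonneg hheight.1 (Nat.cast_nonneg _)
    beta_reduce
    rw [hzero]
    exact ⟨by exact_mod_cast hpos, by exact_mod_cast hle⟩
  · have hnM := intCast_vecMul (fun j => (n j : ℤ)) M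
    simp only [Int.cast_natCast] at hnM
    rw [add_vecMul, htz, ← hnM]
    exact funext fun j => by simp

lemma natAbs_det_mul_choose_le_ncard_latticePts_halfOpenCell {m : ℕ} (hm : 1 ≤ m)
    {M : Matrix (Fin (m + 1)) (Fin (m + 1)) ℤ} (hM : ∀ i, M i 0 = 1) (hdet : M.det ≠ 0)
    (i : Fin (m + 1)) (lam : ℕ) :
    M.det.natAbs * (lam + 1).choose (m + 1) ≤
      (latticePts (halfOpenCell (M.map Int.cast) i lam)).ncard := by
  rcases lt_or_ge lam m with hlt | hge
  · rw [Nat.choose_eq_zero_of_lt (by lia), mul_zero]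
    exact Nat.zero_le _
  have hI := existsUnique_add_intCast_mem_update_Ioc i
  have hchoose : (lam + 1).choose (m + 1) = {n : Fin (m + 1) → ℕ | ∑ j, n j ≤ lam - m}.ncard := by
    rw [ncard_setOf_sum_le, ← add_assoc, Nat.sub_add_cancel hge]
  have hbdd : Bornology.IsBounded (halfOpenCell (M.map (Int.cast : ℤ → ℝ)) i lam) :=
    (isBounded_truncatedCone (fun i => by simp [hM]) lam).subset
      fun x ⟨hx, t, ht, _, htx⟩ => ⟨hx, t, ht, htx⟩
  rw [hchoose, ← ncard_boxPoints hdet hI, ← ncard_prod]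
  refine ncard_le_ncard_of_injOn (fun p => p.1 + (fun j => (p.2 j : ℤ)) ᵥ* M)
    (fun p hp => add_vecMul_mem_latticePts_halfOpenCell hm hM hge hp.1 hp.2) ?_
    (finite_latticePts_of_isBounded hbdd)
  rintro ⟨z, n⟩ hp ⟨z', n'⟩ hp' heq
  obtain ⟨rfl, hn⟩ := Prod.ext_iff.mp (injOn_add_vecMul_boxPoints hdet hI
    (x₁ := (z, fun j => (n j : ℤ))) (x₂ := (z', fun j => (n' j : ℤ)))
    ⟨hp.1, trivial⟩ ⟨hp'.1, trivial⟩ heq)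
  exact Prod.ext rfl (funext fun j => Nat.cast_injective (congrFun hn j))

lemma exists_vecMul_eq_single_zero_of_mem_lexFacets {N m : ℕ} {A : Matrix (Fin N) (Fin (m + 1)) ℝ}
    (hA : ∀ i, A i 0 = 1) {f : Fin (m + 1) ↪o Fin N} (hf : f ∈ lexFacets A) :
    ∃ (w : Fin (m + 1) → ℝ) (i : Fin (m + 1)),
      w ᵥ* A.submatrix f id = Pi.single 0 1 ∧ 0 < w i := by
  obtain ⟨w, hw⟩ := exists_vecMul_submatrix_eq_of_mem_lexFacets hf (Pi.single 0 1)
  have hsum : 0 < ∑ i, w i := by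
    rw [← vecMul_apply_of_forall_eq_one (A := A.submatrix f id) (j := 0) (fun i => hA (f i)), hw]
    simp
  obtain ⟨i, -, hi⟩ := Finset.exists_lt_of_sum_lt (f := fun _ => 0) (g := w) (by simpa using hsum)
  exact ⟨w, i, hw, hi⟩

lemma sum_natAbs_det_mul_choose_le_ncard_latticePts_truncatedCone {N m : ℕ} (hm : 1 ≤ m)
    {A : Matrix (Fin N) (Fin (m + 1)) ℤ} (hA : ∀ i, A i 0 = 1) (lam : ℕ) :
    (∑ f ∈ lexFacets (A.map Int.cast), (A.submatrix f id).det.natAbs) * (lam + 1).choose (m + 1) ≤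
      (latticePts (truncatedCone (A.map Int.cast) lam)).ncard := by
  have hAR : ∀ i, A.map (Int.cast : ℤ → ℝ) i 0 = 1 := fun i => by simp [hA]
  choose! w i hw hwi using fun f => exists_vecMul_eq_single_zero_of_mem_lexFacets (f := f) hAR
  let cell (f : Fin (m + 1) ↪o Fin N) :=
    latticePts (halfOpenCell ((A.map (Int.cast : ℤ → ℝ)).submatrix f id) (i f) lam)
  have hfin := finite_latticePts_of_isBounded (isBounded_truncatedCone hAR lam)
  have hsub : ∀ f, cell f ⊆ latticePts (truncatedCone (A.map Int.cast) lam) := by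
    rintro f x ⟨hx, t, ht, -, htx⟩
    exact ⟨hx, extend f t 0, extend_nonneg ht le_rfl, (extend_vecMul f.injective t _).trans htx⟩
  have hdisj : (lexFacets (A.map (Int.cast : ℤ → ℝ)) : Set _).PairwiseDisjoint cell := by
    intro f hf g hg hne
    refine disjoint_left.mpr ?_
    rintro x ⟨-, t, ht, ht_pos, htx⟩ ⟨-, s, hs, hs_pos, hsx⟩
    exact hne (eq_of_vecMul_submatrix_eq hf hg ht ht_pos hs hs_pos (hwi f hf) (hwi g hg)
      (htx.trans hsx.symm) ((hw f hf).trans (hw g hg).symm))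
  calc (∑ f ∈ lexFacets (A.map Int.cast), (A.submatrix f id).det.natAbs) * (lam + 1).choose (m + 1)
      ≤ ∑ f ∈ lexFacets (A.map Int.cast), (cell f).ncard := by
        rw [Finset.sum_mul]
        refine Finset.sum_le_sum fun f hf => ?_
        refine natAbs_det_mul_choose_le_ncard_latticePts_halfOpenCell hm (fun i => hA (f i)) ?_ _ _
        have hdet := det_submatrix_ne_zero_of_mem_lexFacets hf
        rw [submatrix_map, ← Int.cast_det] at hdet
        exact Int.cast_ne_zero.mp hdet
    _ = (⋃ f ∈ lexFacets (A.map (Int.cast : ℤ → ℝ)), cell f).ncard := by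
        rw [← finsum_mem_coe_finset]
        exact ((Finset.finite_toSet _).ncard_biUnion (fun f _ => hfin.subset (hsub f)) hdisj).symm
    _ ≤ (latticePts (truncatedCone (A.map Int.cast) lam)).ncard :=
        ncard_le_ncard (iUnion₂_subset fun f _ => hsub f) hfin

/-! ### The cone over a polytope -/

section Homogenize

variable {ι R : Type*} {m : ℕ}

/-- The matrix whose rows are the points `v i` placed at height one, that is, preceded by a
coordinate `1`; these rows span the cone over the convex hull of the points. -/
def homogenize [One R] (v : ι → Fin m → R) : Matrix ι (Fin (m + 1)) R :=
  Matrix.of fun i => Fin.cons 1 (v i)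

lemma homogenize_map_intCast (v : ι → Fin m → ℤ) :
    (homogenize v).map (Int.cast : ℤ → ℝ) = homogenize fun i j => (v i j : ℝ) := by
  ext i j
  refine Fin.cases ?_ (fun j => ?_) j <;> simp [homogenize]

variable [Fintype ι]

lemma vecMul_homogenize [NonAssocSemiring R] (c : ι → R) (v : ι → Fin m → R) :
    c ᵥ* homogenize v = Fin.cons (∑ i, c i) (c ᵥ* Matrix.of v) := by
  ext j
  refine Fin.cases ?_ (fun j => ?_) j <;> simp [homogenize, vecMul, dotProduct]

lemma convexHull_range_eq_image_stdSimplex (v : ι → Fin m → ℝ) :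
    convexHull ℝ (range v) = (fun c => c ᵥ* Matrix.of v) '' stdSimplex ℝ ι := by
  classical
  have himage := (Matrix.of v).vecMulLinear.image_convexHull
    (range fun i : ι => Pi.single i (1 : ℝ))
  rw [convexHull_rangle_single_eq_stdSimplex, ← range_comp] at himage
  refine (congrArg _ (congrArg range (funext fun i => ?_))).trans himage.symm
  simp

lemma cons_mem_truncatedCone_homogenize {v : ι → Fin m → ℝ} {h x : ℝ} {y : Fin m → ℝ} :
    (Fin.cons x y : Fin (m + 1) → ℝ) ∈ truncatedCone (homogenize v) h ↔
      x ∈ Ioc 0 h ∧ y ∈ x • convexHull ℝ (range v) := by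
  refine and_congr_right fun hheight => ?_
  have hx : 0 < x := hheight.1
  simp only [vecMul_homogenize, Fin.cons_inj, convexHull_range_eq_image_stdSimplex]
  constructor
  · rintro ⟨c, hc, hsum, rfl⟩
    refine ⟨_, ⟨x⁻¹ • c, ⟨fun i => mul_nonneg (inv_nonneg.mpr hx.le) (hc i), ?_⟩, rfl⟩, ?_⟩
    · simp [← Finset.mul_sum, hsum, hx.ne']
    · simp [smul_vecMul, hx.ne']
  · rintro ⟨_, ⟨w, hw, rfl⟩, rfl⟩
    exact ⟨x • w, smul_nonneg hx.le hw.1, by simp [← Finset.mul_sum, hw.2], smul_vecMul _ _ _⟩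

end Homogenize

lemma latticePts_truncatedCone_homogenize_subset {ι : Type*} [Fintype ι] {m : ℕ}
    (v : ι → Fin m → ℝ) (lam : ℕ) :
    latticePts (truncatedCone (homogenize v) lam) ⊆ ⋃ k ∈ Finset.Icc 1 lam,
      Fin.cons (k : ℤ) '' latticePts ((k : ℝ) • convexHull ℝ (range v)) := by
  intro z hz
  have hcons : (fun j => (z j : ℝ)) = Fin.cons (z 0 : ℝ) fun j => (Fin.tail z j : ℝ) :=
    (Fin.cons_self_tail fun j => (z j : ℝ)).symm
  rw [latticePts, mem_ofPred_eq, hcons, cons_mem_truncatedCone_homogenize] at hz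
  obtain ⟨hheight, htail⟩ := hz
  have hpos : 0 < z 0 := by exact_mod_cast hheight.1
  have hle : z 0 ≤ lam := by exact_mod_cast hheight.2
  obtain ⟨k, hk⟩ := Int.eq_ofNat_of_zero_le hpos.le
  rw [hk, Int.cast_natCast] at htail
  refine mem_iUnion₂.mpr ⟨k, Finset.mem_Icc.mpr ⟨by lia, by lia⟩, Fin.tail z, htail, ?_⟩
  rw [← hk, Fin.cons_self_tail]

lemma ncard_latticePts_truncatedCone_homogenize_le {ι : Type*} [Fintype ι] {m : ℕ}
    (v : ι → Fin m → ℝ) (lam : ℕ) :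
    (latticePts (truncatedCone (homogenize v) lam)).ncard ≤
      ∑ k ∈ Finset.Icc 1 lam, (latticePts ((k : ℝ) • convexHull ℝ (range v))).ncard := by
  have hfin : ∀ k : ℕ, (latticePts ((k : ℝ) • convexHull ℝ (range v))).Finite := fun k =>
    finite_latticePts_of_isBounded ((isBounded_convexHull.mpr (finite_range v).isBounded).smul₀ _)
  refine (ncard_le_ncard (latticePts_truncatedCone_homogenize_subset v lam)
    ((Finset.finite_toSet _).biUnion fun k _ => (hfin k).image _)).trans ?_
  refine (Finset.set_ncard_biUnion_le _ _).trans (Finset.sum_le_sum fun k _ => ?_)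
  exact ncard_image_le (hfin k)

/-! ### Volumes -/

lemma volume_eq_lintegral_volume_cons {m : ℕ} {S : Set (Fin (m + 1) → ℝ)} (hS : MeasurableSet S) :
    volume S = ∫⁻ h : ℝ, volume {y : Fin m → ℝ | (Fin.cons h y : Fin (m + 1) → ℝ) ∈ S} := by
  have hmp := (volume_preserving_piFinSuccAbove (fun _ : Fin (m + 1) => ℝ) 0).symm
  rw [← hmp.measure_preimage hS.nullMeasurableSet, Measure.volume_eq_prod,
    Measure.prod_apply (hmp.measurable hS)]
  refine lintegral_congr fun h => congrArg volume (Set.ext fun y => ?_)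
  simp [MeasurableEquiv.piFinSuccAbove, Fin.insertNthEquiv, Fin.insertNth_zero']

lemma setLIntegral_Ioc_ofReal_eq_ofReal_intervalIntegral {f : ℝ → ℝ} {a b : ℝ} (hab : a ≤ b)
    (hf : ContinuousOn f (Icc a b)) (hf_nonneg : ∀ x ∈ Ioc a b, 0 ≤ f x) :
    ∫⁻ x in Ioc a b, ENNReal.ofReal (f x) = ENNReal.ofReal (∫ x in a..b, f x) := by
  rw [intervalIntegral.integral_of_le hab, ofReal_integral_eq_lintegral_ofReal
    (hf.integrableOn_Icc.mono_set Ioc_subset_Icc_self)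
    (ae_restrict_of_forall_mem measurableSet_Ioc hf_nonneg)]

/-- The simplex cut off from the nonnegative orthant of `ℝ ^ d` by the hyperplane on which the
coordinates sum to `r`. -/
def cornerSimplex (d : ℕ) (r : ℝ) : Set (Fin d → ℝ) :=
  {t | 0 ≤ t ∧ ∑ i, t i ≤ r}

lemma cons_mem_cornerSimplex {d : ℕ} {r h : ℝ} {y : Fin d → ℝ} :
    (Fin.cons h y : Fin (d + 1) → ℝ) ∈ cornerSimplex (d + 1) r ↔
      0 ≤ h ∧ y ∈ cornerSimplex d (r - h) := by
  simp only [cornerSimplex, mem_ofPred_eq, Fin.sum_cons, le_sub_iff_add_le', ← and_assoc]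
  refine and_congr_left fun _ => ?_
  simp [Pi.le_def, Fin.forall_fin_succ]

lemma volume_cornerSimplex {d : ℕ} {r : ℝ} (hr : 0 ≤ r) :
    volume (cornerSimplex d r) = ENNReal.ofReal (r ^ d / d !) := by
  induction d generalizing r with
  | zero =>
    have huniv : cornerSimplex 0 r = univ := eq_univ_of_forall fun t => by
      simpa [cornerSimplex, Subsingleton.elim t 0] using hr
    simp [huniv, volume_pi]
  | succ d ih =>
    have hclosed : IsClosed (cornerSimplex (d + 1) r) :=
      isClosed_Ici.inter (isClosed_le (f := fun t : Fin (d + 1) → ℝ => ∑ i, t i) (by fun_prop)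
        continuous_const)
    have hslice : ∀ h : ℝ, volume {y : Fin d → ℝ | Fin.cons h y ∈ cornerSimplex (d + 1) r} =
        (Icc 0 r).indicator (fun h => ENNReal.ofReal ((r - h) ^ d / d !)) h := by
      intro h
      simp only [cons_mem_cornerSimplex]
      by_cases hh : h ∈ Icc 0 r
      · rw [indicator_of_mem hh, ← ih (sub_nonneg.mpr hh.2)]
        simp [hh.1]
      · rw [indicator_of_notMem hh]
        refine measure_mono_null (t := ∅) ?_ measure_empty
        rintro y ⟨hh0, hy0, hy⟩
        exact hh ⟨hh0, sub_nonneg.mp ((Finset.sum_nonneg fun i _ => hy0 i).trans hy)⟩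
    rw [volume_eq_lintegral_volume_cons hclosed.measurableSet]
    simp only [hslice]
    rw [lintegral_indicator measurableSet_Icc, setLIntegral_congr Ioc_ae_eq_Icc.symm,
      setLIntegral_Ioc_ofReal_eq_ofReal_intervalIntegral hr (by fun_prop) fun x hx =>
        div_nonneg (pow_nonneg (sub_nonneg.mpr hx.2) d) (Nat.cast_nonneg _)]
    congr 1
    rw [intervalIntegral.integral_div, intervalIntegral.integral_comp_sub_left (fun x => x ^ d) r,
      integral_pow, Nat.factorial_succ]
    push_cast
    field_simp
    simp

lemma volume_div_succ_le_volume_of_cons_mem {m : ℕ} {P : Set (Fin m → ℝ)}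
    {S : Set (Fin (m + 1) → ℝ)}
    (hS : ∀ h ∈ Ioc (0 : ℝ) 1, ∀ y ∈ h • P, (Fin.cons h y : Fin (m + 1) → ℝ) ∈ S) :
    ENNReal.ofReal (1 / (m + 1)) * volume P ≤ volume S := by
  have hpow : ∫⁻ h in Ioc (0 : ℝ) 1, ENNReal.ofReal (h ^ m) = ENNReal.ofReal (1 / (m + 1)) := by
    rw [setLIntegral_Ioc_ofReal_eq_ofReal_intervalIntegral zero_le_one (by fun_prop)
      fun h hh => pow_nonneg hh.1.le m, integral_pow]
    simp
  rw [← measure_toMeasurable S, volume_eq_lintegral_volume_cons (measurableSet_toMeasurable _ _),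
    ← hpow, ← lintegral_mul_const _ (by fun_prop)]
  refine (setLIntegral_mono' measurableSet_Ioc fun h hh => ?_).trans (setLIntegral_le_lintegral _ _)
  calc ENNReal.ofReal (h ^ m) * volume P = volume (h • P) := by
        rw [Measure.addHaar_smul, Module.finrank_fin_fun, abs_of_nonneg (pow_nonneg hh.1.le m)]
    _ ≤ volume {y | (Fin.cons h y : Fin (m + 1) → ℝ) ∈ toMeasurable volume S} :=
        measure_mono fun y hy => subset_toMeasurable _ _ (hS h hh y hy)

lemma volume_span_image_eq_zero {ι κ : Type*} [Fintype κ] {v : ι → κ → ℝ} {s : Finset ι}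
    (hs : s.card < Fintype.card κ) :
    volume (Submodule.span ℝ (v '' s) : Set (κ → ℝ)) = 0 := by
  classical
  refine Measure.addHaar_submodule _ _ fun htop => hs.not_ge ?_
  calc Fintype.card κ = Module.finrank ℝ (Submodule.span ℝ (v '' s)) := by
        rw [htop, finrank_top, Module.finrank_fintype_fun_eq_card]
    _ ≤ (s.image v).card := by
        rw [← Finset.coe_image]
        exact finrank_span_finset_le_card _
    _ ≤ s.card := Finset.card_image_le

lemma det_vecMulLinear {κ R : Type*} [Fintype κ] [DecidableEq κ] [CommRing R] (M : Matrix κ κ R) :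
    LinearMap.det M.vecMulLinear = M.det := by
  have htoLin : M.vecMulLinear = toLin' Mᵀ := LinearMap.ext fun t => by
    rw [vecMulLinear_apply, toLin'_apply, mulVec_transpose]
  rw [htoLin, LinearMap.det_toLin', det_transpose]

lemma volume_truncatedCone_le {N m : ℕ} {A : Matrix (Fin N) (Fin (m + 1)) ℝ}
    (hA : ∀ i, A i 0 = 1) :
    volume (truncatedCone A 1) ≤
      ∑ f ∈ lexFacets A, ENNReal.ofReal (|(A.submatrix f id).det| / (m + 1)!) := by
  let simplex (f : Fin (m + 1) ↪o Fin N) :=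
    (A.submatrix f id).vecMulLinear '' cornerSimplex (m + 1) 1
  let lower := ⋃ s ∈ {s : Finset (Fin N) | s.card < m + 1},
    (Submodule.span ℝ (A '' s) : Set (Fin (m + 1) → ℝ))
  have hlower : volume lower = 0 :=
    (measure_biUnion_null_iff (to_countable _)).mpr fun s hs =>
      volume_span_image_eq_zero (hs.trans_eq (Fintype.card_fin _).symm)
  have hcover : truncatedCone A 1 ⊆ (⋃ f ∈ lexFacets A, simplex f) ∪ lower := by
    rintro _ ⟨hheight, c, hc, rfl⟩
    rcases exists_mem_lexFacets_or_mem_span (fun i => (hA i).symm ▸ one_pos) hc with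
      ⟨f, hf, t, ht, htx⟩ | ⟨s, hs, hx⟩
    · refine Or.inl (mem_iUnion₂.mpr ⟨f, hf, t, ⟨ht, ?_⟩, htx⟩)
      rw [← vecMul_apply_of_forall_eq_one (A := A.submatrix f id) (j := 0) fun i => hA (f i), htx]
      exact hheight.2
    · exact Or.inr (mem_iUnion₂.mpr ⟨s, hs, hx⟩)
  have hsimplex : ∀ f, volume (simplex f) =
      ENNReal.ofReal (|(A.submatrix f id).det| / (m + 1)!) := by
    intro f
    rw [Measure.addHaar_image_linearMap, volume_cornerSimplex zero_le_one,
      ← ENNReal.ofReal_mul (abs_nonneg _), one_pow, mul_one_div,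
      det_vecMulLinear]
  calc volume (truncatedCone A 1)
      ≤ volume (⋃ f ∈ lexFacets A, simplex f) + volume lower :=
        (measure_mono hcover).trans (measure_union_le _ _)
    _ ≤ ∑ f ∈ lexFacets A, volume (simplex f) := by
        rw [hlower, add_zero]
        exact measure_biUnion_finset_le _ _
    _ = _ := Finset.sum_congr rfl fun f _ => hsimplex f

lemma factorial_mul_volume_convexHull_le {N m : ℕ} (v : Fin N → Fin m → ℝ) :
    m ! * (volume (convexHull ℝ (range v))).toReal ≤
      ∑ f ∈ lexFacets (homogenize v), |((homogenize v).submatrix f id).det| := by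
  have hcone := volume_div_succ_le_volume_of_cons_mem (P := convexHull ℝ (range v))
    (S := truncatedCone (homogenize v) 1)
    fun h hh y hy => cons_mem_truncatedCone_homogenize.mpr ⟨hh, hy⟩
  have hle := hcone.trans (volume_truncatedCone_le fun i => by simp [homogenize])
  rw [← ENNReal.ofReal_sum_of_nonneg fun f _ => by positivity, ← Finset.sum_div] at hle
  have hreal := ENNReal.toReal_le_of_le_ofReal (by positivity) hle
  rw [ENNReal.toReal_mul, ENNReal.toReal_ofReal (by positivity), le_div_iff₀ (by positivity),
    Nat.factorial_succ] at hreal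
  push_cast at hreal
  field_simp at hreal
  linarith

/-! ### Comparison with the volume -/

lemma factorial_mul_volume_mul_choose_le_sum_ncard_latticePts {N m : ℕ} (hm : 1 ≤ m)
    (v : Fin N → Fin m → ℤ) (lam : ℕ) :
    m ! * (volume (convexHull ℝ (range fun i j => (v i j : ℝ)))).toReal * (lam + 1).choose (m + 1) ≤
      ∑ k ∈ Finset.Icc 1 lam,
        ((latticePts ((k : ℝ) • convexHull ℝ (range fun i j => (v i j : ℝ)))).ncard : ℝ) := by
  have hdet : ∀ f : Fin (m + 1) ↪o Fin N,
      |((homogenize fun i j => (v i j : ℝ)).submatrix f id).det| =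
        (((homogenize v).submatrix f id).det.natAbs : ℝ) := fun f => by
    rw [← homogenize_map_intCast, submatrix_map, ← Int.cast_det, Nat.cast_natAbs, Int.cast_abs]
  have hcount := sum_natAbs_det_mul_choose_le_ncard_latticePts_truncatedCone hm
    (A := homogenize v) (fun i => by simp [homogenize]) lam
  rw [homogenize_map_intCast] at hcount
  calc m ! * (volume (convexHull ℝ (range fun i j => (v i j : ℝ)))).toReal *
        (lam + 1).choose (m + 1)
      ≤ (∑ f ∈ lexFacets (homogenize fun i j => (v i j : ℝ)),
          (((homogenize v).submatrix f id).det.natAbs : ℝ)) * (lam + 1).choose (m + 1) := by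
        simp only [← hdet]
        gcongr
        exact factorial_mul_volume_convexHull_le _
    _ ≤ ∑ k ∈ Finset.Icc 1 lam,
          ((latticePts ((k : ℝ) • convexHull ℝ (range fun i j => (v i j : ℝ)))).ncard : ℝ) := by
        exact_mod_cast hcount.trans (ncard_latticePts_truncatedCone_homogenize_le _ lam)

/-! ### Binomial estimates -/

lemma div_pow_le_choose {q d : ℕ} (h : d ≤ q) : ((q : ℝ) / d) ^ d ≤ q.choose d := by
  induction d generalizing q with
  | zero => simp
  | succ d ih =>
    obtain ⟨q, rfl⟩ := Nat.exists_eq_add_of_le' (Nat.one_le_of_lt h)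
    have hdq : d ≤ q := Nat.le_of_succ_le_succ h
    have habsorb : ((q + 1).choose (d + 1) : ℝ) = (q + 1) / (d + 1) * q.choose d := by
      rw [div_mul_eq_mul_div, eq_div_iff (by positivity)]
      exact_mod_cast (Nat.add_one_mul_choose_eq q d).symm
    have hratio : (((q : ℝ) + 1) / (d + 1)) ^ d ≤ ((q : ℝ) / d) ^ d := by
      rcases Nat.eq_zero_or_pos d with rfl | hd
      · simp
      · have hd' : (0 : ℝ) < d := Nat.cast_pos.mpr hd
        have hdq' : (d : ℝ) ≤ q := Nat.cast_le.mpr hdq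
        refine pow_le_pow_left₀ (by positivity) ?_ d
        rw [div_le_div_iff₀ (by positivity) hd']
        linarith
    rw [habsorb, pow_succ']
    push_cast
    gcongr
    exact hratio.trans (ih hdq)

lemma pow_le_exp_one_pow_mul_factorial_mul_choose {q d : ℕ} (h : d ≤ q) :
    (q : ℝ) ^ d ≤ Real.exp 1 ^ d * (d ! * q.choose d) := by
  have hdd : (d : ℝ) ^ d ≤ Real.exp 1 ^ d * d ! := by
    rw [Real.exp_one_pow, ← div_le_iff₀ (by positivity)]
    exact Real.pow_div_factorial_le_exp _ d.cast_nonneg d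
  rcases eq_or_ne d 0 with rfl | hd
  · simp
  calc (q : ℝ) ^ d = d ^ d * (q / d) ^ d := by
        rw [← mul_pow, mul_div_cancel₀ _ (Nat.cast_ne_zero.mpr hd)]
    _ ≤ Real.exp 1 ^ d * d ! * q.choose d := by
        gcongr
        exact div_pow_le_choose h
    _ = Real.exp 1 ^ d * (d ! * q.choose d) := mul_assoc _ _ _

lemma lt_factorial_mul_choose_of_exp_one_mul_rpow_le {d lam : ℕ} {y : ℝ} (hd : d ≠ 0)
    (hlam : d ≤ lam + 1) (hy : 0 ≤ y) (h : Real.exp 1 * y ^ (1 / d : ℝ) ≤ lam) :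
    y < d ! * (lam + 1).choose d := by
  have hstrict : Real.exp 1 ^ d * y < Real.exp 1 ^ d * (d ! * (lam + 1).choose d) := by
    calc Real.exp 1 ^ d * y = (Real.exp 1 * y ^ (1 / d : ℝ)) ^ d := by
          rw [mul_pow, one_div, Real.rpow_inv_natCast_pow hy hd]
      _ ≤ (lam : ℝ) ^ d := pow_le_pow_left₀ (by positivity) h d
      _ < ((lam + 1 : ℕ) : ℝ) ^ d :=
          pow_lt_pow_left₀ (Nat.cast_lt.mpr lam.lt_succ_self) lam.cast_nonneg hd
      _ ≤ Real.exp 1 ^ d * (d ! * (lam + 1).choose d) :=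
          pow_le_exp_one_pow_mul_factorial_mul_choose hlam
  exact lt_of_mul_lt_mul_left hstrict (by positivity)

end Ehrhart

/-- Let `P ⊆ ℝ^m` (`m ≥ 1`) be an `m`-dimensional lattice polytope and `n, r` positive
integers.  For every integer `λ ≥ max{ m, e·((m+1)·n·C(m+r, m+1) / vol(P))^{1/(m+1)} }`
one has `Σ_{k=1}^{λ} |kP ∩ ℤ^m| > n·C(m+r, m+1)`. -/
theorem sum_ehrhart_gt_n_mul_choose
    (m : ℕ) (hm : 1 ≤ m) (P : Set (Fin m → ℝ))
    (hP : ∃ V : Finset (Fin m → ℤ),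
      P = convexHull ℝ ((fun (v : Fin m → ℤ) (j : Fin m) => (v j : ℝ)) '' ↑V))
    (hPfull : (interior P).Nonempty)
    (n r : ℕ) (hn : 1 ≤ n) (hr : 1 ≤ r)
    (lam : ℕ) (hlam_m : m ≤ lam)
    (hlam_e : Real.exp 1 *
        (((m + 1 : ℝ) * n * (Nat.choose (m + r) (m + 1)) /
            (MeasureTheory.volume P).toReal) ^ ((1 : ℝ) / (m + 1)))
      ≤ (lam : ℝ)) :
    n * Nat.choose (m + r) (m + 1)
      < ∑ k ∈ Finset.Icc 1 lam, (latticePts ((k : ℝ) • P)).ncard := by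
  obtain ⟨V, rfl⟩ := hP
  obtain ⟨N, v, -, hv⟩ := V.finite_toSet.fin_param
  rw [← hv, ← Set.range_comp, Function.comp_def] at hPfull hlam_e ⊢
  set P := convexHull ℝ (Set.range fun i j => (v i j : ℝ))
  have hvol : 0 < (MeasureTheory.volume P).toReal :=
    ENNReal.toReal_pos (MeasureTheory.Measure.measure_pos_of_nonempty_interior _ hPfull).ne'
      ((Set.finite_range _).isCompact_convexHull ℝ).measure_ne_top
  have hchoose := Ehrhart.lt_factorial_mul_choose_of_exp_one_mul_rpow_le
    (y := (m + 1) * n * (m + r).choose (m + 1) / (MeasureTheory.volume P).toReal)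
    m.add_one_ne_zero (Nat.succ_le_succ hlam_m) (by positivity) (by exact_mod_cast hlam_e)
  have hcount := Ehrhart.factorial_mul_volume_mul_choose_le_sum_ncard_latticePts hm v lam
  rw [div_lt_iff₀ hvol, Nat.factorial_succ] at hchoose
  push_cast at hchoose
  have hlt : ((n * (m + r).choose (m + 1) : ℕ) : ℝ) <
      ∑ k ∈ Finset.Icc 1 lam, ((latticePts ((k : ℝ) • P)).ncard : ℝ) := by
    refine lt_of_lt_of_le (lt_of_mul_lt_mul_left ?_ (by positivity : (0 : ℝ) ≤ m + 1)) hcount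
    push_cast
    linarith
  exact_mod_cast hlt
end
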